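/- arXiv:2408.01306 — 2 statements merged into one kernel-verified Lean document; each statement's English description precedes it below -/
import Mathlib

section
/- Let l ≥ 1 and t ≥ 2 be integers. The set of pairs of integers (a, b) satisfying b(b+l)(b+2l) = t·a(a+l)(a+2l) is finite. -/
/-!
Write `a + l = g x` and `b + l = g y` with `x, y` coprime. The equation becomes
`g ^ 2 (y ^ 3 - t x ^ 3) = l ^ 2 (y - t x)`. Since `y ^ 3 - t x ^ 3` is coprime to `x` and divides
`l ^ 2 (y ^ 3 - t ^ 3 x ^ 3)`, it divides the nonzero constant `l ^ 2 (t ^ 3 - t)`. So `(x, y)` solves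
one of finitely many equations `y ^ 3 - t x ^ 3 = m` with `m ≠ 0`, and `(x, y)` bounds `g`. It remains
to prove Thue's theorem for `y ^ 3 - t x ^ 3` (`finite_thue`), which is immediate if `t` is a cube.

If `t` is not a cube, Skolem's `p`-adic method applies in the ring `ℤ[θ]`, `θ ^ 3 = t`
(`PureCubic t`). The solutions are the elements `y - x θ` of norm `m`. Up to finitely many classes
they have the form `γ ε ^ n`, where `ε` generates the elements of norm `1`
(`PureCubic.exists_generator`); the condition on `n` is that the coefficient of `θ ^ 2` vanishes. Some
power `ε ^ N` equals `1 + 3 η`, so along a residue class modulo `N` this coefficient is a series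
`∑ j, (k choose j) 3 ^ j a j` with `a j` the `θ ^ 2`-coefficient of `γ η ^ j`. Such a series with
infinitely many zeros is identically zero (`coeff_eq_zero_of_infinite_zeros`), which forces `η ∈ ℤ`
(`PureCubic.th_sq_eq_zero`) and hence makes `ε` a unit of finite order.
-/

/-! ### A Strassmann-type bound for 3-adic binomial series -/

open Polynomial in
/-- If `n ↦ ∑ k, (n choose k) 3 ^ k a k` has infinitely many zeros in `ℕ`, it vanishes identically.
Let `N` be the last index at which the 3-adic norm of `q k = 3 ^ k a k / k!` is maximal. After
division by `q N`, every truncation of the series is a polynomial over `ℤ_[3]` whose reduction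
modulo `3` has degree `N`, so there are at most `N` zeros. -/
lemma coeff_eq_zero_of_infinite_zeros (a : ℕ → ℤ)
    (hinf : {n : ℕ | ∑ k ∈ Finset.range (n + 1), (n.choose k : ℤ) * 3 ^ k * a k = 0}.Infinite) :
    ∀ k, a k = 0 := by
  classical
  by_contra! hne
  obtain ⟨k₀, hk₀⟩ := hne
  set q : ℕ → ℚ_[3] := fun k => 3 ^ k * (a k : ℚ_[3]) / (k.factorial : ℚ_[3]) with hq
  have hq0 : 0 < ‖q k₀‖ := by
    rw [norm_pos_iff]
    have hfac : ((k₀.factorial : ℕ) : ℚ_[3]) ≠ 0 := by exact_mod_cast k₀.factorial_ne_zero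
    have : ((a k₀ : ℤ) : ℚ_[3]) ≠ 0 := by exact_mod_cast hk₀
    exact div_ne_zero (mul_ne_zero (pow_ne_zero _ (by norm_num)) this) hfac
  have hbound : ∀ k, ‖q k‖ ≤ (3⁻¹ : ℝ) ^ (k / 2) := by
    intro k
    have h1 := sub_one_mul_padicValNat_factorial (p := 3) k
    have hv : padicValNat 3 k.factorial ≤ k / 2 := by omega
    have hf : ‖((k.factorial : ℕ) : ℚ_[3])‖ = (3 : ℝ)⁻¹ ^ (padicValNat 3 k.factorial) := by
      rw [Padic.norm_eq_zpow_neg_valuation (by exact_mod_cast k.factorial_ne_zero)]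
      simp [zpow_neg]
    have ha : ‖((a k : ℤ) : ℚ_[3])‖ ≤ 1 := Padic.norm_int_le_one _
    have h3 : ‖(3 : ℚ_[3])‖ = (3 : ℝ)⁻¹ := by
      have := Padic.norm_p (p := 3)
      simpa using this
    simp only [hq, norm_div, norm_mul, norm_pow, hf, h3]
    rw [div_le_iff₀ (by positivity), ← pow_add]
    calc (3⁻¹ : ℝ) ^ k * ‖((a k : ℤ) : ℚ_[3])‖ ≤ (3⁻¹ : ℝ) ^ k * 1 := by gcongr
      _ ≤ _ := by
        rw [mul_one]
        exact pow_le_pow_of_le_one (by norm_num) (by norm_num) (by omega)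
  have hS : {k | ‖q k₀‖ ≤ ‖q k‖}.Finite := by
    obtain ⟨m, hm⟩ := exists_pow_lt_of_lt_one hq0 (by norm_num : (3⁻¹ : ℝ) < 1)
    refine (Set.finite_lt_nat (2 * m)).subset ?_
    intro k hk
    by_contra hlt
    simp only [Set.mem_ofPred_eq, not_lt] at hlt hk
    have : (3⁻¹ : ℝ) ^ (k / 2) ≤ 3⁻¹ ^ m :=
      pow_le_pow_of_le_one (by norm_num) (by norm_num) (by omega)
    linarith [hbound k]
  -- `N` is the largest index at which `‖q k‖` takes its maximal value `‖q M‖`.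
  obtain ⟨M, hM, hMmax⟩ := Set.exists_max_image _ (fun k => ‖q k‖) hS ⟨k₀, by simp⟩
  have hT : {k | ‖q M‖ ≤ ‖q k‖}.Finite := hS.subset fun k hk => by
    simp only [Set.mem_ofPred_eq] at hM hk ⊢
    exact hM.trans hk
  obtain ⟨N, hN, hNmax⟩ := Set.exists_max_image _ id hT ⟨M, by simp⟩
  simp only [Set.mem_ofPred_eq, id] at hM hMmax hN hNmax
  have hle : ∀ k, ‖q k‖ ≤ ‖q N‖ := by
    intro k
    by_cases h : ‖q k₀‖ ≤ ‖q k‖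
    · exact (hMmax k h).trans hN
    · linarith
  have hlt : ∀ k, N < k → ‖q k‖ < ‖q N‖ := by
    intro k hk
    by_contra! h
    exact absurd (hNmax k (hN.trans h)) (by omega)
  have hNpos : 0 < ‖q N‖ := lt_of_lt_of_le hq0 (hle k₀)
  have hqN : q N ≠ 0 := norm_pos_iff.mp hNpos
  let e : ℕ → ℤ_[3] := fun k => ⟨q k / q N, by
    rw [norm_div]; exact div_le_one_of_le₀ (hle k) (norm_nonneg _)⟩
  have heN : e N = 1 := by
    apply Subtype.ext
    simp [e, div_self hqN]
  have hegt : ∀ k, N < k → PadicInt.toZMod (e k) = 0 := by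
    intro k hk
    rw [← RingHom.mem_ker, PadicInt.ker_toZMod, PadicInt.maximalIdeal_eq_span_p,
      Ideal.mem_span_singleton, ← PadicInt.norm_lt_one_iff_dvd]
    change ‖q k / q N‖ < 1
    rw [norm_div]
    exact (div_lt_one hNpos).mpr (hlt k hk)
  obtain ⟨F, hF, hFcard⟩ := hinf.exists_subset_card_eq (N + 1)
  set K := max N (F.sup id) with hK
  let P : ℤ_[3][X] := ∑ k ∈ Finset.range (K + 1), C (e k) * descPochhammer ℤ_[3] k
  have hroot : ∀ n ∈ F, P.eval (n : ℤ_[3]) = 0 := by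
    intro n hn
    have hnK : n ≤ K := le_trans (Finset.le_sup (f := id) hn) (le_max_right _ _)
    have h0 : ∑ k ∈ Finset.range (n + 1), (n.choose k : ℤ) * 3 ^ k * a k = 0 := hF hn
    have h0' : ∑ k ∈ Finset.range (n + 1), (n.choose k : ℚ_[3]) * 3 ^ k * (a k : ℚ_[3]) = 0 := by
      exact_mod_cast h0
    have h1 : ∑ k ∈ Finset.range (K + 1), (n.choose k : ℚ_[3]) * 3 ^ k * (a k : ℚ_[3]) = 0 := by
      rw [← h0']
      symm
      apply Finset.sum_subset
      · intro k; simp only [Finset.mem_range]; omega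
      · intro k _ hk
        rw [Nat.choose_eq_zero_of_lt (by simpa using hk)]
        simp
    apply Subtype.ext
    simp only [P, eval_finsetSum, eval_mul, eval_C, descPochhammer_eval_eq_descFactorial]
    rw [PadicInt.coe_sum, PadicInt.coe_zero]
    rw [← zero_div (q N), ← h1, Finset.sum_div]
    apply Finset.sum_congr rfl
    intro k _
    have : ((k.factorial : ℕ) : ℚ_[3]) ≠ 0 := by exact_mod_cast k.factorial_ne_zero
    rw [PadicInt.coe_mul, PadicInt.coe_natCast]
    simp only [e, Nat.descFactorial_eq_factorial_mul_choose]
    push_cast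
    simp only [hq] at hqN ⊢
    field_simp
  have hmap : P.map PadicInt.toZMod =
      ∑ k ∈ Finset.range (N + 1), C (PadicInt.toZMod (e k)) * descPochhammer (ZMod 3) k := by
    simp only [P, Polynomial.map_sum, Polynomial.map_mul, map_C, descPochhammer_map]
    symm
    apply Finset.sum_subset
    · intro k; simp only [Finset.mem_range]; omega
    · intro k _ hk
      rw [hegt k (by simpa using hk)]
      simp
  have hcoeff : (P.map PadicInt.toZMod).coeff N = 1 := by
    rw [hmap, finsetSum_coeff, Finset.sum_range_succ, Finset.sum_eq_zero, heN]
    · have := (monic_descPochhammer (ZMod 3) N).coeff_natDegree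
      rw [descPochhammer_natDegree] at this
      simp [this]
    · intro k hk
      rw [coeff_C_mul, coeff_eq_zero_of_natDegree_lt, mul_zero]
      rw [descPochhammer_natDegree]; simpa using hk
  have hdeg : (P.map PadicInt.toZMod).natDegree ≤ N := by
    rw [hmap]
    apply natDegree_sum_le_of_forall_le
    intro k hk
    refine (natDegree_C_mul_le _ _).trans ?_
    rw [descPochhammer_natDegree]
    simp only [Finset.mem_range] at hk; omega
  have hmap0 : P.map PadicInt.toZMod ≠ 0 := by
    intro h; rw [h] at hcoeff; simp at hcoeff
  have hP : P ≠ 0 := by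
    intro h; rw [h] at hmap0; simp at hmap0
  -- Reduction modulo `3` preserves the degree of the monic product of `X - a` over the roots `a`
  -- of `P`, and that product divides `P`.
  have hcard : N + 1 ≤ Multiset.card P.roots := by
    rw [← hFcard, ← Finset.card_image_of_injective F (Nat.cast_injective (R := ℤ_[3]))]
    refine (Finset.card_le_card (t := P.roots.toFinset) ?_).trans (Multiset.toFinset_card_le _)
    intro x hx
    obtain ⟨n, hn, rfl⟩ := Finset.mem_image.mp hx
    rw [Multiset.mem_toFinset, mem_roots hP]
    exact hroot n hn
  have hdvd := Polynomial.map_dvd PadicInt.toZMod (prod_multiset_X_sub_C_dvd P)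
  have hd := natDegree_le_of_dvd hdvd hmap0
  rw [(monic_multisetProd_X_sub_C P.roots).natDegree_map,
    natDegree_multiset_prod_X_sub_C_eq_card] at hd
  omega

/-! ### The ring `ℤ[∛t]` -/

/-- The ring `ℤ[X] / (X ^ 3 - t)`; the triple `⟨re, th, sq⟩` stands for `re + th * θ + sq * θ ^ 2`
with `θ ^ 3 = t`. -/
@[ext]
structure PureCubic (t : ℤ) where
  re : ℤ
  th : ℤ
  sq : ℤ

namespace PureCubic

variable {t : ℤ}

instance : Zero (PureCubic t) := ⟨⟨0, 0, 0⟩⟩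
instance : One (PureCubic t) := ⟨⟨1, 0, 0⟩⟩
instance : Add (PureCubic t) := ⟨fun x y => ⟨x.re + y.re, x.th + y.th, x.sq + y.sq⟩⟩
instance : Neg (PureCubic t) := ⟨fun x => ⟨-x.re, -x.th, -x.sq⟩⟩
instance : Mul (PureCubic t) := ⟨fun x y =>
  ⟨x.re * y.re + t * (x.th * y.sq + x.sq * y.th),
   x.re * y.th + x.th * y.re + t * (x.sq * y.sq),
   x.re * y.sq + x.th * y.th + x.sq * y.re⟩⟩

@[simp] lemma zero_re : (0 : PureCubic t).re = 0 := rfl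
@[simp] lemma zero_th : (0 : PureCubic t).th = 0 := rfl
@[simp] lemma zero_sq : (0 : PureCubic t).sq = 0 := rfl
@[simp] lemma one_re : (1 : PureCubic t).re = 1 := rfl
@[simp] lemma one_th : (1 : PureCubic t).th = 0 := rfl
@[simp] lemma one_sq : (1 : PureCubic t).sq = 0 := rfl
@[simp] lemma add_re (x y : PureCubic t) : (x + y).re = x.re + y.re := rfl
@[simp] lemma add_th (x y : PureCubic t) : (x + y).th = x.th + y.th := rfl
@[simp] lemma add_sq (x y : PureCubic t) : (x + y).sq = x.sq + y.sq := rfl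
@[simp] lemma neg_re (x : PureCubic t) : (-x).re = -x.re := rfl
@[simp] lemma neg_th (x : PureCubic t) : (-x).th = -x.th := rfl
@[simp] lemma neg_sq (x : PureCubic t) : (-x).sq = -x.sq := rfl
@[simp] lemma mul_re (x y : PureCubic t) :
    (x * y).re = x.re * y.re + t * (x.th * y.sq + x.sq * y.th) := rfl
@[simp] lemma mul_th (x y : PureCubic t) :
    (x * y).th = x.re * y.th + x.th * y.re + t * (x.sq * y.sq) := rfl
@[simp] lemma mul_sq (x y : PureCubic t) :
    (x * y).sq = x.re * y.sq + x.th * y.th + x.sq * y.re := rfl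

instance : CommRing (PureCubic t) where
  add_assoc _ _ _ := by ext <;> simp <;> ring
  zero_add _ := by ext <;> simp
  add_zero _ := by ext <;> simp
  add_comm _ _ := by ext <;> simp <;> ring
  left_distrib _ _ _ := by ext <;> simp <;> ring
  right_distrib _ _ _ := by ext <;> simp <;> ring
  zero_mul _ := by ext <;> simp
  mul_zero _ := by ext <;> simp
  mul_assoc _ _ _ := by ext <;> simp <;> ring
  one_mul _ := by ext <;> simp
  mul_one _ := by ext <;> simp
  mul_comm _ _ := by ext <;> simp <;> ring
  neg_add_cancel _ := by ext <;> simp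
  nsmul := nsmulRec
  zsmul := zsmulRec

/-- The coefficient of `θ ^ 2` as an additive map. -/
@[simps]
def sqHom (t : ℤ) : PureCubic t →+ ℤ where
  toFun := sq
  map_zero' := rfl
  map_add' _ _ := rfl

/-- The inclusion of the integers. -/
@[simps]
def ofInt (t : ℤ) : ℤ →+* PureCubic t where
  toFun n := ⟨n, 0, 0⟩
  map_one' := rfl
  map_zero' := rfl
  map_add' _ _ := by ext <;> simp
  map_mul' _ _ := by ext <;> simp

lemma intCast_eq (n : ℤ) : (n : PureCubic t) = ⟨n, 0, 0⟩ :=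
  (map_intCast (ofInt t) n).symm

/-- The norm from `ℤ[∛t]` to `ℤ`, in coordinates. -/
@[simps]
def norm : PureCubic t →* ℤ where
  toFun x := x.re ^ 3 + t * x.th ^ 3 + t ^ 2 * x.sq ^ 3 - 3 * t * (x.re * x.th * x.sq)
  map_one' := by simp
  map_mul' x y := by simp; ring

/-- The cofactor of `x` in its norm: the product of the other two conjugates. -/
def adj (x : PureCubic t) : PureCubic t :=
  ⟨x.re ^ 2 - t * (x.th * x.sq), t * x.sq ^ 2 - x.re * x.th, x.th ^ 2 - x.re * x.sq⟩

lemma mul_adj (x : PureCubic t) : x * adj x = (norm x : ℤ) := by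
  rw [intCast_eq]
  ext <;> simp [adj] <;> ring

/-- The ring homomorphism to `ℝ` sending the generator to a real cube root `θ` of `t`. -/
def toReal {θ : ℝ} (hθ : θ ^ 3 = t) : PureCubic t →+* ℝ where
  toFun x := x.re + x.th * θ + x.sq * θ ^ 2
  map_one' := by simp
  map_zero' := by simp
  map_add' x y := by simp; ring
  map_mul' x y := by
    simp only [mul_re, mul_th, mul_sq]
    push_cast
    rw [← hθ]
    ring

lemma toReal_apply {θ : ℝ} (hθ : θ ^ 3 = t) (x : PureCubic t) :
    toReal hθ x = x.re + x.th * θ + x.sq * θ ^ 2 := rfl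

/-- The norm is the real embedding times a positive semidefinite quadratic form, namely the squared
absolute value of the complex embedding. -/
lemma toReal_mul_quad {θ : ℝ} (hθ : θ ^ 3 = t) (x : PureCubic t) :
    toReal hθ x * (((x.re - x.th * θ) ^ 2 + (x.th * θ - x.sq * θ ^ 2) ^ 2
      + (x.re - x.sq * θ ^ 2) ^ 2) / 2) = (norm x : ℤ) := by
  simp only [toReal_apply, norm_apply]
  push_cast
  rw [← hθ]
  ring

lemma eq_zero_of_cube_eq (hcube : ∀ s : ℤ, s ^ 3 ≠ t) {v w : ℤ} (h : v ^ 3 = t * w ^ 3) :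
    v = 0 ∧ w = 0 := by
  by_cases hw : w = 0
  · subst hw
    simpa using h
  · exfalso
    have hdvd : w ^ 3 ∣ v ^ 3 := ⟨t, by rw [h]; ring⟩
    obtain ⟨s, rfl⟩ := (Int.pow_dvd_pow_iff (by norm_num)).mp hdvd
    apply hcube s
    have : w ^ 3 ≠ 0 := pow_ne_zero _ hw
    apply mul_left_cancel₀ this
    rw [← mul_pow, h]; ring

/-- The numbers `1, θ, θ ^ 2` are linearly independent over `ℤ` when `t` is not a cube: eliminating
`θ ^ 2` from a relation and its multiple by `θ` reduces this to the irrationality of `θ`. -/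
lemma toReal_injective (hcube : ∀ s : ℤ, s ^ 3 ≠ t) {θ : ℝ} (hθ : θ ^ 3 = t) :
    Function.Injective (toReal hθ) := by
  rw [injective_iff_map_eq_zero]
  intro x hx
  rw [toReal_apply] at hx
  have hlin : ∀ u v : ℤ, (u : ℝ) + v * θ = 0 → u = 0 ∧ v = 0 := by
    intro u v h
    have h3 : ((-u : ℤ) : ℝ) ^ 3 = (t * v ^ 3 : ℤ) := by
      push_cast
      rw [← hθ, ← mul_pow, mul_comm θ]
      congr 1; linarith
    have := eq_zero_of_cube_eq hcube (v := -u) (w := v) (by exact_mod_cast h3)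
    omega
  have h1 := hlin (x.re * x.th - t * x.sq ^ 2) (x.th ^ 2 - x.re * x.sq) (by
    push_cast
    rw [← hθ]
    linear_combination (x.th - x.sq * θ : ℝ) * hx)
  obtain ⟨h1, h2⟩ := h1
  have h3 := eq_zero_of_cube_eq hcube (v := x.th) (w := x.sq)
    (by linear_combination x.th * h2 + x.sq * h1)
  obtain ⟨h3, h4⟩ := h3
  have h5 : x.re = 0 := by
    rw [h3, h4] at hx
    simpa using hx
  ext <;> simp [h3, h4, h5]

lemma toReal_pos {θ : ℝ} (hθ : θ ^ 3 = t) {x : PureCubic t} (hx : norm x = 1) :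
    0 < toReal hθ x := by
  have h := toReal_mul_quad hθ x
  rw [hx] at h
  push_cast at h
  by_contra! hneg
  have hquad : (0 : ℝ) ≤ ((x.re - x.th * θ) ^ 2 + (x.th * θ - x.sq * θ ^ 2) ^ 2
      + (x.re - x.sq * θ ^ 2) ^ 2) / 2 := by positivity
  linarith [mul_nonpos_of_nonpos_of_nonneg hneg hquad]

/-! ### Units of norm one -/

/-- All conjugates of such an `x` are bounded, hence so are its coordinates. -/
lemma finite_norm_one (ht : 1 ≤ t) {θ : ℝ} (hθ : θ ^ 3 = t) :
    {x : PureCubic t | norm x = 1 ∧ toReal hθ x ∈ Set.Ioo 1 2}.Finite := by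
  have hθ1 : 1 ≤ θ := by
    by_contra! h
    have ht' : (1 : ℝ) ≤ t := by exact_mod_cast ht
    nlinarith [sq_nonneg θ, sq_nonneg (θ + 1)]
  have hbox : ((Set.Icc (-4 : ℤ) 4) ×ˢ ((Set.Icc (-4 : ℤ) 4) ×ˢ (Set.Icc (-4 : ℤ) 4))).Finite :=
    (Set.finite_Icc _ _).prod ((Set.finite_Icc _ _).prod (Set.finite_Icc _ _))
  refine Set.Finite.subset (hbox.image fun p => (⟨p.1, p.2.1, p.2.2⟩ : PureCubic t)) ?_
  rintro x ⟨hx, hx1, hx2⟩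
  have h := toReal_mul_quad hθ x
  rw [hx] at h
  have hA : toReal hθ x = x.re + x.th * θ + x.sq * θ ^ 2 := rfl
  set A : ℝ := (x.re : ℝ)
  set B : ℝ := x.th * θ with hB
  set D : ℝ := x.sq * θ ^ 2 with hD
  have hq : (A - B) ^ 2 + (B - D) ^ 2 + (A - D) ^ 2 ≤ 2 := by
    push_cast at h
    nlinarith [sq_nonneg (A - B), sq_nonneg (B - D), sq_nonneg (A - D)]
  have b1 := abs_le_of_sq_le_sq' (show (A - B) ^ 2 ≤ 2 ^ 2 by
    nlinarith [sq_nonneg (A - B), sq_nonneg (B - D), sq_nonneg (A - D)]) (by norm_num)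
  have b2 := abs_le_of_sq_le_sq' (show (B - D) ^ 2 ≤ 2 ^ 2 by
    nlinarith [sq_nonneg (A - B), sq_nonneg (B - D), sq_nonneg (A - D)]) (by norm_num)
  have b3 := abs_le_of_sq_le_sq' (show (A - D) ^ 2 ≤ 2 ^ 2 by
    nlinarith [sq_nonneg (A - B), sq_nonneg (B - D), sq_nonneg (A - D)]) (by norm_num)
  rw [hA] at hx1 hx2
  have key : ∀ (n : ℤ) (c : ℝ), 1 ≤ c → |n * c| ≤ 4 → n ∈ Set.Icc (-4 : ℤ) 4 := by
    intro n c hc hn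
    rw [abs_mul, abs_of_pos (by linarith : 0 < c)] at hn
    have : |(n : ℝ)| ≤ 4 := by nlinarith [abs_nonneg (n : ℝ)]
    rw [← Int.cast_abs] at this
    exact abs_le.mp (by exact_mod_cast this)
  refine ⟨(x.re, x.th, x.sq),
    ⟨key _ 1 le_rfl ?_, key _ θ hθ1 ?_, key _ (θ ^ 2) (by nlinarith) ?_⟩, rfl⟩
  · rw [mul_one, abs_le]; constructor <;> linarith
  · rw [abs_le]; constructor <;> linarith
  · rw [abs_le]; constructor <;> linarith

/-- The rank-one case of Dirichlet's unit theorem: the group of elements of norm `1` is cyclic,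
because its image under `log ∘ toReal` is a discrete subgroup of `ℝ`. -/
lemma exists_generator (ht : 1 ≤ t) (hcube : ∀ s : ℤ, s ^ 3 ≠ t) :
    ∃ ε : (PureCubic t)ˣ, norm (ε : PureCubic t) = 1 ∧
      ∀ x : PureCubic t, norm x = 1 → ∃ n : ℤ, x = ((ε ^ n : (PureCubic t)ˣ) : PureCubic t) := by
  obtain ⟨θ, hθ⟩ : ∃ θ : ℝ, θ ^ 3 = t := by
    refine ⟨(t : ℝ) ^ (1 / 3 : ℝ), ?_⟩
    rw [← Real.rpow_natCast, ← Real.rpow_mul (by exact_mod_cast (by omega : 0 ≤ t))]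
    norm_num
  let U : Subgroup (PureCubic t)ˣ := (norm.comp (Units.coeHom _)).ker
  have hU : ∀ u : (PureCubic t)ˣ, u ∈ U ↔ norm (u : PureCubic t) = 1 := fun u => Iff.rfl
  let H : AddSubgroup ℝ :=
    { carrier := {r | ∃ u ∈ U, Real.log (toReal hθ (u : PureCubic t)) = r}
      zero_mem' := ⟨1, U.one_mem, by simp⟩
      add_mem' := by
        rintro _ _ ⟨u, hu, rfl⟩ ⟨v, hv, rfl⟩
        refine ⟨u * v, U.mul_mem hu hv, ?_⟩
        rw [Units.val_mul, map_mul, Real.log_mul (toReal_pos hθ ((hU u).mp hu)).ne'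
          (toReal_pos hθ ((hU v).mp hv)).ne']
      neg_mem' := by
        rintro _ ⟨u, hu, rfl⟩
        refine ⟨u⁻¹, U.inv_mem hu, ?_⟩
        rw [← Real.log_inv]
        congr 1
        apply eq_inv_of_mul_eq_one_left
        rw [← map_mul, Units.inv_mul, map_one] }
  have hlog2 : 0 < Real.log 2 := Real.log_pos (by norm_num)
  have hfin : ((H : Set ℝ) ∩ Set.Ioo 0 (Real.log 2)).Finite := by
    refine ((finite_norm_one ht hθ).image fun x => Real.log (toReal hθ x)).subset ?_
    rintro _ ⟨⟨u, hu, rfl⟩, h0, h2⟩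
    have hp := toReal_pos hθ ((hU u).mp hu)
    refine ⟨u, ⟨hu, ?_, ?_⟩, rfl⟩
    · exact (Real.log_pos_iff hp.le).mp h0
    · exact (Real.log_lt_log_iff hp (by norm_num)).mp h2
  obtain ⟨a, ha0, hdisj⟩ : ∃ a : ℝ, 0 < a ∧ Disjoint (H : Set ℝ) (Set.Ioo 0 a) := by
    by_cases hne : ((H : Set ℝ) ∩ Set.Ioo 0 (Real.log 2)).Nonempty
    · obtain ⟨a, ha, hmin⟩ := Set.exists_min_image _ id hfin hne
      refine ⟨a, ha.2.1, Set.disjoint_left.mpr ?_⟩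
      intro r hr hr'
      have := hmin r ⟨hr, hr'.1, hr'.2.trans ha.2.2⟩
      simp only [id] at this
      linarith [hr'.2]
    · exact ⟨Real.log 2, hlog2, Set.disjoint_iff_inter_eq_empty.mpr
        (Set.not_nonempty_iff_eq_empty.mp hne)⟩
  obtain ⟨b, hb⟩ := AddSubgroup.cyclic_of_isolated_zero ha0 hdisj
  have hbH : b ∈ H := by rw [hb]; exact AddSubgroup.subset_closure rfl
  obtain ⟨ε, hε, rfl⟩ := hbH
  refine ⟨ε, hε, fun x hx => ?_⟩
  have hinv : x * adj x = 1 := by rw [mul_adj, hx, Int.cast_one]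
  let u : (PureCubic t)ˣ := Units.mkOfMulEqOne x (adj x) hinv
  have hu : u ∈ U := hx
  have hmem : Real.log (toReal hθ x) ∈ H := ⟨u, hu, rfl⟩
  rw [hb, AddSubgroup.mem_closure_singleton] at hmem
  obtain ⟨n, hn⟩ := hmem
  refine ⟨n, ?_⟩
  have hpow : ε ^ n ∈ U := U.zpow_mem hε n
  apply toReal_injective hcube hθ
  apply Real.log_injOn_pos (toReal_pos hθ hx) (toReal_pos hθ ((hU _).mp hpow))
  rw [← hn]
  let ψ : (PureCubic t)ˣ →* ℝˣ := Units.map (toReal hθ).toMonoidHom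
  have : toReal hθ ((ε ^ n : (PureCubic t)ˣ) : PureCubic t) =
      (toReal hθ (ε : PureCubic t)) ^ n := by
    have h := congrArg (Units.val) (map_zpow ψ ε n)
    rwa [Units.val_zpow_eq_zpow_val] at h
  rw [this, Real.log_zpow, zsmul_eq_mul]

/-! ### Skolem's method -/

lemma sq_three_pow_mul (k : ℕ) (n : ℕ) (x : PureCubic t) :
    ((n : PureCubic t) * 3 ^ k * x).sq = (n : ℤ) * 3 ^ k * x.sq := by
  have : (n : PureCubic t) * 3 ^ k = (((n : ℤ) * 3 ^ k : ℤ) : PureCubic t) := by push_cast; ring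
  rw [this, intCast_eq]
  simp

/-- A unit has finite order modulo `3`. -/
lemma exists_pow_eq_one_add (ε : (PureCubic t)ˣ) :
    ∃ N : ℕ, 0 < N ∧ ∃ η : PureCubic t, (ε : PureCubic t) ^ N = 1 + 3 * η := by
  have h3 : (3 : PureCubic t) = ⟨3, 0, 0⟩ := by
    have := intCast_eq (t := t) 3
    exact_mod_cast this
  let r : PureCubic t → ZMod 3 × ZMod 3 × ZMod 3 := fun x => (x.re, x.th, x.sq)
  have hr : ∀ x y, r x = r y → ∃ z, x = y + 3 * z := by
    intro x y h
    simp only [r, Prod.mk.injEq] at h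
    obtain ⟨h1, h2, h3'⟩ := h
    obtain ⟨a, ha⟩ := (ZMod.intCast_eq_intCast_iff_dvd_sub _ _ 3).mp h1.symm
    obtain ⟨b, hb⟩ := (ZMod.intCast_eq_intCast_iff_dvd_sub _ _ 3).mp h2.symm
    obtain ⟨c, hc⟩ := (ZMod.intCast_eq_intCast_iff_dvd_sub _ _ 3).mp h3'.symm
    refine ⟨⟨a, b, c⟩, ?_⟩
    rw [h3]
    push_cast at ha hb hc
    ext <;> simp <;> linarith
  obtain ⟨i, j, hij, hrij⟩ :=
    Finite.exists_ne_map_eq_of_infinite fun n : ℕ => r ((ε : PureCubic t) ^ n)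
  wlog hlt : i < j generalizing i j
  · exact this j i hij.symm hrij.symm (by omega)
  obtain ⟨z, hz⟩ := hr _ _ hrij.symm
  refine ⟨j - i, by omega, ((ε⁻¹ ^ i : (PureCubic t)ˣ) : PureCubic t) * z, ?_⟩
  have hinv : ((ε⁻¹ ^ i : (PureCubic t)ˣ) : PureCubic t) * (ε : PureCubic t) ^ i = 1 := by
    rw [← Units.val_pow_eq_pow_val, ← Units.val_mul]
    simp
  have hsplit : (ε : PureCubic t) ^ j = ε ^ i * ε ^ (j - i) := by
    rw [← pow_add]; congr 1; omega
  calc (ε : PureCubic t) ^ (j - i)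
      = ((ε⁻¹ ^ i : (PureCubic t)ˣ) : PureCubic t) * (ε ^ i * ε ^ (j - i)) := by
        rw [← mul_assoc, hinv, one_mul]
    _ = _ := by rw [← hsplit, hz, mul_add, hinv]; ring

/-- For `η ∉ ℤ` the multiples of `γ` by `1, η, η ^ 2` span a rank-three lattice, so the
`θ ^ 2`-coefficient cannot vanish on all three. -/
lemma th_sq_eq_zero (hcube : ∀ s : ℤ, s ^ 3 ≠ t) {γ η : PureCubic t} (hγ : γ ≠ 0)
    (h0 : γ.sq = 0) (h1 : (γ * η).sq = 0) (h2 : (γ * η ^ 2).sq = 0) : η.th = 0 ∧ η.sq = 0 := by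
  rw [pow_two] at h2
  simp only [mul_sq, mul_re, mul_th, h0, zero_mul, add_zero] at h1 h2
  have h3 : γ.re * η.th ^ 2 + γ.th * (t * η.sq ^ 2) = 0 := by
    linear_combination h2 - 2 * η.re * h1
  have h4 : γ.th * (η.th ^ 3 - t * η.sq ^ 3) = 0 := by
    linear_combination η.th ^ 2 * h1 - η.sq * h3
  rcases mul_eq_zero.mp h4 with h | h
  · have hre : γ.re ≠ 0 := by
      intro hre
      exact hγ (by ext <;> simp [*])
    rw [h] at h1 h3
    simp_all
  · exact eq_zero_of_cube_eq hcube (by linarith)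

/-- With `ε ^ N = 1 + 3 η`, the `θ ^ 2`-coefficient of `γ ε ^ (r + N k)` is, as a function of `k`, a
3-adic binomial series. If it vanished infinitely often, all its coefficients would be zero; then
`η ∈ ℤ`, so `ε ^ N` would be an integer of norm `1`, contradicting the infinite order of `ε`. -/
lemma finite_pow_sq_eq_zero (hcube : ∀ s : ℤ, s ^ 3 ≠ t) {ε : (PureCubic t)ˣ}
    (hε : norm (ε : PureCubic t) = 1) (hord : ¬ IsOfFinOrder ε) {γ : PureCubic t} (hγ : γ ≠ 0) :
    {n : ℕ | (γ * (ε : PureCubic t) ^ n).sq = 0}.Finite := by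
  obtain ⟨N, hN, η, hη⟩ := exists_pow_eq_one_add ε
  have hfin : ∀ r : ℕ, {k : ℕ | (γ * (ε : PureCubic t) ^ r * (1 + 3 * η) ^ k).sq = 0}.Finite := by
    intro r
    by_contra hinf
    set γ' := γ * (ε : PureCubic t) ^ r with hγ'
    have hγ0 : γ' ≠ 0 := by
      rw [hγ', ← Units.val_pow_eq_pow_val]
      exact fun h => hγ ((Units.mul_left_eq_zero _).mp h)
    have hexp : ∀ k : ℕ, (γ' * (1 + 3 * η) ^ k).sq =
        ∑ j ∈ Finset.range (k + 1), (k.choose j : ℤ) * 3 ^ j * (γ' * η ^ j).sq := by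
      intro k
      rw [add_comm, add_pow, Finset.mul_sum, ← sqHom_apply, map_sum]
      refine Finset.sum_congr rfl fun j _ => ?_
      rw [sqHom_apply, ← sq_three_pow_mul]
      congr 1
      ring
    have hzero := coeff_eq_zero_of_infinite_zeros (fun j => (γ' * η ^ j).sq) (by
      simpa only [hexp, Set.Infinite] using hinf)
    obtain ⟨hth, hsq⟩ := th_sq_eq_zero hcube hγ0 (by simpa using hzero 0) (by simpa using hzero 1)
      (hzero 2)
    have hpow : (ε : PureCubic t) ^ N = ((1 + 3 * η.re : ℤ) : PureCubic t) := by
      have hη' : η = (η.re : PureCubic t) := by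
        rw [intCast_eq]; ext <;> simp [hth, hsq]
      rw [hη]
      push_cast
      rw [← hη']
    have hone : (1 + 3 * η.re) ^ 3 = 1 := by
      have := congrArg norm hpow
      rw [map_pow, hε, one_pow, intCast_eq] at this
      simpa using this.symm
    have hone' : 1 + 3 * η.re = 1 := by
      exact (Odd.strictMono_pow (by decide : Odd 3)).injective (by simpa using hone)
    apply hord
    rw [isOfFinOrder_iff_pow_eq_one]
    refine ⟨N, hN, Units.ext ?_⟩
    rw [Units.val_pow_eq_pow_val, hpow, hone']
    simp
  refine ((Set.finite_lt_nat N).biUnion fun r _ =>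
    (hfin r).image fun k => r + N * k).subset ?_
  intro n hn
  refine Set.mem_biUnion (show n % N ∈ _ from Nat.mod_lt _ hN) ⟨n / N, ?_, Nat.mod_add_div n N⟩
  change (γ * (ε : PureCubic t) ^ (n % N) * (1 + 3 * η) ^ (n / N)).sq = 0
  rw [← hη, mul_assoc, ← pow_mul, ← pow_add, Nat.mod_add_div]
  exact hn

lemma finite_zpow_sq_eq_zero (hcube : ∀ s : ℤ, s ^ 3 ≠ t) {ε : (PureCubic t)ˣ}
    (hε : norm (ε : PureCubic t) = 1) {γ : PureCubic t} (hγ : γ ≠ 0) :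
    {x : PureCubic t | x.sq = 0 ∧
      ∃ n : ℤ, x = γ * ((ε ^ n : (PureCubic t)ˣ) : PureCubic t)}.Finite := by
  by_cases hord : IsOfFinOrder ε
  · refine ((finite_zpowers.mpr hord).image
      fun u : (PureCubic t)ˣ => γ * (u : PureCubic t)).subset ?_
    rintro _ ⟨_, n, rfl⟩
    exact ⟨ε ^ n, ⟨n, rfl⟩, rfl⟩
  · have hε' : norm ((ε⁻¹ : (PureCubic t)ˣ) : PureCubic t) = 1 := by
      have := congrArg norm (ε.mul_inv)
      rwa [map_mul, hε, one_mul, map_one] at this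
    have h1 := finite_pow_sq_eq_zero hcube hε hord hγ
    have h2 := finite_pow_sq_eq_zero hcube hε' (by rwa [isOfFinOrder_inv_iff]) hγ
    refine ((h1.image fun n => γ * (ε : PureCubic t) ^ n).union
      (h2.image fun n => γ * ((ε⁻¹ : (PureCubic t)ˣ) : PureCubic t) ^ n)).subset ?_
    rintro _ ⟨hsq, n, rfl⟩
    obtain ⟨k, rfl | rfl⟩ := n.eq_nat_or_neg
    · have e : ((ε ^ (k : ℤ) : (PureCubic t)ˣ) : PureCubic t) = (ε : PureCubic t) ^ k := by simp
      rw [e] at hsq ⊢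
      exact Or.inl ⟨k, hsq, rfl⟩
    · have e : ((ε ^ (-(k : ℤ)) : (PureCubic t)ˣ) : PureCubic t) =
          ((ε⁻¹ : (PureCubic t)ˣ) : PureCubic t) ^ k := by
        rw [zpow_neg, zpow_natCast, ← inv_pow, Units.val_pow_eq_pow_val]
      rw [e] at hsq ⊢
      exact Or.inr ⟨k, hsq, rfl⟩

/-- Elements of norm `m` that are congruent modulo `m` differ by a factor of norm `1`, so modulo the
powers of the generating unit there are only finitely many of them. -/
lemma finite_norm_eq (ht : 1 ≤ t) (hcube : ∀ s : ℤ, s ^ 3 ≠ t) {m : ℤ} (hm : m ≠ 0) :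
    {x : PureCubic t | x.sq = 0 ∧ norm x = m}.Finite := by
  obtain ⟨ε, hε, hgen⟩ := exists_generator ht hcube
  have : NeZero m.natAbs := ⟨by simpa using hm⟩
  let r : PureCubic t → ZMod m.natAbs × ZMod m.natAbs × ZMod m.natAbs :=
    fun x => (x.re, x.th, x.sq)
  refine (Set.finite_iUnion (f := fun c => {x : PureCubic t | (x.sq = 0 ∧ norm x = m) ∧ r x = c})
    fun c => ?_).subset fun x hx => Set.mem_iUnion.mpr ⟨r x, hx, rfl⟩
  rcases Set.eq_empty_or_nonempty {x : PureCubic t | (x.sq = 0 ∧ norm x = m) ∧ r x = c} with h | h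
  · rw [h]; exact Set.finite_empty
  obtain ⟨γ, ⟨-, hγ⟩, hγc⟩ := h
  have hγ0 : γ ≠ 0 := by
    rintro rfl
    exact hm (by rw [← hγ]; simp)
  refine (finite_zpow_sq_eq_zero hcube hε hγ0).subset ?_
  rintro x ⟨⟨hsq, hx⟩, hxc⟩
  refine ⟨hsq, ?_⟩
  obtain ⟨z, hz⟩ : ∃ z, x = γ + (m : PureCubic t) * z := by
    have hcx : r γ = r x := hγc.trans hxc.symm
    simp only [r, Prod.mk.injEq] at hcx
    obtain ⟨h1, h2, h3⟩ := hcx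
    obtain ⟨a, ha⟩ := Int.natAbs_dvd.mp ((ZMod.intCast_eq_intCast_iff_dvd_sub _ _ _).mp h1)
    obtain ⟨b, hb⟩ := Int.natAbs_dvd.mp ((ZMod.intCast_eq_intCast_iff_dvd_sub _ _ _).mp h2)
    obtain ⟨c, hc⟩ := Int.natAbs_dvd.mp ((ZMod.intCast_eq_intCast_iff_dvd_sub _ _ _).mp h3)
    refine ⟨⟨a, b, c⟩, ?_⟩
    rw [intCast_eq]
    ext <;> simp <;> linarith
  have hxu : x = γ * (1 + adj γ * z) := by
    rw [hz, mul_add, ← mul_assoc, mul_adj, hγ, mul_one]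
  have hu : norm (1 + adj γ * z) = 1 := by
    have := congrArg norm hxu
    rw [map_mul, hx, hγ] at this
    exact mul_left_cancel₀ hm (by rw [← this, mul_one])
  obtain ⟨n, hn⟩ := hgen _ hu
  exact ⟨n, by rw [hxu, hn]⟩

end PureCubic

/-! ### The cubic Thue equation and the theorem -/

/-- Thue's theorem for the forms `y ^ 3 - t x ^ 3`. When `t` is a cube the form has a positive
definite quadratic factor, which bounds the solutions directly. -/
lemma finite_thue {t m : ℤ} (ht : 1 ≤ t) (hm : m ≠ 0) :
    {p : ℤ × ℤ | p.2 ^ 3 - t * p.1 ^ 3 = m}.Finite := by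
  by_cases hcube : ∀ s : ℤ, s ^ 3 ≠ t
  · refine ((PureCubic.finite_norm_eq ht hcube hm).image fun x => (-x.th, x.re)).subset ?_
    rintro ⟨x, y⟩ h
    refine ⟨⟨y, -x, 0⟩, ⟨rfl, ?_⟩, by simp⟩
    rw [← show y ^ 3 - t * x ^ 3 = m from h, PureCubic.norm_apply]
    ring
  · push Not at hcube
    obtain ⟨s, rfl⟩ := hcube
    have hs : 1 ≤ s := by
      by_contra! h
      have : s ^ 3 ≤ 0 := Odd.pow_nonpos (by decide) (by omega)
      omega
    refine ((Set.finite_Icc (-(2 * |m|)) (2 * |m|)).prod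
      (Set.finite_Icc (-(2 * |m|)) (2 * |m|))).subset ?_
    rintro ⟨x, y⟩ h
    have h : y ^ 3 - s ^ 3 * x ^ 3 = m := h
    have hfac : (y - s * x) * (y ^ 2 + s * x * y + s ^ 2 * x ^ 2) = m := by rw [← h]; ring
    have hle := Int.le_of_dvd (abs_pos.mpr hm) ((dvd_abs _ _).mpr (Dvd.intro_left _ hfac))
    have hs2 : x ^ 2 ≤ s ^ 2 * x ^ 2 := le_mul_of_one_le_left (sq_nonneg x) (one_le_pow₀ hs)
    have hx : x ^ 2 ≤ (2 * |m|) ^ 2 := by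
      nlinarith [sq_nonneg (2 * y + s * x), abs_pos.mpr hm]
    have hy : y ^ 2 ≤ (2 * |m|) ^ 2 := by
      nlinarith [sq_nonneg (y + 2 * (s * x)), abs_pos.mpr hm]
    have hm0 : 0 ≤ 2 * |m| := by positivity
    exact ⟨abs_le_of_sq_le_sq' hx hm0, abs_le_of_sq_le_sq' hy hm0⟩

/-- For fixed integers `l ≥ 1` and `t ≥ 2`, the Diophantine equation
`b(b+l)(b+2l) = t·a(a+l)(a+2l)` has only finitely many integer solutions. -/
theorem stmt_2 (l t : ℤ) (hl : 1 ≤ l) (ht : 2 ≤ t) :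
    {p : ℤ × ℤ | p.2 * (p.2 + l) * (p.2 + 2 * l) =
      t * (p.1 * (p.1 + l) * (p.1 + 2 * l))}.Finite := by
  set D : ℤ := l ^ 2 * (t ^ 3 - t) with hD
  have hD0 : D ≠ 0 := by
    have h1 : 0 < t ^ 3 - t := by
      nlinarith [mul_pos (show 0 < t by omega) (show 0 < t - 1 by omega)]
    positivity
  have hB : (⋃ m ∈ (Set.Icc (-|D|) |D| \ {0} : Set ℤ),
      {p : ℤ × ℤ | p.2 ^ 3 - t * p.1 ^ 3 = m}).Finite :=
    ((Set.finite_Icc _ _).sdiff).biUnion fun m hm => finite_thue (by omega) hm.2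
  have hfin := hB.biUnion fun p _ =>
    (Set.finite_Icc (0 : ℤ) (l ^ 2 * |p.2 - t * p.1|)).image fun g => (g * p.1 - l, g * p.2 - l)
  refine (hfin.union (Set.finite_singleton (-l, -l))).subset ?_
  rintro ⟨a, b⟩ h
  have h : b * (b + l) * (b + 2 * l) = t * (a * (a + l) * (a + 2 * l)) := h
  by_cases h0 : a + l = 0 ∧ b + l = 0
  · right
    rw [Set.mem_singleton_iff, Prod.mk.injEq]
    omega
  left
  obtain ⟨x, y, hxy, hx, hy⟩ : ∃ x y : ℤ, IsCoprime x y ∧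
      a + l = Int.gcd (a + l) (b + l) * x ∧ b + l = Int.gcd (a + l) (b + l) * y := by
    have hpos : 0 < Int.gcd (a + l) (b + l) := by
      rw [Int.gcd_pos_iff]; omega
    obtain ⟨x, y, hc, h1, h2⟩ := Int.exists_gcd_one hpos
    exact ⟨x, y, Int.isCoprime_iff_gcd_eq_one.mpr hc, by rw [mul_comm]; exact h1,
      by rw [mul_comm]; exact h2⟩
  have hg0 : 0 < (Int.gcd (a + l) (b + l) : ℤ) := by
    have : 0 < Int.gcd (a + l) (b + l) := by
      rw [Int.gcd_pos_iff]; omega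
    exact_mod_cast this
  generalize (Int.gcd (a + l) (b + l) : ℤ) = g at hx hy hg0
  obtain rfl : a = g * x - l := by linarith
  obtain rfl : b = g * y - l := by linarith
  have heq : g ^ 2 * (y ^ 3 - t * x ^ 3) = l ^ 2 * (y - t * x) := by
    apply mul_left_cancel₀ hg0.ne'
    linear_combination h
  have hcop : IsCoprime (y ^ 3 - t * x ^ 3) (x ^ 3) := by
    have : IsCoprime (y ^ 3) (x ^ 3) := hxy.symm.pow
    have := this.add_mul_right_left (-t)
    rwa [show y ^ 3 + -t * x ^ 3 = y ^ 3 - t * x ^ 3 by ring] at this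
  -- Modulo `y ^ 3 - t x ^ 3`, both `l ^ 2 (y ^ 3 - (t x) ^ 3)` and `y ^ 3 - t x ^ 3` vanish, hence so
  -- does `l ^ 2 (t ^ 3 - t) x ^ 3`.
  have hdvd : y ^ 3 - t * x ^ 3 ∣ D := by
    refine hcop.dvd_of_dvd_mul_right
      ⟨l ^ 2 - g ^ 2 * (y ^ 2 + y * (t * x) + (t * x) ^ 2), ?_⟩
    rw [hD]
    linear_combination (y ^ 2 + y * (t * x) + (t * x) ^ 2) * heq
  have hM0 : y ^ 3 - t * x ^ 3 ≠ 0 := fun h => hD0 (by rw [h] at hdvd; exact zero_dvd_iff.mp hdvd)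
  have hMle : |y ^ 3 - t * x ^ 3| ≤ |D| :=
    Int.le_of_dvd (abs_pos.mpr hD0) ((abs_dvd_abs _ _).mpr hdvd)
  refine Set.mem_biUnion (x := (x, y)) ?_ ⟨g, ⟨hg0.le, ?_⟩, rfl⟩
  · exact Set.mem_biUnion (x := y ^ 3 - t * x ^ 3) ⟨abs_le.mp hMle, hM0⟩ rfl
  · have habs : g ^ 2 * |y ^ 3 - t * x ^ 3| = l ^ 2 * |y - t * x| := by
      have := congrArg abs heq
      rwa [abs_mul, abs_mul, abs_of_nonneg (sq_nonneg g), abs_of_nonneg (sq_nonneg l)] at this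
    rw [← habs]
    nlinarith [Int.one_le_abs hM0, sq_nonneg g]
end

section
/- Let l be a non-zero integer. There exists a constant c > 0 depending only on l such that for all integers 3 ≤ a < b, if a²(a²+l) divides b²(b²+l), then b ≥ c · a · (log a)^{1/12} / (log log a)^{1/2}. -/
/-!
Let `t` be the quotient of the divisibility, and write `a = z y`, `b = z x` with `x, y` coprime.
Elementary manipulations (`reduction`) show that `N = x⁴ - t y⁴` is nonzero with `|N| ≤ |l| t²`, that
`a² ≪ t y⁴`, and that `t ≤ 4 (b / a)⁴`. It therefore suffices to bound the solutions of this quartic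
Thue equation by `log y ≪ t³ (log t)³`, which gives `log a ≪ t³ (log t)³` (`log_bound`) and, after
solving for `b / a`, the theorem (`large_case`).

If `t` is a square the equation is trivial (`thue_square`). Otherwise put `s = t^{1/4}` and work in
the ring of integers of `ℚ(θ)`, `θ⁴ = t`, with its two real embeddings `θ ↦ ± s` and its complex
embedding `θ ↦ i s` (`NormData`, `exists_quartic_ring`). Two ingredients are combined.

*A unit of controlled size.* The box principle yields a sequence of elements of bounded norm which
are smaller and smaller at the first real place (`exists_small_element`, `exists_small_omega`). As
there are few ideals of bounded norm dividing a given integer (`DivisorsLE`,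
`exists_divisor_bound`), two of these elements have the same relative norm over the quadratic
subring and generate the same ideal. Their quotient is a unit `u` with `σ₁ u * σ₂ u = 1`,
`|σ₃ u| = 1` and `log |σ₁ u| ≪ t^{3/2} log t` (`exists_unit_of_count`). A bounded power of it has
`σ₃ u` very close to `1` (`exists_pow_near_one`).

*An auxiliary polynomial.* Given such a unit, with `ℓ = log (σ₁ u)`, one has
`log y ≤ 100 ℓ (ℓ + log t + log |N| + 1)` (`thue_bound`). At the complex place the two numbers
`((x - θ y) / (x + θ y))⁴` and `u` are both close to `1`, while at the real places the first is
roughly a negative power `8 M` of `u`, up to a controlled factor. Siegel's lemma (`siegel_coeffs`)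
provides a polynomial `∑ p_{kl} X^{8Mk + l}` vanishing to high order at `1`. A zero estimate for
such lacunary polynomials (`zero_estimate`), proved with a Wronskian for the Euler operator
`X d/dX`, shows that some derivative of low order, twisted by the powers of
`((x - θ y) / (x + θ y))⁴`, does not vanish at `u`. Its norm is at least `1`, and comparing this
with the bounds at the three places (`core_inequality`, `core_numeric`) bounds `y`.
-/

open Polynomial Finset

/-! ### Zero estimate for lacunary polynomials -/

/-- For `q = ∑ l < M, q l * X ^ l`, the polynomial `X ^ (-R k) * (X d/dX) ^ j (X ^ (R k) * q)`:
the Euler operator `X d/dX` multiplies the monomial `X ^ e` by `e`. -/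
noncomputable def eulerEntry (R M : ℕ) (k : ℕ) (q : ℕ → ℝ) (j : ℕ) : ℝ[X] :=
  ∑ l ∈ range M, C (q l * ((R * k + l : ℕ) : ℝ) ^ j) * X ^ l

lemma eulerEntry_coeff (R M k : ℕ) (q : ℕ → ℝ) (j d : ℕ) :
    (eulerEntry R M k q j).coeff d = if d < M then q d * ((R * k + d : ℕ) : ℝ) ^ j else 0 := by
  rw [eulerEntry, finsetSum_coeff]
  simp only [coeff_C_mul, coeff_X_pow, mul_ite, mul_one, mul_zero, sum_ite_eq, mem_range]

lemma det_coeff_top {s : ℕ} (A : Matrix (Fin s) (Fin s) ℝ[X]) (m : ℕ)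
    (h : ∀ i j, (A i j).natDegree ≤ m) :
    A.det.coeff (s * m) = (Matrix.of fun i j => (A i j).coeff m).det := by
  rw [Matrix.det_apply, Matrix.det_apply, finsetSum_coeff]
  refine sum_congr rfl fun σ _ => ?_
  have := coeff_prod_of_natDegree_le (s := (univ : Finset (Fin s))) (fun i => A (σ i) i) m
    (fun i _ => h _ _)
  simp only [card_univ, Fintype.card_fin] at this
  rw [coeff_smul, this]
  rfl

lemma det_natDegree_le {s : ℕ} (A : Matrix (Fin s) (Fin s) ℝ[X]) (m : ℕ)
    (h : ∀ i j, (A i j).natDegree ≤ m) : A.det.natDegree ≤ s * m := by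
  rw [Matrix.det_apply]
  refine natDegree_sum_le_of_forall_le _ _ fun σ _ => ?_
  refine (natDegree_smul_le _ _).trans ((natDegree_prod_le _ _).trans ?_)
  refine (sum_le_sum fun i _ => h (σ i) i).trans ?_
  simp

lemma euler_iterate_dvd (f : ℝ[X]) (a : ℝ) (T j : ℕ) (h : (X - C a) ^ T ∣ f) :
    (X - C a) ^ (T - j) ∣ ((fun g : ℝ[X] => X * derivative g)^[j] f) := by
  induction j with
  | zero => simpa using h
  | succ j ih =>
    rw [Function.iterate_succ_apply']
    have := pow_sub_one_dvd_derivative_of_pow_dvd ih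
    rw [Nat.sub_sub] at this
    exact this.mul_left _

/-- The polynomial `∑ i, c ^ K i * X ^ (R * K i) * q i`, where each `q i` is a polynomial of degree
less than `M` given by its coefficients. For `R` larger than `M` the exponents that occur form
short blocks separated by long gaps. -/
noncomputable def sparse (R M : ℕ) {s : ℕ} (K : Fin s → ℕ) (q : Fin s → ℕ → ℝ) (c : ℝ) : ℝ[X] :=
  ∑ i, ∑ l ∈ range M, C (q i l * c ^ K i) * X ^ (R * K i + l)

lemma euler_iterate_sparse (R M : ℕ) {s : ℕ} (K : Fin s → ℕ) (q : Fin s → ℕ → ℝ) (c : ℝ) (j : ℕ) :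
    ((fun g : ℝ[X] => X * derivative g)^[j] (sparse R M K q c)) =
      ∑ i, eulerEntry R M (K i) (q i) j * (C (c ^ K i) * X ^ (R * K i)) := by
  have key : ((fun g : ℝ[X] => X * derivative g)^[j] (sparse R M K q c)) =
      ∑ i, ∑ l ∈ range M, C (q i l * c ^ K i * ((R * K i + l : ℕ) : ℝ) ^ j) *
        X ^ (R * K i + l) := by
    induction j with
    | zero => simp [sparse]
    | succ j ih =>
      rw [Function.iterate_succ_apply', ih]
      simp only [derivative_sum, mul_sum]
      refine sum_congr rfl fun i _ => sum_congr rfl fun l _ => ?_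
      rw [derivative_C_mul, derivative_X_pow]
      rcases Nat.eq_zero_or_pos (R * K i + l) with h | h
      · simp [h]
      · obtain ⟨e, he⟩ := Nat.exists_eq_succ_of_ne_zero h.ne'
        rw [he]
        simp only [Nat.succ_sub_one, pow_succ, C_mul, C_pow, Nat.succ_eq_add_one]
        simp only [map_natCast]
        ring
  rw [key]
  refine sum_congr rfl fun i _ => ?_
  rw [eulerEntry, sum_mul]
  refine sum_congr rfl fun l _ => ?_
  simp only [C_mul, pow_add]
  ring

/-- If `sparse R M K q c` vanishes to order `T` at `a`, the Wronskian of its blocks for the Euler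
operator vanishes there to order `T - n`. Cramer's rule expresses the determinant times an entry of
the vector `c ^ K i * X ^ (R * K i)`, which is invertible at `a`, through iterated Euler derivatives.
The determinant does not depend on `c`. -/
lemma sub_pow_dvd_det (R M : ℕ) {s : ℕ} (K : Fin s → ℕ) (q : Fin s → ℕ → ℝ) (c a : ℝ) (T n : ℕ)
    (hs0 : 0 < s) (hs : s ≤ n + 1) (hc : c ≠ 0) (ha : a ≠ 0) (h : (X - C a) ^ T ∣ sparse R M K q c) :
    (X - C a) ^ (T - n) ∣
      (Matrix.of fun j i : Fin s => eulerEntry R M (K i) (q i) j).det := by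
  set A := (Matrix.of fun j i : Fin s => eulerEntry R M (K i) (q i) (j : ℕ)) with hA
  set v : Fin s → ℝ[X] := fun i => C (c ^ K i) * X ^ (R * K i) with hv
  have h1 : ∀ j, (X - C a) ^ (T - n) ∣ A.mulVec v j := by
    intro j
    have := euler_iterate_dvd _ _ _ (j : ℕ) h
    rw [euler_iterate_sparse] at this
    exact (pow_dvd_pow _ (by omega)).trans this
  have h2 : A.adjugate.mulVec (A.mulVec v) = A.det • v := by
    rw [Matrix.mulVec_mulVec, Matrix.adjugate_mul, Matrix.smul_mulVec, Matrix.one_mulVec]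
  have h3 : (X - C a) ^ (T - n) ∣ A.det * v ⟨0, hs0⟩ := by
    have := congrFun h2 ⟨0, hs0⟩
    simp only [Pi.smul_apply, smul_eq_mul] at this
    rw [← this]
    change _ ∣ ∑ j, A.adjugate ⟨0, hs0⟩ j * A.mulVec v j
    exact dvd_sum fun j _ => (h1 j).mul_left _
  have hcop : IsCoprime ((X - C a) ^ (T - n)) (v ⟨0, hs0⟩) := by
    apply IsCoprime.pow_left
    refine IsCoprime.mul_right ?_ (IsCoprime.pow_right ?_)
    · exact (isCoprime_one_right.of_isCoprime_of_dvd_right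
        ((isUnit_C.2 (pow_ne_zero _ hc).isUnit).dvd))
    · have := isCoprime_X_sub_C_of_isUnit_sub (R := ℝ) (a := a) (b := 0) (by simpa using ha)
      simpa using this
  exact hcop.dvd_of_dvd_mul_right h3

/-- The leading coefficients of the columns form a Vandermonde matrix in the exponents
`R * K i + deg q i`, which are distinct since `M ≤ R`. -/
lemma det_eulerEntry_ne_zero (R M : ℕ) (hMR : M ≤ R) {s : ℕ} (K : Fin s → ℕ)
    (hK : Function.Injective K) (q : Fin s → ℕ → ℝ) (hq : ∀ i, ∃ l < M, q i l ≠ 0) :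
    (Matrix.of fun j i : Fin s => eulerEntry R M (K i) (q i) j).det ≠ 0 := by
  classical
  have hd : ∀ i, ∃ d < M, q i d ≠ 0 ∧ ∀ l, d < l → l < M → q i l = 0 := by
    intro i
    obtain ⟨l, hl, hl0⟩ := hq i
    have hne : ((range M).filter fun l => q i l ≠ 0).Nonempty := ⟨l, by simp [hl, hl0]⟩
    refine ⟨((range M).filter fun l => q i l ≠ 0).max' hne, ?_, ?_, ?_⟩
    · have := max'_mem _ hne
      simp only [mem_filter, mem_range] at this
      exact this.1
    · have := max'_mem _ hne
      simp only [mem_filter, mem_range] at this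
      exact this.2
    · intro l h1 h2
      by_contra h3
      exact absurd (le_max' _ l (mem_filter.2 ⟨mem_range.2 h2, h3⟩)) (not_le.2 h1)
  choose d hdM hd0 hdl using hd
  set A := (Matrix.of fun j i : Fin s => eulerEntry R M (K i) (q i) (j : ℕ)) with hA
  intro h0
  set A' : Matrix (Fin s) (Fin s) ℝ[X] :=
    Matrix.of fun j i => (X ^ (M - d i) : ℝ[X]) * A j i with hA'
  have hdet : A'.det = 0 := by
    rw [hA', Matrix.det_mul_row, h0, mul_zero]
  have hcoef : ∀ j i, (A j i).natDegree ≤ d i := by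
    intro j i
    rw [natDegree_le_iff_coeff_eq_zero]
    intro N hN
    simp only [hA, Matrix.of_apply, eulerEntry_coeff]
    split_ifs with h
    · rw [hdl i N hN h, zero_mul]
    · rfl
  have hdeg : ∀ j i, (A' j i).natDegree ≤ M := by
    intro j i
    simp only [hA', Matrix.of_apply]
    refine natDegree_mul_le.trans ?_
    have := hcoef j i
    have := hdM i
    simp only [natDegree_X_pow]
    omega
  have htop := det_coeff_top A' M hdeg
  rw [hdet, coeff_zero] at htop
  have hmat : (Matrix.of fun j i => (A' j i).coeff M) =
      Matrix.of fun j i : Fin s => q i (d i) *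
        (Matrix.vandermonde (fun i : Fin s => ((R * K i + d i : ℕ) : ℝ))).transpose j i := by
    ext j i
    have hM : M = d i + (M - d i) := by have := hdM i; omega
    have hc : (A' j i).coeff M = (A j i).coeff (d i) := by
      simp only [hA', Matrix.of_apply]
      conv_lhs => rw [mul_comm, hM]
      simp only [Nat.add_sub_cancel_left]
      rw [coeff_mul_X_pow]
    simp only [Matrix.of_apply] at hc ⊢
    rw [hc, hA, Matrix.of_apply, eulerEntry_coeff, if_pos (hdM i), Matrix.transpose_apply,
      Matrix.vandermonde_apply]
  rw [hmat, Matrix.det_mul_row, Matrix.det_transpose] at htop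
  rcases mul_eq_zero.1 htop.symm with h | h
  · obtain ⟨i, -, hi⟩ := prod_eq_zero_iff.1 h
    exact hd0 i hi
  · refine Matrix.det_vandermonde_ne_zero_iff.2 ?_ h
    intro i i' hii
    have hii' : ((R * K i + d i : ℕ) : ℝ) = ((R * K i' + d i' : ℕ) : ℝ) := hii
    have hii : R * K i + d i = R * K i' + d i' := by exact_mod_cast hii'
    apply hK
    have h1 := hdM i
    have h2 := hdM i'
    have e1 : (R * K i + d i) / R = K i := by
      rw [Nat.mul_add_div (by omega), Nat.div_eq_of_lt (by omega), add_zero]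
    have e2 : (R * K i' + d i') / R = K i' := by
      rw [Nat.mul_add_div (by omega), Nat.div_eq_of_lt (by omega), add_zero]
    rw [← e1, ← e2, hii]

/-- Zero estimate. The two polynomials have the same Wronskian,
so their orders of vanishing at `1` and at `a` add up in a nonzero polynomial whose degree is at
most `(n + 1) * (M - 1)`, regardless of the length `R` of the gaps. -/
theorem zero_estimate (R M n T T' : ℕ) (hM : 0 < M) (hMR : M ≤ R) (p : ℕ → ℕ → ℝ)
    (hp : ∃ k ≤ n, ∃ l < M, p k l ≠ 0) (c a : ℝ) (hc : c ≠ 0) (ha : a ≠ 0) (ha1 : a ≠ 1)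
    (h1 : (X - C 1) ^ T ∣ ∑ k ∈ range (n + 1), ∑ l ∈ range M, C (p k l) * X ^ (R * k + l))
    (h2 : (X - C a) ^ T' ∣
      ∑ k ∈ range (n + 1), ∑ l ∈ range M, C (p k l * c ^ k) * X ^ (R * k + l)) :
    (T - n) + (T' - n) ≤ (n + 1) * (M - 1) := by
  classical
  -- only the nonzero blocks enter the Wronskian
  set S := (range (n + 1)).filter fun k => ∃ l < M, p k l ≠ 0 with hS
  set s := S.card with hs
  set K : Fin s → ℕ := fun i => S.orderEmbOfFin rfl i with hK
  have hKinj : Function.Injective K := (S.orderEmbOfFin rfl).injective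
  have hKmem : ∀ i, K i ∈ S := fun i => S.orderEmbOfFin_mem rfl i
  have hs1 : s ≤ n + 1 := by
    have := card_filter_le (range (n + 1)) fun k => ∃ l < M, p k l ≠ 0
    simpa using this
  have hs0 : 0 < s := by
    obtain ⟨k, hk, l, hl, h⟩ := hp
    exact card_pos.2 ⟨k, by simp [hS]; exact ⟨by omega, l, hl, h⟩⟩
  set q : Fin s → ℕ → ℝ := fun i => p (K i) with hq
  have hsum : ∀ c : ℝ, ∑ k ∈ range (n + 1), ∑ l ∈ range M, C (p k l * c ^ k) * X ^ (R * k + l) =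
      sparse R M K q c := by
    intro c
    rw [sparse]
    have e1 : ∑ k ∈ range (n + 1), ∑ l ∈ range M, C (p k l * c ^ k) * X ^ (R * k + l) =
        ∑ k ∈ S, ∑ l ∈ range M, C (p k l * c ^ k) * (X : ℝ[X]) ^ (R * k + l) := by
      symm
      apply sum_subset (filter_subset _ _)
      intro k hk hkS
      apply sum_eq_zero
      intro l hl
      have : p k l = 0 := by
        by_contra h
        exact hkS (by simp only [hS, mem_filter]; exact ⟨hk, l, by simpa using hl, h⟩)
      simp [this]
    rw [e1]
    have himg : S = univ.map (S.orderEmbOfFin rfl).toEmbedding := by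
      rw [map_orderEmbOfFin_univ]
    rw [himg, sum_map]
    rfl
  have d1 : (X - C 1) ^ (T - n) ∣ (Matrix.of fun j i : Fin s => eulerEntry R M (K i) (q i) j).det := by
    apply sub_pow_dvd_det R M K q 1 1 T n hs0 hs1 one_ne_zero one_ne_zero
    rw [← hsum]; simpa using h1
  have d2 : (X - C a) ^ (T' - n) ∣ (Matrix.of fun j i : Fin s => eulerEntry R M (K i) (q i) j).det := by
    apply sub_pow_dvd_det R M K q c a T' n hs0 hs1 hc ha
    rw [← hsum]; exact h2
  have hne := det_eulerEntry_ne_zero R M hMR K hKinj q (fun i => by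
    have := hKmem i
    simp only [hS, mem_filter] at this
    exact this.2)
  have hcop : IsCoprime ((X - C (1 : ℝ)) ^ (T - n)) ((X - C a) ^ (T' - n)) :=
    IsCoprime.pow (isCoprime_X_sub_C_of_isUnit_sub (by
      rw [isUnit_iff_ne_zero]; exact sub_ne_zero.2 ha1.symm))
  have hdvd := hcop.mul_dvd d1 d2
  have hdeg := natDegree_le_of_dvd hdvd hne
  rw [((monic_X_sub_C (1 : ℝ)).pow _).natDegree_mul ((monic_X_sub_C a).pow _)] at hdeg
  simp only [natDegree_pow, natDegree_X_sub_C, mul_one] at hdeg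
  have hle := det_natDegree_le (Matrix.of fun j i : Fin s => eulerEntry R M (K i) (q i) j) (M - 1) (by
    intro j i
    rw [natDegree_le_iff_coeff_eq_zero]
    intro N hN
    rw [Matrix.of_apply, eulerEntry_coeff, if_neg (by omega)])
  exact hdeg.trans (hle.trans (Nat.mul_le_mul_right _ hs1))

/-! ### The auxiliary polynomial -/

section
attribute [local instance] Matrix.seminormedAddCommGroup

lemma four_mul_le_two_pow (q : ℕ) (hq : 0 < q) : 4 * q ≤ 2 ^ (2 * q) := by
  induction q with
  | zero => omega
  | succ q ih =>
    rcases Nat.eq_zero_or_pos q with h | h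
    · subst h; norm_num
    · have := ih h
      have e : 2 ^ (2 * (q + 1)) = 4 * 2 ^ (2 * q) := by rw [mul_add, pow_add]; ring
      omega

/-- Siegel's lemma: the coefficients of a nonzero integer polynomial
`∑ p (k, l) * X ^ (8 * M * k + l)` vanishing at `1` to order three quarters of the number
`4 * ν * M` of unknowns. -/
lemma siegel_coeffs (ν M : ℕ) (hν : 0 < ν) (hM : 0 < M) :
    ∃ p : ℕ × ℕ → ℤ, (∃ k < 4 * ν, ∃ l < M, p (k, l) ≠ 0) ∧
      (∀ i, |p i| ≤ 2 ^ (102 * (ν * M))) ∧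
      ∀ j < 3 * (ν * M), ∑ i ∈ range (4 * ν) ×ˢ range M,
        p i * ((8 * M * i.1 + i.2).choose j : ℤ) = 0 := by
  classical
  set q := ν * M with hq
  have hq0 : 0 < q := Nat.mul_pos hν hM
  let A : Matrix (Fin (3 * q)) (Fin (4 * ν) × Fin M) ℤ :=
    Matrix.of fun j i => ((8 * M * (i.1 : ℕ) + (i.2 : ℕ)).choose (j : ℕ) : ℤ)
  have hcardβ : Fintype.card (Fin (4 * ν) × Fin M) = 4 * q := by
    simp [hq, mul_assoc]
  obtain ⟨t, ht0, htA, htn⟩ := Int.Matrix.exists_ne_zero_int_vec_norm_le A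
    (by rw [hcardβ]; simp; omega) (by simp; omega)
  have hexp : ((Fintype.card (Fin (3 * q)) : ℝ) /
      ((Fintype.card (Fin (4 * ν) × Fin M) : ℝ) - (Fintype.card (Fin (3 * q)) : ℝ))) = (3 : ℕ) := by
    rw [hcardβ, Fintype.card_fin]
    have : (q : ℝ) ≠ 0 := by positivity
    push_cast
    rw [show (4 * (q : ℝ) - 3 * q) = q by ring]
    field_simp
  have hA : ‖A‖ ≤ 2 ^ (32 * q) := by
    rw [Matrix.norm_le_iff (by positivity)]
    intro j i
    simp only [A, Matrix.of_apply, Int.norm_natCast]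
    have h1 : 8 * M * (i.1 : ℕ) + (i.2 : ℕ) ≤ 32 * q := by
      have := i.1.2
      have := i.2.2
      have h3 : 8 * M * (i.1 : ℕ) + 8 * M ≤ 8 * M * (4 * ν) := by
        rw [← Nat.mul_succ]; exact Nat.mul_le_mul_left _ (by omega)
      have : 8 * M * (4 * ν) = 32 * q := by rw [hq]; ring
      omega
    exact_mod_cast (Nat.choose_le_two_pow _ _).trans (Nat.pow_le_pow_right (by norm_num) h1)
  rw [hexp, Real.rpow_natCast] at htn
  have hbound : ‖t‖ ≤ 2 ^ (102 * q) := by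
    refine htn.trans ?_
    rw [hcardβ]
    have h1 : ((4 * q : ℕ) : ℝ) ≤ 2 ^ (2 * q) := by exact_mod_cast four_mul_le_two_pow q hq0
    have h2 : max 1 ‖A‖ ≤ 2 ^ (32 * q) := max_le (one_le_pow₀ (by norm_num)) hA
    calc (((4 * q : ℕ) : ℝ) * max 1 ‖A‖) ^ 3 ≤ (2 ^ (2 * q) * 2 ^ (32 * q)) ^ 3 := by gcongr
      _ = 2 ^ (102 * q) := by rw [← pow_add, ← pow_mul]; congr 1; ring
  refine ⟨fun i => if h : i.1 < 4 * ν ∧ i.2 < M then t (⟨i.1, h.1⟩, ⟨i.2, h.2⟩) else 0, ?_, ?_, ?_⟩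
  · obtain ⟨i, hi⟩ := Function.ne_iff.1 ht0
    refine ⟨i.1, i.1.2, i.2, i.2.2, ?_⟩
    simpa using hi
  · intro i
    dsimp only
    split_ifs with h
    · have := (norm_le_pi_norm t (⟨i.1, h.1⟩, ⟨i.2, h.2⟩)).trans hbound
      rw [Int.norm_eq_abs] at this
      exact_mod_cast this
    · simp
  · intro j hj
    have := congrFun htA ⟨j, hj⟩
    simp only [Matrix.mulVec, dotProduct, A, Matrix.of_apply, Pi.zero_apply] at this
    rw [Fintype.sum_prod_type] at this
    refine Eq.trans ?_ this
    rw [sum_product, sum_range]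
    refine sum_congr rfl fun k _ => ?_
    rw [sum_range]
    refine sum_congr rfl fun l _ => ?_
    dsimp only
    rw [dif_pos ⟨k.2, l.2⟩, mul_comm]
end

/-- Taylor expansion at `1` of the `τ`-th divided derivative of `∑ i, p i * X ^ e i`, multiplied
by `w ^ τ`. -/
lemma expand_at_one {ι : Type*} (I : Finset ι) (p : ι → ℤ) (e : ι → ℕ) (D : ℕ)
    (he : ∀ i ∈ I, e i < D) (τ : ℕ) (w : ℂ) :
    ∑ i ∈ I, (p i : ℂ) * ((e i).choose τ : ℂ) * w ^ e i =
      w ^ τ * ∑ j ∈ range D, (w - 1) ^ j * ((τ + j).choose τ : ℂ) *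
        ((∑ i ∈ I, p i * ((e i).choose (τ + j) : ℤ) : ℤ) : ℂ) := by
  have h1 : ∀ i ∈ I, ((e i).choose τ : ℂ) * w ^ e i =
      w ^ τ * ∑ j ∈ range D, (w - 1) ^ j * ((τ + j).choose τ : ℂ) * ((e i).choose (τ + j) : ℂ) := by
    intro i hi
    rcases lt_or_ge (e i) τ with h | h
    · rw [Nat.choose_eq_zero_of_lt h]
      simp only [Nat.cast_zero, zero_mul]
      symm
      apply mul_eq_zero_of_right
      apply sum_eq_zero
      intro j _
      rw [Nat.choose_eq_zero_of_lt (by omega : e i < τ + j)]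
      simp
    · have hw : w ^ e i = w ^ τ * ((w - 1) + 1) ^ (e i - τ) := by
        rw [sub_add_cancel, ← pow_add]; congr 1; omega
      rw [hw, add_pow]
      have hsub : ∑ j ∈ range (e i - τ + 1), (w - 1) ^ j * 1 ^ (e i - τ - j) * ((e i - τ).choose j : ℂ)
          = ∑ j ∈ range D, (w - 1) ^ j * ((e i - τ).choose j : ℂ) := by
        simp only [one_pow, mul_one]
        apply sum_subset
        · intro j hj
          have := he i hi
          simp only [mem_range] at hj ⊢
          omega
        · intro j _ hj
          rw [Nat.choose_eq_zero_of_lt (by simp only [mem_range] at hj; omega)]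
          simp
      rw [hsub, mul_left_comm, mul_sum]
      congr 1
      refine sum_congr rfl fun j _ => ?_
      have := Nat.choose_mul (n := e i) (k := τ + j) (s := τ) (by omega)
      rw [Nat.add_sub_cancel_left] at this
      have h2 : ((e i).choose (τ + j) : ℂ) * ((τ + j).choose τ : ℂ) =
        ((e i).choose τ : ℂ) * ((e i - τ).choose j : ℂ) := by exact_mod_cast this
      linear_combination (w - 1) ^ j * (-h2)
  have h2 : ∑ i ∈ I, (p i : ℂ) * ((e i).choose τ : ℂ) * w ^ e i =
      ∑ i ∈ I, (p i : ℂ) * (w ^ τ * ∑ j ∈ range D, (w - 1) ^ j * ((τ + j).choose τ : ℂ) *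
        ((e i).choose (τ + j) : ℂ)) := by
    refine sum_congr rfl fun i hi => ?_
    rw [← h1 i hi]; ring
  rw [h2]
  simp only [mul_sum]
  rw [sum_comm]
  refine sum_congr rfl fun j _ => ?_
  push_cast
  rw [mul_sum, mul_sum]
  refine sum_congr rfl fun i _ => ?_
  ring

/-- The sums in the hypothesis are `a ^ j` times the Hasse derivatives at `a`. -/
lemma dvd_of_choose_sums {ι : Type*} (I : Finset ι) (g : ι → ℝ) (e : ι → ℕ) (T : ℕ) (a : ℝ)
    (ha : a ≠ 0) (h : ∀ j < T, ∑ i ∈ I, g i * ((e i).choose j : ℝ) * a ^ e i = 0) :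
    (X - C a) ^ T ∣ ∑ i ∈ I, C (g i) * X ^ e i := by
  rw [X_sub_C_pow_dvd_iff, X_pow_dvd_iff]
  intro d hd
  rw [← taylor_apply, taylor_coeff, map_sum, eval_finsetSum]
  have := h d hd
  have key : ∀ i ∈ I, eval a ((hasseDeriv d) (C (g i) * X ^ e i)) * a ^ d =
      g i * ((e i).choose d : ℝ) * a ^ e i := by
    intro i _
    rw [C_mul_X_pow_eq_monomial, hasseDeriv_monomial, eval_monomial]
    rcases lt_or_ge (e i) d with h | h
    · rw [Nat.choose_eq_zero_of_lt h]; simp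
    · rw [mul_assoc, ← pow_add, Nat.sub_add_cancel h]; ring
  have h2 : (∑ i ∈ I, eval a ((hasseDeriv d) (C (g i) * X ^ e i))) * a ^ d = 0 := by
    rw [sum_mul, sum_congr rfl key, this]
  exact (mul_eq_zero.1 h2).resolve_right (pow_ne_zero _ ha)

/-! ### Bounds at the archimedean places -/

/-- Two real embeddings and one complex embedding of a ring, for which the product formula
`|σ₁ z| |σ₂ z| |σ₃ z|² ≥ 1` holds for nonzero `z`. The example to keep in mind is the ring of
integers of a quartic field of mixed signature, where the product is `|N(z)|`. -/
structure NormData (A : Type*) [CommRing A] where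
  σ1 : A →+* ℝ
  σ2 : A →+* ℝ
  σ3 : A →+* ℂ
  one_le : ∀ z, z ≠ 0 → 1 ≤ |σ1 z| * |σ2 z| * ‖σ3 z‖ ^ 2

lemma exponent_lt {ν M : ℕ} (i : ℕ × ℕ) (hi : i ∈ range (4 * ν) ×ˢ range M) :
    8 * M * i.1 + i.2 < 32 * (ν * M) := by
  simp only [mem_product, mem_range] at hi
  have h3 : 8 * M * i.1 + 8 * M ≤ 8 * M * (4 * ν) := by
    rw [← Nat.mul_succ]; exact Nat.mul_le_mul_left _ (by omega)
  have : 8 * M * (4 * ν) = 32 * (ν * M) := by ring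
  omega

lemma sum_abs_bound {ν M : ℕ} (hν : 0 < ν) (hM : 0 < M) (p : ℕ × ℕ → ℤ)
    (hp : ∀ i, |p i| ≤ 2 ^ (102 * (ν * M))) (τ : ℕ) :
    ∑ i ∈ range (4 * ν) ×ˢ range M, |((p i * ((8 * M * i.1 + i.2).choose τ : ℤ) : ℤ) : ℝ)| ≤
      2 ^ (136 * (ν * M)) := by
  set q := ν * M with hq
  have hq0 : 0 < q := Nat.mul_pos hν hM
  have h1 : ∀ i ∈ range (4 * ν) ×ˢ range M,
      |((p i * ((8 * M * i.1 + i.2).choose τ : ℤ) : ℤ) : ℝ)| ≤ 2 ^ (102 * q) * 2 ^ (32 * q) := by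
    intro i hi
    have he := exponent_lt i hi
    have h2 : (8 * M * i.1 + i.2).choose τ ≤ 2 ^ (32 * q) :=
      (Nat.choose_le_two_pow _ _).trans (Nat.pow_le_pow_right (by norm_num) he.le)
    push_cast
    rw [abs_mul]
    have h3 : |(p i : ℝ)| ≤ 2 ^ (102 * q) := by exact_mod_cast hp i
    have h4 : |(((8 * M * i.1 + i.2).choose τ : ℕ) : ℝ)| ≤ 2 ^ (32 * q) := by
      rw [Nat.abs_cast]; exact_mod_cast h2
    gcongr
  refine (sum_le_card_nsmul _ _ _ h1).trans ?_
  have hc : (range (4 * ν) ×ˢ range M).card = 4 * q := by simp [hq, mul_assoc]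
  rw [hc, nsmul_eq_mul]
  have h5 : ((4 * q : ℕ) : ℝ) ≤ 2 ^ (2 * q) := by exact_mod_cast four_mul_le_two_pow q hq0
  calc ((4 * q : ℕ) : ℝ) * (2 ^ (102 * q) * 2 ^ (32 * q))
      ≤ 2 ^ (2 * q) * (2 ^ (102 * q) * 2 ^ (32 * q)) := by gcongr
    _ = 2 ^ (136 * q) := by rw [← pow_add, ← pow_add]; congr 1; ring

/-- Since the auxiliary polynomial vanishes to order `3 * ν * M` at `1`, its derivatives of order at
most `2 * ν * M` are small at points close to `1`. -/
lemma norm_near_one_bound {ν M : ℕ} (hν : 0 < ν) (hM : 0 < M) (p : ℕ × ℕ → ℤ)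
    (hp : ∀ i, |p i| ≤ 2 ^ (102 * (ν * M)))
    (hp0 : ∀ j < 3 * (ν * M), ∑ i ∈ range (4 * ν) ×ˢ range M,
        p i * ((8 * M * i.1 + i.2).choose j : ℤ) = 0)
    (τ : ℕ) (hτ : τ + ν * M ≤ 3 * (ν * M)) (w : ℂ) (hw : ‖w‖ = 1) (δ : ℝ) (hδ : ‖w - 1‖ ≤ δ)
    (hδ1 : δ ≤ 1) :
    ‖∑ i ∈ range (4 * ν) ×ˢ range M, (p i : ℂ) * ((8 * M * i.1 + i.2).choose τ : ℂ) *
      w ^ (8 * M * i.1 + i.2)‖ ≤ 2 ^ (173 * (ν * M)) * δ ^ (ν * M) := by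
  have hS := sum_abs_bound hν hM p hp
  have hexp := expand_at_one (range (4 * ν) ×ˢ range M) p (fun i => 8 * M * i.1 + i.2)
    (32 * (ν * M)) (fun i hi => exponent_lt i hi) τ w
  rw [hexp]
  have hEx := fun i hi => exponent_lt (ν := ν) (M := M) i hi
  set q := ν * M with hq
  have hq0 : 0 < q := Nat.mul_pos hν hM
  have hδ0 : 0 ≤ δ := (norm_nonneg _).trans hδ
  rw [norm_mul, norm_pow, hw, one_pow, one_mul]
  have hterm : ∀ j ∈ range (32 * q), ‖(w - 1) ^ j * ((τ + j).choose τ : ℂ) *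
        ((∑ i ∈ range (4 * ν) ×ˢ range M, p i * ((8 * M * i.1 + i.2).choose (τ + j) : ℤ) : ℤ) : ℂ)‖
      ≤ δ ^ q * 2 ^ (32 * q) * 2 ^ (136 * q) := by
    intro j _
    by_cases h1 : τ + j < 3 * q
    · rw [hp0 _ h1]
      simp only [Int.cast_zero, mul_zero, norm_zero]
      positivity
    by_cases h2 : 32 * q ≤ τ + j
    · have : ∑ i ∈ range (4 * ν) ×ˢ range M, p i * ((8 * M * i.1 + i.2).choose (τ + j) : ℤ) = 0 := by
        apply sum_eq_zero
        intro i hi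
        rw [Nat.choose_eq_zero_of_lt (lt_of_lt_of_le (hEx i hi) h2)]
        simp
      rw [this]
      simp only [Int.cast_zero, mul_zero, norm_zero]
      positivity
    rw [norm_mul, norm_mul, norm_pow, Complex.norm_natCast, Complex.norm_intCast]
    have e1 : ‖w - 1‖ ^ j ≤ δ ^ q :=
      (pow_le_pow_left₀ (norm_nonneg _) hδ j).trans (pow_le_pow_of_le_one hδ0 hδ1 (by omega))
    have e2 : (((τ + j).choose τ : ℕ) : ℝ) ≤ 2 ^ (32 * q) := by
      exact_mod_cast (Nat.choose_le_two_pow _ _).trans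
        (Nat.pow_le_pow_right (by norm_num) (by omega))
    have e3 : |((∑ i ∈ range (4 * ν) ×ˢ range M, p i * ((8 * M * i.1 + i.2).choose (τ + j) : ℤ) : ℤ) : ℝ)|
        ≤ 2 ^ (136 * q) := by
      refine le_trans ?_ (hS (τ + j))
      rw [Int.cast_sum]
      exact abs_sum_le_sum_abs _ _
    gcongr
  refine (norm_sum_le _ _).trans ((sum_le_card_nsmul _ _ _ hterm).trans ?_)
  rw [card_range, nsmul_eq_mul]
  have h5 : ((32 * q : ℕ) : ℝ) ≤ 2 ^ (5 * q) := by
    have := four_mul_le_two_pow q hq0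
    have e : 2 ^ (5 * q) = 2 ^ (2 * q) * 2 ^ (3 * q) := by rw [← pow_add]; congr 1; ring
    have e2 : 2 ^ 3 ≤ 2 ^ (3 * q) := Nat.pow_le_pow_right (by norm_num) (by omega)
    have : 32 * q ≤ 2 ^ (5 * q) := by
      rw [e]
      calc 32 * q = (4 * q) * 2 ^ 3 := by ring
        _ ≤ _ := Nat.mul_le_mul this e2
    exact_mod_cast this
  calc ((32 * q : ℕ) : ℝ) * (δ ^ q * 2 ^ (32 * q) * 2 ^ (136 * q))
      ≤ 2 ^ (5 * q) * (δ ^ q * 2 ^ (32 * q) * 2 ^ (136 * q)) := by gcongr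
    _ = (2 ^ (5 * q) * 2 ^ (32 * q) * 2 ^ (136 * q)) * δ ^ q := by ring
    _ = _ := by rw [← pow_add, ← pow_add]; congr 2; ring

lemma norm_pow_mul_pow_sub_le (Z Z' : ℂ) (ρ ε : ℝ) (hZ : ‖Z‖ = ρ) (hZ' : ‖Z'‖ = ρ)
    (h : ‖Z - Z'‖ ≤ ε * ρ) (n k : ℕ) (hk : k ≤ n) :
    ‖Z ^ k * Z' ^ (n - k) - Z' ^ n‖ ≤ n * ε * ρ ^ n := by
  have hρ : 0 ≤ ρ := hZ ▸ norm_nonneg _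
  have key : ∀ k : ℕ, ‖Z ^ k - Z' ^ k‖ ≤ k * ε * ρ ^ k := by
    intro k
    induction k with
    | zero => simp
    | succ k ih =>
      have e : Z ^ (k + 1) - Z' ^ (k + 1) = Z * (Z ^ k - Z' ^ k) + (Z - Z') * Z' ^ k := by ring
      rw [e]
      refine (norm_add_le _ _).trans ?_
      rw [norm_mul, norm_mul, norm_pow, hZ, hZ']
      calc ρ * ‖Z ^ k - Z' ^ k‖ + ‖Z - Z'‖ * ρ ^ k ≤ ρ * (k * ε * ρ ^ k) + ε * ρ * ρ ^ k := by gcongr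
        _ = _ := by push_cast; ring
  have e : Z ^ k * Z' ^ (n - k) - Z' ^ n = (Z ^ k - Z' ^ k) * Z' ^ (n - k) := by
    rw [sub_mul, ← pow_add Z', Nat.add_sub_cancel' hk]
  rw [e, norm_mul, norm_pow, hZ']
  rcases hρ.eq_or_lt with h0 | h0
  · have hZ0 : Z = 0 := by rw [← norm_eq_zero, hZ, ← h0]
    have hZ0' : Z' = 0 := by rw [← norm_eq_zero, hZ', ← h0]
    rcases Nat.eq_zero_or_pos k with hk0 | hk0
    · subst hk0
      simp only [pow_zero, sub_self, norm_zero, zero_mul]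
      rcases Nat.eq_zero_or_pos n with hn | hn
      · subst hn; simp
      · rw [← h0, zero_pow hn.ne', mul_zero]
    · rw [hZ0, hZ0', sub_self, norm_zero, zero_mul, ← h0, zero_pow (by omega), mul_zero]
  have hε : 0 ≤ ε := by
    by_contra hε
    have := (norm_nonneg (Z - Z')).trans h
    nlinarith
  calc ‖Z ^ k - Z' ^ k‖ * ρ ^ (n - k) ≤ (k * ε * ρ ^ k) * ρ ^ (n - k) := by
        gcongr; exact key k
    _ = k * ε * ρ ^ n := by rw [mul_assoc _ (ρ ^ k), ← pow_add, Nat.add_sub_cancel' hk]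
    _ ≤ n * ε * ρ ^ n := by gcongr

/-- The elements `E τ = ∑ p (k, l) * (8Mk + l).choose τ * a ^ k * a' ^ (n - k) * u ^ (8Mk + l)` are
divided derivatives of the auxiliary polynomial at `u`, twisted by powers of `a / a'`. By the zero
estimate one of them, with small `τ`, is nonzero, so its norm is at least `1`. At the two real places
`a * u ^ (8M)` and `a'` have comparable size, so no term dominates; at the complex place `a / a'`
and `u` are both close to `1`, and the high order of vanishing at `1` makes `E τ` tiny. -/
theorem core_inequality {A : Type*} [CommRing A] (P : NormData A) (a a' u : A)
    (A1 A2 U δ ε ρ H : ℝ) (hA1 : 0 < A1) (hA2 : 0 < A2) (hU : 1 < U)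
    (h1a : P.σ1 a = A1) (h1a' : P.σ1 a' = A2) (h2a : P.σ2 a = A2) (h2a' : P.σ2 a' = A1)
    (h1u : P.σ1 u = U) (h2u : P.σ2 u = U⁻¹) (h3u : ‖P.σ3 u‖ = 1) (hδ : ‖P.σ3 u - 1‖ ≤ δ)
    (hδ1 : δ ≤ 1) (h3a : ‖P.σ3 a‖ = ρ) (h3a' : ‖P.σ3 a'‖ = ρ) (hε0 : 0 ≤ ε)
    (hε : ‖P.σ3 a - P.σ3 a'‖ ≤ ε * ρ) (hH : 1 ≤ H) (ν M n : ℕ) (hν : 0 < ν) (hM : 4 ≤ M)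
    (hn : n + 1 = 4 * ν) (hκ : A1 * U ^ (8 * M) ≤ H * A2) (hκ' : A2 ≤ H * (A1 * U ^ (8 * M))) :
    1 ≤ (A1 * A2 * ρ ^ 2) ^ n * H ^ (2 * n) * U ^ M * 2 ^ (272 * (ν * M)) *
      (2 ^ (173 * (ν * M)) * δ ^ (ν * M) + 2 ^ (136 * (ν * M)) * (n * ε)) ^ 2 := by
  classical
  have hM0 : 0 < M := by omega
  have hU0 : 0 < U := by linarith
  obtain ⟨p, hpne, hpb, hp0⟩ := siegel_coeffs ν M hν hM0
  set I := range (4 * ν) ×ˢ range M with hI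
  have hIk : ∀ i ∈ I, i.1 ≤ n ∧ i.2 < M := by
    intro i hi
    simp only [hI, mem_product, mem_range] at hi
    omega
  let E : ℕ → A := fun τ => ∑ i ∈ I, ((p i * ((8 * M * i.1 + i.2).choose τ : ℤ) : ℤ) : A) *
    (a ^ i.1 * a' ^ (n - i.1) * u ^ (8 * M * i.1 + i.2))
  have hex : ∃ τ < ν * M + 4 * ν, E τ ≠ 0 := by
    by_contra hcon
    push Not at hcon
    have hvan : ∀ j < ν * M + 4 * ν, ∑ i ∈ I, ((p i : ℝ) * (A1 / A2) ^ i.1) *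
        ((8 * M * i.1 + i.2).choose j : ℝ) * U ^ (8 * M * i.1 + i.2) = 0 := by
      intro j hj
      have h := congrArg P.σ1 (hcon j hj)
      simp only [E, map_sum, map_mul, map_pow, map_intCast, h1a, h1a', h1u, map_zero] at h
      have h2 : (∑ i ∈ I, ((p i : ℝ) * (A1 / A2) ^ i.1) *
        ((8 * M * i.1 + i.2).choose j : ℝ) * U ^ (8 * M * i.1 + i.2)) * A2 ^ n = 0 := by
        rw [sum_mul, ← h]
        refine sum_congr rfl fun i hi => ?_
        have e : A2 ^ n = A2 ^ i.1 * A2 ^ (n - i.1) := by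
          rw [← pow_add, Nat.add_sub_cancel' (hIk i hi).1]
        rw [e, div_pow]
        have : A2 ^ i.1 ≠ 0 := (pow_pos hA2 _).ne'
        push_cast
        field_simp
      exact (mul_eq_zero.1 h2).resolve_right (pow_pos hA2 _).ne'
    have hd2 := dvd_of_choose_sums I (fun i => (p i : ℝ) * (A1 / A2) ^ i.1)
      (fun i => 8 * M * i.1 + i.2) _ U hU0.ne' hvan
    have hd1 := dvd_of_choose_sums I (fun i => (p i : ℝ)) (fun i => 8 * M * i.1 + i.2)
      (3 * (ν * M)) 1 one_ne_zero (by
        intro j hj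
        have := hp0 j hj
        simp only [one_pow, mul_one]
        exact_mod_cast this)
    rw [hI, sum_product] at hd1 hd2
    rw [show range (4 * ν) = range (n + 1) by rw [hn]] at hd1 hd2
    obtain ⟨k, hk, l, hl, hkl⟩ := hpne
    have := zero_estimate (8 * M) M n (3 * (ν * M)) (ν * M + 4 * ν) hM0 (by omega)
      (fun k l => (p (k, l) : ℝ)) ⟨k, by omega, l, hl, by exact_mod_cast hkl⟩ (A1 / A2) U
      (div_pos hA1 hA2).ne' hU0.ne' hU.ne' hd1 hd2
    rw [hn] at this
    obtain ⟨M', rfl⟩ : ∃ M', M = M' + 4 := ⟨M - 4, by omega⟩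
    have e1 : ν * (M' + 4) = ν * M' + 4 * ν := by ring
    have e2 : 4 * ν * (M' + 4 - 1) = 4 * (ν * M') + 12 * ν := by
      rw [show M' + 4 - 1 = M' + 3 by omega]; ring
    rw [e1, e2] at this
    omega
  obtain ⟨τ, hτ, hEτ⟩ := hex
  have hone := P.one_le _ hEτ
  have hS := sum_abs_bound hν hM0 p hpb τ
  rw [← hI] at hS
  have hτ' : τ + ν * M ≤ 3 * (ν * M) := by
    have : ν * 4 ≤ ν * M := Nat.mul_le_mul_left _ hM
    omega
  have hF := norm_near_one_bound hν hM0 p hpb hp0 τ hτ' (P.σ3 u) h3u δ hδ hδ1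
  rw [← hI] at hF
  set q := ν * M with hq
  have hHpow : ∀ k ≤ n, H ^ k ≤ H ^ n := fun k hk => pow_le_pow_right₀ hH hk
  have b1 : |P.σ1 (E τ)| ≤ 2 ^ (136 * q) * (A2 ^ n * H ^ n * U ^ M) := by
    simp only [E, map_sum, map_mul, map_pow, h1a, h1a', h1u]
    refine (abs_sum_le_sum_abs _ _).trans ?_
    refine le_trans ?_ (mul_le_mul_of_nonneg_right hS (by positivity))
    rw [sum_mul]
    refine sum_le_sum fun i hi => ?_
    rw [map_intCast, abs_mul]
    refine mul_le_mul_of_nonneg_left ?_ (abs_nonneg _)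
    rw [abs_of_pos (by positivity)]
    obtain ⟨hk, hl⟩ := hIk i hi
    calc A1 ^ i.1 * A2 ^ (n - i.1) * U ^ (8 * M * i.1 + i.2)
        = (A1 * U ^ (8 * M)) ^ i.1 * A2 ^ (n - i.1) * U ^ i.2 := by
          rw [pow_add, pow_mul, mul_pow]; ring
      _ ≤ (H * A2) ^ i.1 * A2 ^ (n - i.1) * U ^ M := by
          gcongr
          exact hU.le
      _ = A2 ^ n * H ^ i.1 * U ^ M := by
          rw [mul_pow, mul_assoc (H ^ i.1), ← pow_add, Nat.add_sub_cancel' hk]; ring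
      _ ≤ A2 ^ n * H ^ n * U ^ M := by
          have := hHpow _ hk
          gcongr
  have b2 : |P.σ2 (E τ)| ≤ 2 ^ (136 * q) * (A1 ^ n * H ^ n) := by
    simp only [E, map_sum, map_mul, map_pow, h2a, h2a', h2u]
    refine (abs_sum_le_sum_abs _ _).trans ?_
    refine le_trans ?_ (mul_le_mul_of_nonneg_right hS (by positivity))
    rw [sum_mul]
    refine sum_le_sum fun i hi => ?_
    rw [map_intCast, abs_mul]
    refine mul_le_mul_of_nonneg_left ?_ (abs_nonneg _)
    rw [abs_of_pos (by positivity)]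
    obtain ⟨hk, hl⟩ := hIk i hi
    have hA2' : A2 * (U⁻¹) ^ (8 * M) ≤ H * A1 := by
      rw [inv_pow, ← div_eq_mul_inv, div_le_iff₀ (by positivity)]
      linarith
    calc A2 ^ i.1 * A1 ^ (n - i.1) * U⁻¹ ^ (8 * M * i.1 + i.2)
        = (A2 * U⁻¹ ^ (8 * M)) ^ i.1 * A1 ^ (n - i.1) * U⁻¹ ^ i.2 := by
          rw [pow_add, pow_mul, mul_pow]; ring
      _ ≤ (H * A1) ^ i.1 * A1 ^ (n - i.1) * 1 := by
          gcongr
          exact pow_le_one₀ (by positivity) (inv_le_one_of_one_le₀ hU.le)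
      _ = A1 ^ n * H ^ i.1 := by
          rw [mul_pow, mul_assoc (H ^ i.1), ← pow_add, Nat.add_sub_cancel' hk]; ring
      _ ≤ A1 ^ n * H ^ n := by
          have := hHpow _ hk
          gcongr
  have hρ : 0 ≤ ρ := h3a ▸ norm_nonneg _
  have b3 : ‖P.σ3 (E τ)‖ ≤ ρ ^ n * (2 ^ (173 * q) * δ ^ q + 2 ^ (136 * q) * (n * ε)) := by
    simp only [E, map_sum, map_mul, map_pow]
    set Z := P.σ3 a
    set Z' := P.σ3 a'
    set w := P.σ3 u
    have e : ∑ i ∈ I, P.σ3 ((p i * ((8 * M * i.1 + i.2).choose τ : ℤ) : ℤ) : A) *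
        (Z ^ i.1 * Z' ^ (n - i.1) * w ^ (8 * M * i.1 + i.2)) =
        Z' ^ n * (∑ i ∈ I, (p i : ℂ) * ((8 * M * i.1 + i.2).choose τ : ℂ) * w ^ (8 * M * i.1 + i.2)) +
        ∑ i ∈ I, ((p i * ((8 * M * i.1 + i.2).choose τ : ℤ) : ℤ) : ℂ) *
          ((Z ^ i.1 * Z' ^ (n - i.1) - Z' ^ n) * w ^ (8 * M * i.1 + i.2)) := by
      rw [mul_sum, ← sum_add_distrib]
      refine sum_congr rfl fun i _ => ?_
      rw [map_intCast]
      push_cast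
      ring
    rw [e]
    refine (norm_add_le _ _).trans ?_
    rw [mul_add]
    apply add_le_add
    · rw [norm_mul, norm_pow, h3a']
      gcongr
    · refine (norm_sum_le _ _).trans ?_
      have : ρ ^ n * (2 ^ (136 * q) * (n * ε)) = 2 ^ (136 * q) * (n * ε * ρ ^ n) := by ring
      rw [this]
      refine le_trans ?_ (mul_le_mul_of_nonneg_right hS (by positivity))
      rw [sum_mul]
      refine sum_le_sum fun i hi => ?_
      rw [norm_mul, Complex.norm_intCast, norm_mul, norm_pow, h3u, one_pow, mul_one]
      exact mul_le_mul_of_nonneg_left (norm_pow_mul_pow_sub_le Z Z' ρ ε h3a h3a' hε n _ (hIk i hi).1)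
        (abs_nonneg _)
  calc (1 : ℝ) ≤ |P.σ1 (E τ)| * |P.σ2 (E τ)| * ‖P.σ3 (E τ)‖ ^ 2 := hone
    _ ≤ (2 ^ (136 * q) * (A2 ^ n * H ^ n * U ^ M)) * (2 ^ (136 * q) * (A1 ^ n * H ^ n)) *
        (ρ ^ n * (2 ^ (173 * q) * δ ^ q + 2 ^ (136 * q) * (n * ε))) ^ 2 := by
      gcongr
    _ = _ := by
      rw [show 272 * q = 136 * q + 136 * q by ring, pow_add, two_mul n, pow_add, mul_pow, mul_pow, mul_pow]
      ring

lemma exp_neg_two_lt : Real.exp (-2) < 1 / 4 := by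
  have h3 : Real.exp 2 = Real.exp 1 * Real.exp 1 := by rw [← Real.exp_add]; norm_num
  have h4 := Real.exp_one_gt_d9
  have h5 : 4 < Real.exp 2 := by rw [h3]; nlinarith
  rw [Real.exp_neg, ← one_div]
  exact one_div_lt_one_div_of_lt (by norm_num) h5

/-- With the parameters of `thue_bound`, the right-hand side of `core_inequality` is less than `1`.
Here `ℓ = log U`, `Y = log y`, `Λ = log |N|` and `G = log H`. -/
lemma core_numeric (ℓ Y Λ G : ℝ) (ν M n : ℕ) (hν : 0 < ν) (hM : 4 ≤ M) (hn : n + 1 = 4 * ν)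
    (hG : 4 * Λ + 2 * G ≤ M) (hG0 : 0 ≤ 4 * Λ + 2 * G) (hℓ : ℓ ≤ 400 * ν) (hℓ' : 200 * (ν : ℝ) ≤ ℓ)
    (hMY : M * ℓ ≤ 2 * Y) (hΛ : 2 * Λ ≤ Y) (hY : 10 ≤ Y) :
    (Real.exp (4 * Λ)) ^ n * (Real.exp G) ^ (2 * n) * (Real.exp ℓ) ^ M * 2 ^ (272 * (ν * M)) *
      (2 ^ (173 * (ν * M)) * ((1 / 2 : ℝ) ^ 1000) ^ (ν * M) +
        2 ^ (136 * (ν * M)) * (n * Real.exp (Λ - 4 * Y))) ^ 2 < 1 := by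
  have hq : 0 < ν * M := Nat.mul_pos hν (by omega)
  have hnq : (n : ℝ) ≤ 2 ^ (2 * (ν * M)) := by
    have h1 := four_mul_le_two_pow (ν * M) hq
    have h2 : n ≤ 4 * (ν * M) := by
      have : ν * 1 ≤ ν * M := Nat.mul_le_mul_left _ (by omega)
      omega
    exact_mod_cast h2.trans h1
  have hqr : ((ν * M : ℕ) : ℝ) = ν * M := by push_cast; ring
  set q := ν * M with hqdef
  have hMr : (4 : ℝ) ≤ M := by exact_mod_cast hM
  have hνr : (1 : ℝ) ≤ ν := by exact_mod_cast hν
  have hq4 : (4 : ℝ) ≤ q := by rw [hqr]; nlinarith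
  set L := Real.log 2 with hL
  have hL1 : 0.69 < L := by have := Real.log_two_gt_d9; linarith
  have hL2 : L < 0.7 := by have := Real.log_two_lt_d9; linarith
  have h2 : (2 : ℝ) = Real.exp L := (Real.exp_log (by norm_num)).symm
  have h2p : ∀ k : ℕ, (2 : ℝ) ^ k = Real.exp (k * L) := by
    intro k; rw [Real.exp_nat_mul, ← h2]
  have hhalf : ((1 / 2 : ℝ) ^ 1000) ^ q = Real.exp (-(1000 * q * L)) := by
    rw [← pow_mul, one_div, inv_pow, h2p, ← Real.exp_neg]; push_cast; ring_nf
  have hnr : (n : ℝ) ≤ 4 * ν := by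
    have : (n : ℝ) + 1 = 4 * ν := by exact_mod_cast hn
    linarith
  have hB : (Real.exp (4 * Λ)) ^ n * (Real.exp G) ^ (2 * n) * (Real.exp ℓ) ^ M * 2 ^ (272 * q) ≤
      Real.exp (4 * q + M * ℓ + 272 * q * L) := by
    rw [h2p, ← Real.exp_nat_mul, ← Real.exp_nat_mul, ← Real.exp_nat_mul, ← Real.exp_add,
      ← Real.exp_add, ← Real.exp_add, Real.exp_le_exp]
    push_cast
    have : (n : ℝ) * (4 * Λ + 2 * G) ≤ (4 * ν) * M := by
      apply mul_le_mul hnr hG hG0 (by positivity)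
    rw [hqr]
    nlinarith
  have hS1 : (2 : ℝ) ^ (173 * q) * ((1 / 2 : ℝ) ^ 1000) ^ q = Real.exp (-(827 * q * L)) := by
    rw [hhalf, h2p, ← Real.exp_add]; push_cast; ring_nf
  have hS2 : (2 : ℝ) ^ (136 * q) * (n * Real.exp (Λ - 4 * Y)) ≤
      Real.exp (138 * q * L + Λ - 4 * Y) := by
    calc (2 : ℝ) ^ (136 * q) * (n * Real.exp (Λ - 4 * Y))
        ≤ (2 : ℝ) ^ (136 * q) * (2 ^ (2 * q) * Real.exp (Λ - 4 * Y)) := by gcongr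
      _ = _ := by rw [h2p, h2p, ← Real.exp_add, ← Real.exp_add]; push_cast; ring_nf
  have hMl : M * ℓ ≤ 400 * q := by rw [hqr]; nlinarith
  have hqY : 100 * (q : ℝ) ≤ Y := by rw [hqr]; nlinarith
  have hLq : 0.69 * q ≤ q * L := by nlinarith
  have hLq' : q * L ≤ 0.7 * q := by nlinarith
  set B := (Real.exp (4 * Λ)) ^ n * (Real.exp G) ^ (2 * n) * (Real.exp ℓ) ^ M * 2 ^ (272 * q) with hBdef
  have hB0 : 0 ≤ B := by positivity
  set S2 := (2 : ℝ) ^ (136 * q) * (n * Real.exp (Λ - 4 * Y)) with hS2def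
  have hS20 : 0 ≤ S2 := by positivity
  rw [hS1]
  have t1 : B * Real.exp (-(827 * q * L)) ^ 2 ≤ Real.exp (-2) := by
    calc B * Real.exp (-(827 * q * L)) ^ 2
        ≤ Real.exp (4 * q + M * ℓ + 272 * q * L) * Real.exp (-(827 * q * L)) ^ 2 := by gcongr
      _ = Real.exp (4 * q + M * ℓ + 272 * q * L + 2 * (-(827 * q * L))) := by
        rw [← Real.exp_nat_mul, ← Real.exp_add]; norm_num
      _ ≤ _ := by rw [Real.exp_le_exp]; linarith
  have t2 : B * S2 ^ 2 ≤ Real.exp (-2) := by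
    calc B * S2 ^ 2
        ≤ Real.exp (4 * q + M * ℓ + 272 * q * L) * Real.exp (138 * q * L + Λ - 4 * Y) ^ 2 := by gcongr
      _ = Real.exp (4 * q + M * ℓ + 272 * q * L + 2 * (138 * q * L + Λ - 4 * Y)) := by
        rw [← Real.exp_nat_mul, ← Real.exp_add]; norm_num
      _ ≤ _ := by rw [Real.exp_le_exp]; linarith
  have he : Real.exp (-2) < 1 / 4 := exp_neg_two_lt
  have hsq : (Real.exp (-(827 * q * L)) + S2) ^ 2 ≤
      2 * Real.exp (-(827 * q * L)) ^ 2 + 2 * S2 ^ 2 := by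
    nlinarith [sq_nonneg (Real.exp (-(827 * q * L)) - S2)]
  calc B * (Real.exp (-(827 * q * L)) + S2) ^ 2
      ≤ B * (2 * Real.exp (-(827 * q * L)) ^ 2 + 2 * S2 ^ 2) := by gcongr
    _ = 2 * (B * Real.exp (-(827 * q * L)) ^ 2) + 2 * (B * S2 ^ 2) := by ring
    _ < 1 := by linarith

/-! ### The Thue equation in the presence of a unit -/

set_option maxHeartbeats 1000000 in
/-- A solution of `x ^ 4 - t * y ^ 4 = N` is bounded by means of a unit `u` with `σ₁ u = exp ℓ`,
`σ₂ u = exp (-ℓ)` and `σ₃ u` of absolute value `1` and very close to `1`. If `y` were larger, then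
`a = (x - θ y) ^ 4` and `a' = (x + θ y) ^ 4` would contradict `core_inequality`: the ratio `a / a'`
is close to `1` at the complex place, because there `(x ∓ i s y) ^ 4` differ by a multiple of the
small quantity `x ^ 2 - s ^ 2 y ^ 2`. -/
theorem thue_bound {A : Type*} [CommRing A] (P : NormData A) (θ u : A) (s t ℓ : ℝ)
    (hs : 0 < s) (ht : 2 ≤ t) (hst : s ^ 4 = t) (h1θ : P.σ1 θ = s) (h2θ : P.σ2 θ = -s)
    (h3θ : P.σ3 θ = s * Complex.I) (hℓ : 2000 ≤ ℓ) (h1u : P.σ1 u = Real.exp ℓ)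
    (h2u : P.σ2 u = (Real.exp ℓ)⁻¹) (h3u : ‖P.σ3 u‖ = 1) (hδ : ‖P.σ3 u - 1‖ ≤ (1 / 2) ^ 1000)
    (x y : ℕ) (hy : 0 < y) (hN : 1 ≤ |(x : ℝ) ^ 4 - t * y ^ 4|) :
    Real.log y ≤ 100 * ℓ * (ℓ + Real.log t + Real.log |(x : ℝ) ^ 4 - t * y ^ 4| + 1) := by
  by_contra hcon
  push Not at hcon
  set N := |(x : ℝ) ^ 4 - t * y ^ 4| with hNdef
  set Λ := Real.log N with hΛ
  set Y := Real.log y with hY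
  set τ := Real.log t with hτ
  have hΛ0 : 0 ≤ Λ := Real.log_nonneg hN
  have hτ0 : 0 ≤ τ := Real.log_nonneg (by linarith)
  have hy0 : (1 : ℝ) ≤ y := by exact_mod_cast hy
  have hyexp : Real.exp Y = y := Real.exp_log (by linarith)
  have hNexp : Real.exp Λ = N := Real.exp_log (by linarith)
  have htexp : Real.exp τ = t := Real.exp_log (by linarith)
  have hYΛ : 100 * (ℓ + τ + Λ + 1) < Y := by
    have h1 : 100 * 1 * (ℓ + τ + Λ + 1) ≤ 100 * ℓ * (ℓ + τ + Λ + 1) := by gcongr; linarith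
    linarith
  have hΛY : 2 * Λ ≤ Y := by linarith
  have hNy : N ≤ y := by rw [← hyexp, ← hNexp, Real.exp_le_exp]; linarith
  have hy4 : (y : ℝ) ≤ y ^ 4 := le_self_pow₀ hy0 (by norm_num)
  have hx0 : (0 : ℝ) ≤ x := Nat.cast_nonneg _
  obtain ⟨hN1, hN2⟩ := abs_le.1 (le_refl N)
  have hxy : (y : ℝ) ≤ x := by
    by_contra h
    push Not at h
    have h1 : (x : ℝ) ^ 4 < y ^ 4 := pow_lt_pow_left₀ h hx0 (by norm_num)
    have h2 : 2 * (y : ℝ) ^ 4 ≤ t * y ^ 4 := by gcongr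
    linarith
  have hs1 : 1 ≤ s := by
    by_contra h
    push Not at h
    have : s ^ 4 < 1 := pow_lt_one₀ hs.le h (by norm_num)
    linarith
  have hst' : s ≤ t := by rw [← hst]; exact le_self_pow₀ hs1 (by norm_num)
  have hx2 : (x : ℝ) ≤ 2 * t * y := by
    by_contra h
    push Not at h
    have h1 : (2 * t * y) ^ 4 < (x : ℝ) ^ 4 := pow_lt_pow_left₀ h (by positivity) (by norm_num)
    have h2 : t ≤ t ^ 4 := le_self_pow₀ (by linarith) (by norm_num)
    have h3 : (2 * t * y) ^ 4 = 16 * (t ^ 4 * y ^ 4) := by ring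
    have h4 : t * y ^ 4 ≤ t ^ 4 * (y : ℝ) ^ 4 := by gcongr
    have h5 : (1 : ℝ) * y ^ 4 ≤ t ^ 4 * (y : ℝ) ^ 4 := by gcongr; linarith
    linarith
  set D1 := (x : ℝ) - s * y with hD1
  set D2 := (x : ℝ) + s * y with hD2
  set Q := (x : ℝ) ^ 2 + s ^ 2 * y ^ 2 with hQ
  have hprod : D1 * D2 * Q = (x : ℝ) ^ 4 - t * y ^ 4 := by rw [hD1, hD2, hQ, ← hst]; ring
  have hD10 : D1 ≠ 0 := by
    intro h
    rw [h] at hprod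
    rw [hNdef, ← hprod] at hN
    norm_num at hN
  have hsy : (y : ℝ) ≤ s * y := le_mul_of_one_le_left (by linarith) hs1
  have hsy' : s * y ≤ t * y := by gcongr
  have hD2l : (y : ℝ) ≤ D2 := by rw [hD2]; linarith
  have hD2u : D2 ≤ 3 * t * y := by rw [hD2]; linarith
  have hQl : 2 * (y : ℝ) ^ 2 ≤ Q := by
    have h1 : (y : ℝ) ^ 2 ≤ x ^ 2 := by gcongr
    have h2 : (y : ℝ) ^ 2 ≤ (s * y) ^ 2 := by gcongr
    rw [hQ]; linarith [mul_pow s (y : ℝ) 2]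
  have hQu : Q ≤ 5 * t ^ 2 * y ^ 2 := by
    have h1 : (x : ℝ) ^ 2 ≤ (2 * t * y) ^ 2 := by gcongr
    have h2 : (s * y) ^ 2 ≤ (t * y) ^ 2 := by gcongr
    rw [hQ]; linarith [mul_pow s (y : ℝ) 2]
  have hypos : (0 : ℝ) < y := by linarith
  have hQ0 : 0 < Q := by have := pow_pos hypos 2; linarith
  have hD20 : 0 < D2 := by linarith
  have hDQ : |D1| * D2 * Q = N := by
    rw [hNdef, ← hprod, abs_mul, abs_mul, abs_of_pos hQ0, abs_of_pos hD20]
  have hD14 : D1 ^ 4 = |D1| ^ 4 := by rw [← abs_pow, abs_of_nonneg (by positivity)]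
  -- `M` makes `exp ℓ ^ (8 * M)` comparable to `y ^ 16`, hence to `a' / a` at the first real place;
  -- `ν` is proportional to `ℓ`, so that the factor `U ^ M` in `core_inequality` is absorbed by the
  -- gain `δ ^ (ν * M)`
  set M := ⌊2 * Y / ℓ⌋₊ with hM
  set ν := ⌈ℓ / 400⌉₊ with hν
  have hℓ0 : 0 < ℓ := by linarith
  have hY0 : 0 < Y := by linarith
  have hM1 : (M : ℝ) * ℓ ≤ 2 * Y := by
    have := Nat.floor_le (a := 2 * Y / ℓ) (by positivity)
    rwa [le_div_iff₀ hℓ0] at this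
  have hM2 : 2 * Y ≤ (M + 1) * ℓ := by
    have := (Nat.lt_floor_add_one (2 * Y / ℓ)).le
    rwa [div_le_iff₀ hℓ0] at this
  have hM3 : 100 * (ℓ + τ + Λ + 1) ≤ M := by
    have h1 : 200 * ℓ * (ℓ + τ + Λ + 1) < (M + 1) * ℓ := by linarith
    have h2 : 200 * (ℓ + τ + Λ + 1) < M + 1 := by
      refine lt_of_mul_lt_mul_right ?_ hℓ0.le
      linarith
    linarith
  have hM4 : 4 ≤ M := by
    have : (4 : ℝ) ≤ M := by linarith
    exact_mod_cast this
  have hν0 : 0 < ν := Nat.ceil_pos.2 (by positivity)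
  have hν1 : ℓ ≤ 400 * ν := by
    have := Nat.le_ceil (ℓ / 400)
    rw [div_le_iff₀ (by norm_num)] at this
    linarith
  have hν2 : 200 * (ν : ℝ) ≤ ℓ := by
    have := Nat.ceil_lt_add_one (a := ℓ / 400) (by positivity)
    linarith
  set G := 16 + 4 * Λ + 8 * ℓ + 16 * τ with hG
  obtain ⟨n, hn⟩ : ∃ n, n + 1 = 4 * ν := ⟨4 * ν - 1, by omega⟩
  have hnum := core_numeric ℓ Y Λ G ν M n hν0 hM4 hn (by rw [hG]; linarith) (by rw [hG]; linarith)
    hν1 hν2 hM1 hΛY (by linarith)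
  have hUM : Real.exp ℓ ^ (8 * M) ≤ (y : ℝ) ^ 16 := by
    rw [← hyexp, ← Real.exp_nat_mul, ← Real.exp_nat_mul, Real.exp_le_exp]
    push_cast; linarith
  have hUM' : (y : ℝ) ^ 16 ≤ Real.exp (8 * ℓ) * Real.exp ℓ ^ (8 * M) := by
    rw [← hyexp, ← Real.exp_nat_mul, ← Real.exp_nat_mul, ← Real.exp_add, Real.exp_le_exp]
    push_cast; linarith
  have hexpG : Real.exp G = Real.exp 16 * N ^ 4 * Real.exp (8 * ℓ) * t ^ 16 := by
    rw [← hNexp, ← htexp, ← Real.exp_nat_mul, ← Real.exp_nat_mul, ← Real.exp_add, ← Real.exp_add,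
      ← Real.exp_add, hG]
    push_cast; ring_nf
  have hN0 : 0 < N := by linarith
  have hDQ4 : D1 ^ 4 * (D2 ^ 4 * Q ^ 4) = N ^ 4 := by rw [hD14, ← hDQ]; ring
  have hyQ : (y : ℝ) ^ 2 ≤ Q := by have := pow_pos hypos 2; linarith
  have he16 : (3 : ℝ) ^ 8 * 5 ^ 4 ≤ Real.exp 16 := by
    have h1 : Real.exp 16 = Real.exp 1 ^ 16 := by rw [← Real.exp_nat_mul]; norm_num
    have h2 : (2.7 : ℝ) ≤ Real.exp 1 := by have := Real.exp_one_gt_d9; linarith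
    rw [h1]
    calc (3 : ℝ) ^ 8 * 5 ^ 4 ≤ 2.7 ^ 16 := by norm_num
      _ ≤ _ := by gcongr
  have h1t16 : (1 : ℝ) ≤ t ^ 16 := one_le_pow₀ (by linarith)
  have h1e8 : (1 : ℝ) ≤ Real.exp (8 * ℓ) := Real.one_le_exp (by linarith)
  have h1e16 : (1 : ℝ) ≤ Real.exp 16 := Real.one_le_exp (by norm_num)
  have hκ : D1 ^ 4 * Real.exp ℓ ^ (8 * M) ≤ Real.exp G * D2 ^ 4 := by
    have h1 : D1 ^ 4 * y ^ 16 ≤ N ^ 4 * D2 ^ 4 := by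
      have h2 : (y : ℝ) ^ 16 ≤ D2 ^ 4 * Q ^ 4 * D2 ^ 4 := by
        calc (y : ℝ) ^ 16 = y ^ 4 * (y ^ 2) ^ 4 * y ^ 4 := by ring
          _ ≤ _ := by gcongr
      calc D1 ^ 4 * y ^ 16 ≤ D1 ^ 4 * (D2 ^ 4 * Q ^ 4 * D2 ^ 4) := by gcongr
        _ = (D1 ^ 4 * (D2 ^ 4 * Q ^ 4)) * D2 ^ 4 := by ring
        _ = _ := by rw [hDQ4]
    have h3 : N ^ 4 ≤ Real.exp G := by
      rw [hexpG]
      calc N ^ 4 = 1 * N ^ 4 * 1 * 1 := by ring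
        _ ≤ _ := by gcongr
    calc D1 ^ 4 * Real.exp ℓ ^ (8 * M) ≤ D1 ^ 4 * y ^ 16 := by gcongr
      _ ≤ N ^ 4 * D2 ^ 4 := h1
      _ ≤ _ := by gcongr
  have hκ' : D2 ^ 4 ≤ Real.exp G * (D1 ^ 4 * Real.exp ℓ ^ (8 * M)) := by
    have h2 : D2 ^ 4 * Q ^ 4 * D2 ^ 4 ≤ (3 ^ 8 * 5 ^ 4) * t ^ 16 * y ^ 16 := by
      calc D2 ^ 4 * Q ^ 4 * D2 ^ 4 ≤ (3 * t * y) ^ 4 * (5 * t ^ 2 * y ^ 2) ^ 4 * (3 * t * y) ^ 4 := by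
            gcongr
        _ = _ := by ring
    have h3 : D2 ^ 4 * Q ^ 4 * D2 ^ 4 ≤
        Real.exp 16 * t ^ 16 * (Real.exp (8 * ℓ) * Real.exp ℓ ^ (8 * M)) :=
      h2.trans (by gcongr)
    have h4 : 0 < D2 ^ 4 * Q ^ 4 := by positivity
    have h5 : (1 : ℝ) ≤ N ^ 4 := one_le_pow₀ hN
    refine le_of_mul_le_mul_left ?_ h4
    calc D2 ^ 4 * Q ^ 4 * D2 ^ 4
        ≤ Real.exp 16 * t ^ 16 * (Real.exp (8 * ℓ) * Real.exp ℓ ^ (8 * M)) := h3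
      _ = 1 * 1 * (Real.exp 16 * t ^ 16 * (Real.exp (8 * ℓ) * Real.exp ℓ ^ (8 * M))) := by ring
      _ ≤ N ^ 4 * N ^ 4 * (Real.exp 16 * t ^ 16 * (Real.exp (8 * ℓ) * Real.exp ℓ ^ (8 * M))) := by
          gcongr
      _ = (D1 ^ 4 * (D2 ^ 4 * Q ^ 4)) * N ^ 4 *
          (Real.exp 16 * t ^ 16 * (Real.exp (8 * ℓ) * Real.exp ℓ ^ (8 * M))) := by rw [hDQ4]
      _ = _ := by rw [hexpG]; ring
  have hnorm : ∀ z : ℂ, z.re ^ 2 + z.im ^ 2 = Q → ‖z ^ 4‖ = Q ^ 2 := by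
    intro z hz
    have : ‖z‖ ^ 2 = Q := by rw [← Complex.normSq_eq_norm_sq, Complex.normSq_apply, ← hz]; ring
    rw [norm_pow, ← this]; ring
  have hcore := core_inequality P (((x : A) - θ * (y : A)) ^ 4) (((x : A) + θ * (y : A)) ^ 4) u (D1 ^ 4) (D2 ^ 4)
    (Real.exp ℓ) ((1 / 2) ^ 1000) (N / y ^ 4) (Q ^ 2) (Real.exp G) (by positivity) (by positivity)
    (by rw [Real.one_lt_exp_iff]; exact hℓ0)
    (by simp [h1θ, hD1]) (by simp [h1θ, hD2]) (by simp [h2θ, hD2]) (by simp [h2θ, hD1]; ring)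
    h1u h2u h3u hδ (pow_le_one₀ (by norm_num) (by norm_num))
    (by
      rw [map_pow, map_sub, map_mul, map_natCast, map_natCast, h3θ]
      apply hnorm
      simp [hQ]; ring)
    (by
      rw [map_pow, map_add, map_mul, map_natCast, map_natCast, h3θ]
      apply hnorm
      simp [hQ]; ring)
    (by positivity)
    (by
      rw [map_pow, map_pow, map_add, map_sub, map_mul, map_natCast, map_natCast, h3θ]
      have e : ((x : ℂ) - s * Complex.I * y) ^ 4 - (x + s * Complex.I * y) ^ 4 =
          ((-8 * x * (s * y) * (D1 * D2) : ℝ) : ℂ) * Complex.I := by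
        rw [hD1, hD2]
        push_cast
        have hI := Complex.I_sq
        linear_combination (-8 * (x : ℂ) * s ^ 3 * Complex.I * y ^ 3) * hI
      rw [e, norm_mul, Complex.norm_I, mul_one, Complex.norm_real, Real.norm_eq_abs, abs_mul, abs_mul,
        abs_mul, abs_of_nonneg hx0, abs_of_pos (mul_pos hs hypos), abs_mul D1, abs_of_pos hD20]
      have h8 : |(-8 : ℝ)| = 8 := by norm_num
      rw [h8, div_mul_eq_mul_div, le_div_iff₀ (by positivity), ← hDQ]
      have h1 : 2 * x * (s * y) ≤ Q := by rw [hQ]; linarith [sq_nonneg (x - s * y : ℝ)]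
      have h2 : (4 : ℝ) * y ^ 4 ≤ Q ^ 2 := by
        calc (4 : ℝ) * y ^ 4 = (2 * y ^ 2) ^ 2 := by ring
          _ ≤ _ := by gcongr
      have h3 : (0 : ℝ) ≤ |D1| * D2 := by positivity
      calc 8 * (x : ℝ) * (s * y) * (|D1| * D2) * y ^ 4
          = (|D1| * D2) * ((2 * x * (s * y)) * (4 * y ^ 4)) := by ring
        _ ≤ (|D1| * D2) * (Q * Q ^ 2) := by gcongr
        _ = _ := by ring)
    (Real.one_le_exp (by rw [hG]; linarith)) ν M n hν0 hM4 hn hκ hκ'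
  have eN : D1 ^ 4 * D2 ^ 4 * (Q ^ 2) ^ 2 = Real.exp (4 * Λ) := by
    rw [show D1 ^ 4 * D2 ^ 4 * (Q ^ 2) ^ 2 = D1 ^ 4 * (D2 ^ 4 * Q ^ 4) by ring, hDQ4, ← hNexp,
      ← Real.exp_nat_mul]
    norm_num
  have eε : N / (y : ℝ) ^ 4 = Real.exp (Λ - 4 * Y) := by
    rw [Real.exp_sub, hNexp, ← hyexp, ← Real.exp_nat_mul]
    norm_num
  rw [eN, eε] at hcore
  exact absurd hcore (not_le.2 hnum)

/-! ### Counting divisors of ideals -/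

/-- The ideal `I` has at most `m` divisors, phrased through a finite set containing them all. -/
def DivisorsLE {A : Type*} [CommRing A] (I : Ideal A) (m : ℕ) : Prop :=
  ∃ s : Finset (Ideal A), s.card ≤ m ∧ ∀ J, J ∣ I → J ∈ s

lemma DivisorsLE.prime_pow {A : Type*} [CommRing A] [IsDedekindDomain A] {P : Ideal A}
    (hP : Prime P) (v : ℕ) : DivisorsLE (P ^ v) (v + 1) := by
  classical
  refine ⟨(range (v + 1)).image (fun i => P ^ i), card_image_le.trans (by simp), fun J hJ => ?_⟩
  obtain ⟨i, hi, h⟩ := (dvd_prime_pow hP v).1 hJ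
  exact mem_image.2 ⟨i, mem_range.2 (by omega), (associated_iff_eq.1 h).symm⟩

lemma DivisorsLE.one {A : Type*} [CommRing A] : DivisorsLE (1 : Ideal A) 1 :=
  ⟨{1}, by simp, fun J hJ => by
    simpa using Ideal.isUnit_iff.1 (isUnit_of_dvd_one hJ)⟩

lemma DivisorsLE.mul {A : Type*} [CommRing A] [IsDedekindDomain A] {I J : Ideal A} {m k : ℕ}
    (hI : DivisorsLE I m) (hJ : DivisorsLE J k) : DivisorsLE (I * J) (m * k) := by
  classical
  obtain ⟨s, hs, hs'⟩ := hI
  obtain ⟨t, ht, ht'⟩ := hJ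
  refine ⟨image₂ (· * ·) s t, (card_image₂_le _ _ _).trans (Nat.mul_le_mul hs ht), fun L hL => ?_⟩
  obtain ⟨a, b, ha, hb, rfl⟩ := exists_dvd_and_dvd_of_dvd_mul hL
  exact mem_image₂_of_mem (hs' a ha) (ht' b hb)

lemma DivisorsLE.mono {A : Type*} [CommRing A] {I : Ideal A} {m k : ℕ} (hI : DivisorsLE I m)
    (h : m ≤ k) : DivisorsLE I k := by
  obtain ⟨s, hs, hs'⟩ := hI
  exact ⟨s, hs.trans h, hs'⟩

lemma DivisorsLE.multiset_prod_pow {A : Type*} [CommRing A] [IsDedekindDomain A] (v : ℕ)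
    (S : Multiset (Ideal A)) (hS : ∀ P ∈ S, Prime P) :
    DivisorsLE (S.prod ^ v) ((v + 1) ^ Multiset.card S) := by
  induction S using Multiset.induction_on with
  | empty =>
    rw [Multiset.prod_zero, one_pow, Multiset.card_zero, pow_zero]
    exact DivisorsLE.one
  | cons P S ih =>
    rw [Multiset.prod_cons, mul_pow, Multiset.card_cons, pow_succ']
    exact (DivisorsLE.prime_pow (hS P (by simp)) v).mul
      (ih fun Q hQ => hS Q (Multiset.mem_cons_of_mem hQ))

/-- A rational prime has at most as many prime factors, with multiplicity, as the rank, because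
each of them has norm divisible by `p`. -/
lemma card_normalizedFactors_le {A : Type*} [CommRing A] [IsDedekindDomain A] [Module.Free ℤ A]
    [Module.Finite ℤ A] [Nontrivial A] [CharZero A] (p : ℕ) (hp : p.Prime) :
    Multiset.card (UniqueFactorizationMonoid.normalizedFactors (Ideal.span {(p : A)})) ≤
      Module.finrank ℤ A := by
  have hne : Ideal.span {(p : A)} ≠ ⊥ := by
    simpa [Ideal.span_singleton_eq_bot] using hp.ne_zero
  have key : ∀ S : Multiset (Ideal A), (∀ P ∈ S, p ∣ Ideal.absNorm P) →
      p ^ Multiset.card S ∣ Ideal.absNorm S.prod := by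
    intro S
    induction S using Multiset.induction_on with
    | empty => simp
    | cons P S ih =>
      intro h
      rw [Multiset.prod_cons, Multiset.card_cons, pow_succ', map_mul]
      exact mul_dvd_mul (h P (by simp)) (ih fun Q hQ => h Q (Multiset.mem_cons_of_mem hQ))
  have h := key (UniqueFactorizationMonoid.normalizedFactors (Ideal.span {(p : A)})) ?_
  · rw [Ideal.prod_normalizedFactors_eq_self hne, Ideal.absNorm_span_natCast] at h
    exact (Nat.pow_dvd_pow_iff_le_right hp.one_lt).1 h
  · intro P hP
    have h1 : Ideal.absNorm P ∣ p ^ Module.finrank ℤ A := by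
      rw [← Ideal.absNorm_span_natCast (S := A)]
      exact map_dvd Ideal.absNorm (UniqueFactorizationMonoid.dvd_of_mem_normalizedFactors hP)
    obtain ⟨k, -, hk⟩ := (Nat.dvd_prime_pow hp).1 h1
    have hk0 : k ≠ 0 := by
      rintro rfl
      rw [pow_zero, Ideal.absNorm_eq_one_iff] at hk
      exact (UniqueFactorizationMonoid.prime_of_normalized_factor P hP).not_unit
        (Ideal.isUnit_iff.2 hk)
    rw [hk]
    exact dvd_pow_self p hk0

/-- The number of ideals dividing `n` is at most `d(n) ^ 4`, where `d` is the number-of-divisors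
function, in a Dedekind domain of rank at most `4`. -/
lemma divisorsLE_span_natCast {A : Type*} [CommRing A] [IsDedekindDomain A] [Module.Free ℤ A]
    [Module.Finite ℤ A] [Nontrivial A] [CharZero A] (hr : Module.finrank ℤ A ≤ 4) (n : ℕ)
    (hn : n ≠ 0) :
    DivisorsLE (Ideal.span {(n : A)}) (∏ p ∈ n.primeFactors, (n.factorization p + 1) ^ 4) := by
  classical
  have hgen : ∀ s : Finset ℕ, (∀ p ∈ s, p.Prime) →
      DivisorsLE (Ideal.span {((∏ p ∈ s, p ^ n.factorization p : ℕ) : A)})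
        (∏ p ∈ s, (n.factorization p + 1) ^ 4) := by
    intro s
    induction s using Finset.induction_on with
    | empty => intro _; simpa using DivisorsLE.one (A := A)
    | insert p s hps ih =>
      intro h
      rw [prod_insert hps, prod_insert hps, Nat.cast_mul, ← Ideal.span_singleton_mul_span_singleton,
        Nat.cast_pow, ← Ideal.span_singleton_pow]
      have hp := h p (mem_insert_self p s)
      have hne : Ideal.span {(p : A)} ≠ ⊥ := by
        simpa [Ideal.span_singleton_eq_bot] using hp.ne_zero
      refine DivisorsLE.mul ?_ (ih fun q hq => h q (mem_insert_of_mem hq))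
      have h1 := DivisorsLE.multiset_prod_pow (n.factorization p)
        (UniqueFactorizationMonoid.normalizedFactors (Ideal.span {(p : A)}))
        UniqueFactorizationMonoid.prime_of_normalized_factor
      rw [Ideal.prod_normalizedFactors_eq_self hne] at h1
      exact h1.mono (Nat.pow_le_pow_right (by omega) ((card_normalizedFactors_le p hp).trans hr))
  have h := hgen n.primeFactors fun p hp => Nat.prime_of_mem_primeFactors hp
  have e : ∏ p ∈ n.primeFactors, p ^ n.factorization p = n := by
    simpa [Finsupp.prod] using Nat.prod_factorization_pow_eq_self hn
  rwa [e] at h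

lemma succ_pow_twelve_le (v p : ℕ) (hp : 2 ≤ p) :
    (v + 1) ^ 12 ≤ (if p < 4096 then 12 ^ 12 else 1) * p ^ v := by
  split_ifs with h
  · have h1 : v + 1 ≤ 12 * 2 ^ (v / 12) := by
      have : v / 12 < 2 ^ (v / 12) := Nat.lt_two_pow_self
      omega
    calc (v + 1) ^ 12 ≤ (12 * 2 ^ (v / 12)) ^ 12 := Nat.pow_le_pow_left h1 12
      _ = 12 ^ 12 * 2 ^ (v / 12 * 12) := by rw [mul_pow, ← pow_mul]
      _ ≤ 12 ^ 12 * 2 ^ v :=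
        Nat.mul_le_mul_left _ (Nat.pow_le_pow_right (by norm_num) (Nat.div_mul_le_self v 12))
      _ ≤ 12 ^ 12 * p ^ v := Nat.mul_le_mul_left _ (Nat.pow_le_pow_left hp v)
  · have h1 : v + 1 ≤ 2 ^ v := Nat.lt_two_pow_self
    calc (v + 1) ^ 12 ≤ (2 ^ v) ^ 12 := Nat.pow_le_pow_left h1 12
      _ = (2 ^ 12) ^ v := by rw [← pow_mul, ← pow_mul, mul_comm]
      _ ≤ p ^ v := Nat.pow_le_pow_left (by omega) v
      _ = 1 * p ^ v := (one_mul _).symm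

/-- `d(n) ^ 12 ≪ n`. Primes `p ≥ 2 ^ 12` satisfy the local bound `(v + 1) ^ 12 ≤ p ^ v` without a
constant. -/
lemma exists_divisor_bound : ∃ K : ℕ, 1 ≤ K ∧ ∀ n : ℕ, n ≠ 0 →
    (∏ p ∈ n.primeFactors, (n.factorization p + 1) ^ 4) ^ 3 ≤ K * n := by
  obtain ⟨M, hM, hM1⟩ : ∃ M : ℕ, (∀ v p : ℕ, 2 ≤ p →
      (v + 1) ^ 12 ≤ (if p < 4096 then M else 1) * p ^ v) ∧ 1 ≤ M :=
    ⟨12 ^ 12, succ_pow_twelve_le, by norm_num⟩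
  -- `M` and `R` are kept opaque to prevent the evaluation of `M ^ R`
  obtain ⟨R, hR⟩ : ∃ R : ℕ, R = 4096 := ⟨_, rfl⟩
  rw [← hR] at hM
  refine ⟨M ^ R, Nat.one_le_pow _ _ hM1, fun n hn => ?_⟩
  have e : ∏ p ∈ n.primeFactors, p ^ n.factorization p = n := by
    simpa [Finsupp.prod] using Nat.prod_factorization_pow_eq_self hn
  calc (∏ p ∈ n.primeFactors, (n.factorization p + 1) ^ 4) ^ 3
      = ∏ p ∈ n.primeFactors, (n.factorization p + 1) ^ 12 := by
        rw [← prod_pow]; exact prod_congr rfl fun p _ => by rw [← pow_mul]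
    _ ≤ ∏ p ∈ n.primeFactors, (if p < R then M else 1) * p ^ n.factorization p :=
        prod_le_prod' fun p hp => hM _ p (Nat.prime_of_mem_primeFactors hp).two_le
    _ = (∏ p ∈ n.primeFactors, if p < R then M else 1) * n := by rw [prod_mul_distrib, e]
    _ ≤ M ^ R * n := by
        refine Nat.mul_le_mul_right _ ?_
        rw [← prod_filter, prod_const]
        refine Nat.pow_le_pow_right hM1 ?_
        calc _ ≤ (range R).card := card_le_card fun p hp => mem_range.2 (mem_filter.1 hp).2
          _ = R := card_range R

/-! ### Elements small at one real place -/

/-- The integer vector `((p₀, p₁), (p₂, p₃))`, standing for `p₀ + p₁ θ + p₂ θ² + p₃ θ³`, with given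
`p₂ = i.1.1`, `p₃ = i.2.1`, and with `p₀ - p₂ s²`, `p₁ - p₃ s²` small and nonnegative: they lie within
`1` of `i.1.2` and `i.2.2`. -/
noncomputable def boxPoint (s : ℝ) (i : (ℕ × ℕ) × (ℕ × ℕ)) : (ℤ × ℤ) × (ℤ × ℤ) :=
  ((⌈(i.1.1 : ℝ) * s ^ 2⌉ + i.1.2, ⌈(i.2.1 : ℝ) * s ^ 2⌉ + i.2.2), ((i.1.1 : ℤ), (i.2.1 : ℤ)))

lemma boxPoint_injective (s : ℝ) : Function.Injective (boxPoint s) := by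
  rintro ⟨⟨a, b⟩, ⟨c, d⟩⟩ ⟨⟨a', b'⟩, ⟨c', d'⟩⟩ h
  simp only [boxPoint, Prod.mk.injEq, Nat.cast_inj] at h
  obtain ⟨⟨h1, h2⟩, rfl, rfl⟩ := h
  simp only [add_right_inj, Nat.cast_inj] at h1 h2
  rw [h1, h2]

lemma ceil_add_bounds (r : ℝ) (j B : ℕ) (hj : j < B) :
    0 ≤ ((⌈r⌉ + j : ℤ) : ℝ) - r ∧ ((⌈r⌉ + j : ℤ) : ℝ) - r < B := by
  have h1 := Int.le_ceil r
  have h2 := Int.ceil_lt_add_one r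
  have h3 : (j : ℝ) + 1 ≤ B := by exact_mod_cast hj
  have h4 : (0 : ℝ) ≤ j := Nat.cast_nonneg _
  push_cast
  constructor <;> linarith

/-- A nonzero integer combination of `1, s, s², s³` that is at most `16 / Z`, with its conjugates
under `s ↦ -s` and `s ↦ i s` under control. The box principle is applied to the values at `s` of the
`m ^ 6 * Z ^ 2` vectors `boxPoint s i`, which all lie in an interval of length `≪ m ^ 6 * Z`. -/
theorem exists_small_element (s : ℝ) (m Z : ℕ) (hm : 2 ≤ m) (hZ : 1 ≤ Z) (hs0 : 1 ≤ s)
    (hs : s ≤ (m : ℝ) ^ 2) :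
    ∃ p0 p1 p2 p3 : ℤ, ¬ (p0 = 0 ∧ p1 = 0 ∧ p2 = 0 ∧ p3 = 0) ∧
      |p0 + p1 * s + p2 * s ^ 2 + p3 * s ^ 3| ≤ 16 / Z ∧
      |p0 - p1 * s + p2 * s ^ 2 - p3 * s ^ 3| ≤ 8 * m ^ 6 * Z ∧
      |p0 - p2 * s ^ 2| ≤ (m : ℝ) ^ 3 ∧ |s * (p1 - p3 * s ^ 2)| ≤ (m : ℝ) ^ 3 := by
  classical
  set I := (range (m ^ 2 * Z) ×ˢ range (m ^ 3)) ×ˢ (range Z ×ˢ range m) with hI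
  set K := m ^ 6 * Z ^ 2 with hK
  have hcard : I.card = K := by simp [hI, hK]; ring
  have hm0 : (2 : ℝ) ≤ m := by exact_mod_cast hm
  have hZ0 : (1 : ℝ) ≤ Z := by exact_mod_cast hZ
  have hK3 : 3 ≤ K := by
    have h1 : 2 ^ 6 ≤ m ^ 6 := Nat.pow_le_pow_left hm 6
    have h2 : 1 ≤ Z ^ 2 := Nat.one_le_pow _ _ hZ
    have : 2 ^ 6 * 1 ≤ K := Nat.mul_le_mul h1 h2
    omega
  let Av : (ℤ × ℤ) × (ℤ × ℤ) → ℝ := fun p => p.1.1 + p.2.1 * s ^ 2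
  let Bv : (ℤ × ℤ) × (ℤ × ℤ) → ℝ := fun p => s * (p.1.2 + p.2.2 * s ^ 2)
  let Cv : (ℤ × ℤ) × (ℤ × ℤ) → ℝ := fun p => p.1.1 - p.2.1 * s ^ 2
  let Dv : (ℤ × ℤ) × (ℤ × ℤ) → ℝ := fun p => s * (p.1.2 - p.2.2 * s ^ 2)
  have hs2 : s ^ 2 ≤ (m : ℝ) ^ 4 := by
    calc s ^ 2 ≤ ((m : ℝ) ^ 2) ^ 2 := by gcongr
      _ = _ := by ring
  have hm36 : (m : ℝ) ^ 3 ≤ (m : ℝ) ^ 6 * (Z : ℝ) := by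
    have h1 : (m : ℝ) ^ 3 ≤ (m : ℝ) ^ 6 := pow_le_pow_right₀ (by linarith) (by norm_num)
    have h2 : (m : ℝ) ^ 6 * 1 ≤ (m : ℝ) ^ 6 * (Z : ℝ) :=
      mul_le_mul_of_nonneg_left hZ0 (by positivity)
    linarith
  have hbd : ∀ i ∈ I, (0 ≤ Av (boxPoint s i) ∧ Av (boxPoint s i) < 3 * m ^ 6 * Z) ∧
      (0 ≤ Bv (boxPoint s i) ∧ Bv (boxPoint s i) < 3 * m ^ 6 * Z) ∧
      (0 ≤ Cv (boxPoint s i) ∧ Cv (boxPoint s i) < m ^ 3) ∧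
      (0 ≤ Dv (boxPoint s i) ∧ Dv (boxPoint s i) < m ^ 3) := by
    rintro ⟨⟨p2, j⟩, ⟨p3, k⟩⟩ hi
    simp only [hI, mem_product, mem_range] at hi
    obtain ⟨⟨h2, hj⟩, h3, hk⟩ := hi
    obtain ⟨c1, c2⟩ := ceil_add_bounds ((p2 : ℝ) * s ^ 2) j (m ^ 3) hj
    obtain ⟨d1, d2⟩ := ceil_add_bounds ((p3 : ℝ) * s ^ 2) k m hk
    simp only [Av, Bv, Cv, Dv, boxPoint, Int.cast_natCast]
    set P0 := ((⌈(p2 : ℝ) * s ^ 2⌉ + j : ℤ) : ℝ)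
    set P1 := ((⌈(p3 : ℝ) * s ^ 2⌉ + k : ℤ) : ℝ)
    have e2 : (p2 : ℝ) * s ^ 2 ≤ m ^ 6 * Z := by
      have : (p2 : ℝ) ≤ m ^ 2 * Z := by exact_mod_cast h2.le
      calc (p2 : ℝ) * s ^ 2 ≤ (m ^ 2 * Z) * m ^ 4 := by gcongr
        _ = _ := by ring
    have e3 : s * ((p3 : ℝ) * s ^ 2) ≤ m ^ 6 * Z := by
      have : (p3 : ℝ) ≤ Z := by exact_mod_cast h3.le
      calc s * ((p3 : ℝ) * s ^ 2) ≤ m ^ 2 * (Z * m ^ 4) := by gcongr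
        _ = _ := by ring
    have e20 : 0 ≤ (p2 : ℝ) * s ^ 2 := by positivity
    have e30 : 0 ≤ s * ((p3 : ℝ) * s ^ 2) := by positivity
    have d1' : 0 ≤ s * (P1 - p3 * s ^ 2) := mul_nonneg (by linarith) d1
    have d2' : s * (P1 - p3 * s ^ 2) < m ^ 3 := by
      calc s * (P1 - p3 * s ^ 2) < s * m := by gcongr
        _ ≤ m ^ 2 * m := by gcongr
        _ = _ := by ring
    push_cast at c2
    refine ⟨⟨by linarith, by linarith⟩, ⟨by linarith, by linarith⟩, ⟨by linarith, by linarith⟩,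
      ⟨by linarith, by linarith⟩⟩
  let F : (ℕ × ℕ) × (ℕ × ℕ) → ℕ :=
    fun i => ⌊(Av (boxPoint s i) + Bv (boxPoint s i)) * Z / 16⌋₊
  have hmaps : ∀ i ∈ I, F i ∈ range (K / 2 + 1) := by
    intro i hi
    obtain ⟨⟨a1, a2⟩, ⟨b1, b2⟩, -⟩ := hbd i hi
    rw [mem_range, Nat.lt_add_one_iff, Nat.le_div_iff_mul_le (by norm_num)]
    have h1 : (F i : ℝ) ≤ (Av (boxPoint s i) + Bv (boxPoint s i)) * Z / 16 :=
      Nat.floor_le (by positivity)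
    have h2 : (Av (boxPoint s i) + Bv (boxPoint s i)) * Z ≤ (8 * m ^ 6 * Z) * Z := by
      gcongr
      have : (0 : ℝ) ≤ m ^ 6 * Z := by positivity
      linarith
    have h3 : (F i : ℝ) * 2 ≤ (K : ℝ) := by
      rw [hK]; push_cast; linarith
    exact_mod_cast h3
  obtain ⟨i, hi, i', hi', hne, hF⟩ := exists_ne_map_eq_of_card_lt_of_maps_to
    (by rw [hcard, card_range]; omega) hmaps
  obtain ⟨⟨a1, a2⟩, ⟨b1, b2⟩, ⟨c1, c2⟩, d1, d2⟩ := hbd i hi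
  obtain ⟨⟨a1', a2'⟩, ⟨b1', b2'⟩, ⟨c1', c2'⟩, d1', d2'⟩ := hbd i' hi'
  have hpne : boxPoint s i ≠ boxPoint s i' := fun h => hne (boxPoint_injective s h)
  have hFabs : |(Av (boxPoint s i) + Bv (boxPoint s i)) * Z / 16 -
      (Av (boxPoint s i') + Bv (boxPoint s i')) * Z / 16| ≤ 1 := by
    have u1 := Nat.floor_le (a := (Av (boxPoint s i) + Bv (boxPoint s i)) * Z / 16) (by positivity)
    have u2 := Nat.lt_floor_add_one ((Av (boxPoint s i) + Bv (boxPoint s i)) * Z / 16)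
    have u3 := Nat.floor_le (a := (Av (boxPoint s i') + Bv (boxPoint s i')) * Z / 16) (by positivity)
    have u4 := Nat.lt_floor_add_one ((Av (boxPoint s i') + Bv (boxPoint s i')) * Z / 16)
    have hF' : ((⌊(Av (boxPoint s i) + Bv (boxPoint s i)) * Z / 16⌋₊ : ℕ) : ℝ) =
      ((⌊(Av (boxPoint s i') + Bv (boxPoint s i')) * Z / 16⌋₊ : ℕ) : ℝ) := by exact_mod_cast hF
    rw [abs_le]
    constructor <;> linarith
  set p := boxPoint s i
  set p' := boxPoint s i'
  refine ⟨p.1.1 - p'.1.1, p.1.2 - p'.1.2, p.2.1 - p'.2.1, p.2.2 - p'.2.2, ?_, ?_, ?_, ?_, ?_⟩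
  · rintro ⟨h1, h2, h3, h4⟩
    apply hpne
    ext <;> linarith
  · have e : ((p.1.1 - p'.1.1 : ℤ) : ℝ) + (p.1.2 - p'.1.2 : ℤ) * s + (p.2.1 - p'.2.1 : ℤ) * s ^ 2 +
        (p.2.2 - p'.2.2 : ℤ) * s ^ 3 =
        ((Av p + Bv p) * Z / 16 - (Av p' + Bv p') * Z / 16) * (16 / Z) := by
      simp only [Av, Bv]
      push_cast
      field_simp
      ring
    rw [e, abs_mul, abs_of_nonneg (by positivity : (0 : ℝ) ≤ 16 / Z)]
    calc _ ≤ 1 * (16 / (Z : ℝ)) := by gcongr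
      _ = _ := one_mul _
  · have e : ((p.1.1 - p'.1.1 : ℤ) : ℝ) - (p.1.2 - p'.1.2 : ℤ) * s + (p.2.1 - p'.2.1 : ℤ) * s ^ 2 -
        (p.2.2 - p'.2.2 : ℤ) * s ^ 3 = (Av p - Av p') - (Bv p - Bv p') := by
      simp only [Av, Bv]
      push_cast
      ring
    have : (0 : ℝ) ≤ m ^ 6 * Z := by positivity
    rw [e, abs_le]
    constructor <;> linarith
  · have e : ((p.1.1 - p'.1.1 : ℤ) : ℝ) - (p.2.1 - p'.2.1 : ℤ) * s ^ 2 = Cv p - Cv p' := by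
      simp only [Cv]; push_cast; ring
    rw [e, abs_le]
    constructor <;> linarith
  · have e : s * (((p.1.2 - p'.1.2 : ℤ) : ℝ) - (p.2.2 - p'.2.2 : ℤ) * s ^ 2) = Dv p - Dv p' := by
      simp only [Dv]; push_cast; ring
    rw [e, abs_le]
    constructor <;> linarith

/-! ### The quartic field -/

lemma rat_not_square (t : ℕ) (hns : ¬ IsSquare t) (b : ℚ) : b ^ 2 ≠ t := by
  intro h
  apply hns
  have : IsSquare (t : ℚ) := ⟨b, by rw [← h, sq]⟩
  exact Rat.isSquare_natCast_iff.1 this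

/-- `X ^ 4 - a` is irreducible when neither `a` nor `-a` is a square: a square root of `√a` in
`F(√a)` would have a norm whose square is `N(√a) = -a`. -/
lemma X_pow_four_sub_C_irreducible {F : Type*} [Field F] (a : F) (h1 : ∀ b : F, b ^ 2 ≠ a)
    (h2 : ∀ b : F, b ^ 2 ≠ -a) : Irreducible (X ^ 4 - C a) := by
  have hirr : Irreducible (X ^ 2 - C a) := X_pow_sub_C_irreducible_of_prime Nat.prime_two h1
  have := X_pow_mul_sub_C_irreducible (n := 2) hirr ?_
  · simpa using this
  intro E _ _ x hx
  have hint : IsIntegral F x := not_not.mp fun h ↦ by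
    simpa only [degree_zero, degree_X_pow_sub_C Nat.two_pos,
      WithBot.natCast_ne_bot] using congr_arg degree (hx.symm.trans (dif_neg h))
  apply X_pow_sub_C_irreducible_of_prime Nat.prime_two
  intro b hb
  apply h2 (Algebra.norm F b)
  rw [← map_pow, hb, ← IntermediateField.adjoin.powerBasis_gen hint,
    Algebra.PowerBasis.norm_gen_eq_coeff_zero_minpoly]
  simp [IntermediateField.minpoly_gen, hx]

lemma quartic_irreducible (t : ℕ) (hns : ¬ IsSquare t) :
    Irreducible (X ^ 4 - C (t : ℚ)) := by
  refine X_pow_four_sub_C_irreducible _ (rat_not_square t hns) fun b hb => ?_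
  have ht : (0 : ℚ) ≤ t := Nat.cast_nonneg t
  have hsq := sq_nonneg b
  have h0 : (t : ℚ) = 0 := by linarith
  exact hns (by rw [show t = 0 by exact_mod_cast h0]; exact ⟨0, rfl⟩)

/-- The four embeddings of a quartic field are told apart by the images `s, -s, i s, -i s` of `θ`. -/
lemma prod_embeddings_eq {K : Type*} [Field K] [NumberField K] (hK : Module.finrank ℚ K = 4)
    (θ : K) (s : ℝ) (hs : 0 < s) (f1 f2 : K →+* ℝ) (f3 : K →+* ℂ) (h1 : f1 θ = s)
    (h2 : f2 θ = -s) (h3 : f3 θ = s * Complex.I) (z : K) :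
    |((Algebra.norm ℚ z : ℚ) : ℝ)| = |f1 z| * |f2 z| * ‖f3 z‖ ^ 2 := by
  classical
  let τ1 : K →ₐ[ℚ] ℂ := (Complex.ofRealHom.comp f1).toRatAlgHom
  let τ2 : K →ₐ[ℚ] ℂ := (Complex.ofRealHom.comp f2).toRatAlgHom
  let τ3 : K →ₐ[ℚ] ℂ := f3.toRatAlgHom
  let τ4 : K →ₐ[ℚ] ℂ := ((starRingEnd ℂ).comp f3).toRatAlgHom
  have e1 : ∀ w, τ1 w = (f1 w : ℂ) := fun _ => rfl
  have e2 : ∀ w, τ2 w = (f2 w : ℂ) := fun _ => rfl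
  have e3 : ∀ w, τ3 w = f3 w := fun _ => rfl
  have e4 : ∀ w, τ4 w = starRingEnd ℂ (f3 w) := fun _ => rfl
  have key : ∀ τ τ' : K →ₐ[ℚ] ℂ, τ θ ≠ τ' θ → τ ≠ τ' := fun τ τ' h h' => h (by rw [h'])
  have n12 : τ1 ≠ τ2 := key _ _ (by
    rw [e1, e2, h1, h2, Ne, Complex.ofReal_inj]; linarith)
  have n13 : τ1 ≠ τ3 := key _ _ (by
    rw [e1, e3, h1, h3]; intro h; have := congrArg Complex.re h; simp at this; linarith)
  have n14 : τ1 ≠ τ4 := key _ _ (by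
    rw [e1, e4, h1, h3]; intro h; have := congrArg Complex.re h; simp at this; linarith)
  have n23 : τ2 ≠ τ3 := key _ _ (by
    rw [e2, e3, h2, h3]; intro h; have := congrArg Complex.re h; simp at this; linarith)
  have n24 : τ2 ≠ τ4 := key _ _ (by
    rw [e2, e4, h2, h3]; intro h; have := congrArg Complex.re h; simp at this; linarith)
  have n34 : τ3 ≠ τ4 := key _ _ (by
    rw [e3, e4, h3]; intro h; have := congrArg Complex.im h; simp at this; linarith)
  have hcard : ({τ1, τ2, τ3, τ4} : Finset (K →ₐ[ℚ] ℂ)) = univ := by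
    apply Finset.eq_univ_of_card
    rw [AlgHom.card, hK]
    simp [n12, n13, n14, n23, n24, n34]
  have hn := Algebra.norm_eq_prod_embeddings ℚ ℂ z
  rw [← hcard, prod_insert (by simp [n12, n13, n14]), prod_insert (by simp [n23, n24]),
    prod_insert (by simp [n34]), prod_singleton, e1, e2, e3, e4, eq_ratCast] at hn
  have hn' := congrArg (fun c : ℂ => ‖c‖) hn
  simp only [norm_mul, Complex.norm_real, Real.norm_eq_abs, RCLike.norm_conj] at hn'
  rw [← Complex.ofReal_ratCast, Complex.norm_real, Real.norm_eq_abs] at hn'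
  rw [hn']
  ring

/-- The ring of integers of `ℚ(t ^ (1/4))`, for `t` not a square, with the properties needed below. -/
theorem exists_quartic_ring (t : ℕ) (hns : ¬ IsSquare t) (s : ℝ) (hs : 0 < s) (hst : s ^ 4 = t) :
    ∃ (A : Type) (_ : CommRing A) (_ : IsDomain A) (P : NormData A) (θ : A),
      θ ^ 4 = t ∧ P.σ1 θ = s ∧ P.σ2 θ = -s ∧ P.σ3 θ = s * Complex.I ∧
      ∀ n : ℕ, n ≠ 0 → DivisorsLE (Ideal.span {(n : A)})
        (∏ p ∈ n.primeFactors, (n.factorization p + 1) ^ 4) := by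
  set f : ℚ[X] := X ^ 4 - C (t : ℚ) with hf
  have hirr : Fact (Irreducible f) := ⟨quartic_irreducible t hns⟩
  have hne : f ≠ 0 := hirr.out.ne_zero
  have hfin : FiniteDimensional ℚ (AdjoinRoot f) := (AdjoinRoot.powerBasis hne).finite
  have hchar : CharZero (AdjoinRoot f) :=
    charZero_of_injective_algebraMap (algebraMap ℚ (AdjoinRoot f)).injective
  have : NumberField (AdjoinRoot f) := { to_charZero := hchar, to_finiteDimensional := by convert hfin }
  have hK : Module.finrank ℚ (AdjoinRoot f) = 4 := by
    have := (AdjoinRoot.powerBasis hne).finrank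
    rw [AdjoinRoot.powerBasis_dim, hf, natDegree_X_pow_sub_C] at this
    convert this
  have hroot : (AdjoinRoot.root f) ^ 4 = (t : AdjoinRoot f) := by
    have h := AdjoinRoot.eval₂_root f
    rw [hf, eval₂_sub, eval₂_X_pow, eval₂_C, sub_eq_zero] at h
    simpa using h
  let f1 : AdjoinRoot f →+* ℝ := AdjoinRoot.lift (algebraMap ℚ ℝ) s (by simp [hf, hst])
  let f2 : AdjoinRoot f →+* ℝ := AdjoinRoot.lift (algebraMap ℚ ℝ) (-s) (by
    simp [hf, ← hst]; ring)
  let f3 : AdjoinRoot f →+* ℂ := AdjoinRoot.lift (algebraMap ℚ ℂ) (s * Complex.I) (by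
    have : (s : ℂ) ^ 4 = t := by exact_mod_cast hst
    simp [hf, mul_pow, this])
  have h1 : f1 (AdjoinRoot.root f) = s := AdjoinRoot.lift_root _
  have h2 : f2 (AdjoinRoot.root f) = -s := AdjoinRoot.lift_root _
  have h3 : f3 (AdjoinRoot.root f) = s * Complex.I := AdjoinRoot.lift_root _
  have hint : IsIntegral ℤ (AdjoinRoot.root f) := by
    apply IsIntegral.of_pow (n := 4) (by norm_num)
    rw [hroot]
    exact isIntegral_natCast t
  let ι : NumberField.RingOfIntegers (AdjoinRoot f) →+* AdjoinRoot f :=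
    algebraMap (NumberField.RingOfIntegers (AdjoinRoot f)) (AdjoinRoot f)
  let θ : NumberField.RingOfIntegers (AdjoinRoot f) := ⟨AdjoinRoot.root f, hint⟩
  have hθ : ι θ = AdjoinRoot.root f := rfl
  have hone : ∀ z, z ≠ 0 → 1 ≤ |(f1.comp ι) z| * |(f2.comp ι) z| * ‖(f3.comp ι) z‖ ^ 2 := by
    intro z hz
    have h := prod_embeddings_eq hK _ s hs f1 f2 f3 h1 h2 h3 (z : AdjoinRoot f)
    rw [← Algebra.coe_norm_int] at h
    have h0 : Algebra.norm ℤ z ≠ 0 := Algebra.norm_ne_zero_iff.2 hz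
    have h01 : (1 : ℝ) ≤ |((Algebra.norm ℤ z : ℤ) : ℝ)| := by exact_mod_cast Int.one_le_abs h0
    calc (1 : ℝ) ≤ |((Algebra.norm ℤ z : ℤ) : ℝ)| := h01
      _ = _ := by rw [← Rat.cast_intCast, h]; rfl
  refine ⟨NumberField.RingOfIntegers (AdjoinRoot f), inferInstance, inferInstance,
    ⟨f1.comp ι, f2.comp ι, f3.comp ι, hone⟩, θ, ?_, ?_, ?_, ?_, ?_⟩
  · apply NumberField.RingOfIntegers.coe_injective
    change ι (θ ^ 4) = ι (t : NumberField.RingOfIntegers (AdjoinRoot f))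
    rw [map_pow, map_natCast]
    exact hroot
  · simpa [hθ] using h1
  · simpa [hθ] using h2
  · simpa [hθ] using h3
  · intro n hn
    refine divisorsLE_span_natCast ?_ n hn
    rw [NumberField.RingOfIntegers.rank, hK]

/-! ### A unit of controlled size -/

/-- The element `ω` of `A` given by `exists_small_element`, together with the integers `νa, νb`
describing its relative norm `νa + νb θ²` to the quadratic subring. The absolute norm
`νa² - t νb²` is bounded independently of `Z` and is divisible by `ω`. -/
lemma exists_small_omega {A : Type*} [CommRing A] (P : NormData A) (θ : A)
    (s : ℝ) (t m Z : ℕ) (hs : 1 ≤ s) (hst : s ^ 4 = t) (hθ : θ ^ 4 = (t : A)) (h1θ : P.σ1 θ = s)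
    (h2θ : P.σ2 θ = -s) (h3θ : P.σ3 θ = s * Complex.I) (hm : 2 ≤ m) (hZ : 1 ≤ Z)
    (hsm : s ≤ (m : ℝ) ^ 2) (hms : (m : ℝ) ^ 4 ≤ 16 * s ^ 2) :
    ∃ (ω : A) (νa νb : ℤ), ω ≠ 0 ∧ |P.σ1 ω| ≤ 16 / Z ∧ |P.σ2 ω| ≤ 8 * m ^ 6 * Z ∧
      ‖P.σ3 ω‖ ^ 2 ≤ 2 * m ^ 6 ∧ P.σ1 ω * P.σ2 ω = νa + νb * s ^ 2 ∧
      ‖P.σ3 ω‖ ^ 2 = νa - νb * s ^ 2 ∧ |νa| ≤ 65 * (m : ℤ) ^ 6 ∧ |νb| ≤ 1040 * (m : ℤ) ^ 2 ∧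
      (νa ^ 2 - t * νb ^ 2).natAbs ≠ 0 ∧ (νa ^ 2 - t * νb ^ 2).natAbs ≤ 256 * m ^ 12 ∧
      ω ∣ ((νa ^ 2 - t * νb ^ 2).natAbs : A) := by
  obtain ⟨p0, p1, p2, p3, hne, h1, h2, h3, h4⟩ := exists_small_element s m Z hm hZ hs hsm
  have hZ0 : (0 : ℝ) < Z := by exact_mod_cast hZ
  set ω : A := p0 + p1 * θ + p2 * θ ^ 2 + p3 * θ ^ 3 with hω
  have e1 : P.σ1 ω = p0 + p1 * s + p2 * s ^ 2 + p3 * s ^ 3 := by simp [hω, h1θ]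
  have e2 : P.σ2 ω = p0 - p1 * s + p2 * s ^ 2 - p3 * s ^ 3 := by simp [hω, h2θ]; ring
  have e3 : P.σ3 ω = ((p0 - p2 * s ^ 2 : ℝ) : ℂ) + ((s * (p1 - p3 * s ^ 2) : ℝ) : ℂ) * Complex.I := by
    simp only [hω, map_add, map_mul, map_pow, map_intCast, h3θ]
    push_cast
    linear_combination ((p2 : ℂ) * s ^ 2 + p3 * s ^ 3 * Complex.I) * Complex.I_sq
  have e3' : ‖P.σ3 ω‖ ^ 2 = (p0 - p2 * s ^ 2) ^ 2 + (s * (p1 - p3 * s ^ 2)) ^ 2 := by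
    rw [e3, Complex.sq_norm, Complex.normSq_add_mul_I]
  set νa : ℤ := p0 ^ 2 + t * p2 ^ 2 - 2 * t * p1 * p3 with hνa
  set νb : ℤ := 2 * p0 * p2 - p1 ^ 2 - t * p3 ^ 2 with hνb
  have hωne : ω ≠ 0 := by
    intro h0
    rw [h0] at e1 e2 e3'
    simp only [map_zero, norm_zero] at e1 e2 e3'
    have c1 : (p0 : ℝ) - p2 * s ^ 2 = 0 := by nlinarith
    have c2 : s * ((p1 : ℝ) - p3 * s ^ 2) = 0 := by nlinarith
    have c2' : (p1 : ℝ) - p3 * s ^ 2 = 0 := by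
      rcases mul_eq_zero.1 c2 with h | h
      · linarith
      · exact h
    have c3 : (p0 : ℝ) = 0 := by linarith
    have c4 : s * (p1 : ℝ) = 0 := by linarith
    have c4' : (p1 : ℝ) = 0 := by
      rcases mul_eq_zero.1 c4 with h | h
      · linarith
      · exact h
    have hs2 : s ^ 2 ≠ 0 := by positivity
    have c5 : (p2 : ℝ) = 0 := by
      rcases mul_eq_zero.1 (show (p2 : ℝ) * s ^ 2 = 0 by linarith) with h | h
      · exact h
      · exact absurd h hs2
    have c6 : (p3 : ℝ) = 0 := by
      rcases mul_eq_zero.1 (show (p3 : ℝ) * s ^ 2 = 0 by linarith) with h | h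
      · exact h
      · exact absurd h hs2
    exact hne ⟨by exact_mod_cast c3, by exact_mod_cast c4', by exact_mod_cast c5,
      by exact_mod_cast c6⟩
  have f1 : P.σ1 ω * P.σ2 ω = νa + νb * s ^ 2 := by
    rw [e1, e2, hνa, hνb]
    push_cast
    rw [← hst]
    ring
  have f2 : ‖P.σ3 ω‖ ^ 2 = νa - νb * s ^ 2 := by
    rw [e3', hνa, hνb]
    push_cast
    rw [← hst]
    ring
  rw [← e1] at h1
  rw [← e2] at h2
  have h3' : ‖P.σ3 ω‖ ^ 2 ≤ 2 * m ^ 6 := by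
    rw [e3', ← sq_abs, ← sq_abs (s * _)]
    have := pow_le_pow_left₀ (abs_nonneg _) h3 2
    have := pow_le_pow_left₀ (abs_nonneg _) h4 2
    calc _ ≤ ((m : ℝ) ^ 3) ^ 2 + ((m : ℝ) ^ 3) ^ 2 := by linarith
      _ = _ := by ring
  have h12 : |P.σ1 ω * P.σ2 ω| ≤ 128 * (m : ℝ) ^ 6 := by
    rw [abs_mul]
    calc _ ≤ 16 / (Z : ℝ) * (8 * m ^ 6 * Z) := by gcongr
      _ = _ := by field_simp; norm_num
  have h30 : 0 ≤ ‖P.σ3 ω‖ ^ 2 := by positivity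
  have hνabs : ((νa ^ 2 - t * νb ^ 2 : ℤ) : ℝ) = (P.σ1 ω * P.σ2 ω) * ‖P.σ3 ω‖ ^ 2 := by
    rw [f1, f2]; push_cast; rw [← hst]; ring
  have hnat : ((νa ^ 2 - t * νb ^ 2 : ℤ).natAbs : ℝ) = |P.σ1 ω| * |P.σ2 ω| * ‖P.σ3 ω‖ ^ 2 := by
    rw [Nat.cast_natAbs, Int.cast_abs, hνabs, abs_mul, abs_mul, abs_of_nonneg h30]
  have habs := abs_le.1 h12
  have hb : |(νb : ℝ) * s ^ 2| ≤ 65 * (m : ℝ) ^ 6 := by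
    rw [abs_le]; constructor <;> linarith
  refine ⟨ω, νa, νb, hωne, h1, h2, h3', f1, f2, ?_, ?_, ?_, ?_, ?_⟩
  · have : |(νa : ℝ)| ≤ 65 * (m : ℝ) ^ 6 := by
      rw [abs_le]; constructor <;> linarith
    exact_mod_cast this
  · have hm0 : (0 : ℝ) < m ^ 4 := by positivity
    have : |(νb : ℝ)| ≤ 1040 * (m : ℝ) ^ 2 := by
      rw [abs_mul, abs_of_nonneg (by positivity : (0 : ℝ) ≤ s ^ 2)] at hb
      have h5 : |(νb : ℝ)| * (m : ℝ) ^ 4 ≤ 1040 * (m : ℝ) ^ 2 * m ^ 4 := by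
        calc |(νb : ℝ)| * (m : ℝ) ^ 4 ≤ |(νb : ℝ)| * (16 * s ^ 2) := by gcongr
          _ = 16 * (|(νb : ℝ)| * s ^ 2) := by ring
          _ ≤ 16 * (65 * (m : ℝ) ^ 6) := by gcongr
          _ = _ := by ring
      exact le_of_mul_le_mul_right h5 hm0
    exact_mod_cast this
  · intro h0
    have := P.one_le ω hωne
    rw [← hnat, h0] at this
    norm_num at this
  · have : ((νa ^ 2 - t * νb ^ 2 : ℤ).natAbs : ℝ) ≤ 256 * (m : ℝ) ^ 12 := by
      rw [hnat, ← abs_mul]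
      calc _ ≤ 128 * (m : ℝ) ^ 6 * (2 * m ^ 6) := by gcongr
        _ = _ := by ring
    exact_mod_cast this
  · have hd : ω ∣ ((νa ^ 2 - t * νb ^ 2 : ℤ) : A) := by
      refine ⟨(p0 - p1 * θ + p2 * θ ^ 2 - p3 * θ ^ 3) * (νa - νb * θ ^ 2), ?_⟩
      have hrel : ω * (p0 - p1 * θ + p2 * θ ^ 2 - p3 * θ ^ 3) = νa + νb * θ ^ 2 := by
        rw [hω, hνa, hνb]
        push_cast
        linear_combination ((p2 : A) ^ 2 - 2 * p1 * p3 - p3 ^ 2 * θ ^ 2) * hθ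
      rw [← mul_assoc, hrel]
      push_cast
      linear_combination (νb : A) ^ 2 * hθ
    generalize νa ^ 2 - t * νb ^ 2 = k at hd
    rcases Int.natAbs_eq k with h | h
    · rw [h] at hd
      simpa using hd
    · rw [h] at hd
      simpa using hd

/-- Bounded powers of a unimodular number come arbitrarily close to `1` (Dirichlet). -/
lemma exists_pow_near_one : ∃ N : ℕ, 1 ≤ N ∧ ∀ w : ℂ, ‖w‖ = 1 →
    ∃ q : ℕ, 1 ≤ q ∧ q ≤ N ∧ ‖w ^ (2 * q) - 1‖ ≤ (1 / 2) ^ 1000 := by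
  obtain ⟨ε, hε, hε0⟩ : ∃ ε : ℝ, ε = (1 / 2) ^ 1000 ∧ 0 < ε := ⟨_, rfl, by positivity⟩
  rw [← hε]
  obtain ⟨N, hN⟩ := exists_nat_ge (max 1 (2 * Real.pi / ε))
  have hN1 : 1 ≤ N := by exact_mod_cast (le_max_left _ _).trans hN
  have hN2 : 2 * Real.pi / ε ≤ N := (le_max_right _ _).trans hN
  refine ⟨N, hN1, fun w hw => ?_⟩
  obtain ⟨q, hq0, hqN, hq⟩ := Real.exists_nat_abs_mul_sub_round_le (w.arg / Real.pi) hN1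
  refine ⟨q, hq0, hqN, ?_⟩
  have hpi := Real.pi_pos
  set k := round ((q : ℝ) * (w.arg / Real.pi))
  have hwe : w = Complex.exp (w.arg * Complex.I) := by
    have := Complex.norm_mul_exp_arg_mul_I w
    rw [hw] at this
    simpa using this.symm
  have hpow : w ^ (2 * q) = Complex.exp (Complex.I *
      ((2 * Real.pi * (q * (w.arg / Real.pi) - k) : ℝ) : ℂ)) := by
    conv_lhs => rw [hwe, ← Complex.exp_nat_mul]
    rw [Complex.exp_eq_exp_iff_exists_int]
    refine ⟨k, ?_⟩
    have : (Real.pi : ℂ) ≠ 0 := by exact_mod_cast hpi.ne'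
    push_cast
    field_simp
    ring
  rw [hpow]
  refine (Real.norm_exp_I_mul_ofReal_sub_one_le).trans ?_
  rw [Real.norm_eq_abs, abs_mul, abs_of_pos (by positivity)]
  calc 2 * Real.pi * |(q : ℝ) * (w.arg / Real.pi) - k| ≤ 2 * Real.pi * (1 / (N + 1)) := by gcongr
    _ ≤ ε := by
      rw [div_le_iff₀ hε0] at hN2
      rw [mul_one_div, div_le_iff₀ (by positivity)]
      nlinarith

/-- Existence of a unit of bounded size with relative norm `1`. Among the elements `ω i` belonging to
`Z = Z0 ^ i`, for `i = 0, 1, 2, …`, two have the same relative norm and generate the same ideal,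
because only `≪ m ^ 8` relative norms and, for each of them, `≪ m ^ 4` ideals are available. Their
quotient is the unit, and the choice of `Z0` makes it large at the first real place. -/
theorem exists_unit_of_count {A : Type*} [CommRing A] [IsDomain A] (P : NormData A) (θ : A)
    (s : ℝ) (t m K : ℕ) (hs : 1 ≤ s) (hst : s ^ 4 = t) (hθ : θ ^ 4 = (t : A)) (h1θ : P.σ1 θ = s)
    (h2θ : P.σ2 θ = -s) (h3θ : P.σ3 θ = s * Complex.I) (hm : 2 ≤ m)
    (hsm : s ≤ (m : ℝ) ^ 2) (hms : (m : ℝ) ^ 4 ≤ 16 * s ^ 2) (hK : 1 ≤ K)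
    (hdiv : ∀ n : ℕ, n ≠ 0 → ∃ D : ℕ, D ^ 3 ≤ K * n ∧ DivisorsLE (Ideal.span {(n : A)}) D)
    (Z0 : ℕ) (hZ0 : 256 * (m : ℝ) ^ 12 * Real.exp 2000 ≤ Z0) :
    ∃ u : A, P.σ1 u * P.σ2 u = 1 ∧ ‖P.σ3 u‖ = 1 ∧ 2000 ≤ Real.log |P.σ1 u| ∧
      Real.log |P.σ1 u| ≤ (131 * 2081 * 256 * K * m ^ 12 + 1) * Real.log Z0 := by
  classical
  have hm0 : (2 : ℝ) ≤ m := by exact_mod_cast hm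
  have hm1 : (0 : ℝ) < (m : ℝ) ^ 12 := by positivity
  have hexp : (1 : ℝ) ≤ Real.exp 2000 := Real.one_le_exp (by norm_num)
  have hm12 : (1 : ℝ) ≤ (m : ℝ) ^ 12 := one_le_pow₀ (by linarith)
  have hZ0m : 256 * (m : ℝ) ^ 12 ≤ Z0 := by nlinarith
  have hZ01 : (1 : ℝ) ≤ Z0 := by linarith
  have hZ0pos : 1 ≤ Z0 := by exact_mod_cast hZ01
  choose ω νa νb hne h1 h2 h3 h12 h33 ha hb hn0 hnle hdvd using fun i : ℕ =>
    exists_small_omega P θ s t m (Z0 ^ i) hs hst hθ h1θ h2θ h3θ hm (Nat.one_le_pow _ _ hZ0pos)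
      hsm hms
  set R := 256 * K * m ^ 4 with hR
  have hS : ∀ n : ℕ, ∃ S : Finset (Ideal A), S.card ≤ R ∧
      (n ≠ 0 → n ≤ 256 * m ^ 12 → ∀ J, J ∣ Ideal.span {(n : A)} → J ∈ S) := by
    intro n
    by_cases hn : n ≠ 0 ∧ n ≤ 256 * m ^ 12
    · obtain ⟨D, hD, S, hSD, hS⟩ := hdiv n hn.1
      refine ⟨S, hSD.trans ?_, fun _ _ => hS⟩
      have : D ^ 3 ≤ R ^ 3 := by
        calc D ^ 3 ≤ K * n := hD
          _ ≤ K * (256 * m ^ 12) := Nat.mul_le_mul_left _ hn.2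
          _ = (256 * K) * m ^ 12 := by ring
          _ ≤ (256 * K) ^ 3 * m ^ 12 := Nat.mul_le_mul_right _ (Nat.le_self_pow (by norm_num) _)
          _ = R ^ 3 := by rw [hR]; ring
      exact le_of_pow_le_pow_left₀ (by norm_num) (Nat.zero_le _) this
    · refine ⟨∅, by simp, fun h h' => absurd ⟨h, h'⟩ hn⟩
  choose S hScard hS using hS
  set B := Icc (-(65 * (m : ℤ) ^ 6)) (65 * (m : ℤ) ^ 6) ×ˢ
    Icc (-(1040 * (m : ℤ) ^ 2)) (1040 * (m : ℤ) ^ 2) with hB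
  have hBcard : B.card ≤ (131 * m ^ 6) * (2081 * m ^ 2) := by
    have h6 : 1 ≤ m ^ 6 := Nat.one_le_pow _ _ (by omega)
    have h2 : 1 ≤ m ^ 2 := Nat.one_le_pow _ _ (by omega)
    rw [hB, card_product, Int.card_Icc, Int.card_Icc]
    refine Nat.mul_le_mul ?_ ?_
    · zify at h6 ⊢
      omega
    · zify at h2 ⊢
      omega
  set T : Finset ((ℤ × ℤ) × Ideal A) :=
    B.biUnion fun ν => (S (ν.1 ^ 2 - t * ν.2 ^ 2).natAbs).image fun J => (ν, J) with hT
  set W := 131 * 2081 * 256 * K * m ^ 12 with hW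
  have hTcard : T.card ≤ W := by
    calc T.card ≤ B.card * R := card_biUnion_le_card_mul _ _ _ fun ν _ =>
          card_image_le.trans (hScard _)
      _ ≤ (131 * m ^ 6) * (2081 * m ^ 2) * R := Nat.mul_le_mul_right _ hBcard
      _ = W := by rw [hR, hW]; ring
  have hmaps : ∀ i ∈ range (W + 1), (((νa i, νb i), Ideal.span {ω i}) : (ℤ × ℤ) × Ideal A) ∈ T := by
    intro i _
    rw [hT, mem_biUnion]
    refine ⟨(νa i, νb i), ?_, mem_image_of_mem _ (hS _ (hn0 i) (hnle i) _ ?_)⟩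
    · rw [hB, mem_product, mem_Icc, mem_Icc]
      exact ⟨abs_le.1 (ha i), abs_le.1 (hb i)⟩
    · obtain ⟨c, hc⟩ := hdvd i
      exact ⟨Ideal.span {c}, by rw [Ideal.span_singleton_mul_span_singleton, ← hc]⟩
  have hcoll : ∃ i j, i < j ∧ j ≤ W ∧ νa i = νa j ∧ νb i = νb j ∧
      Ideal.span {ω i} = Ideal.span {ω j} := by
    obtain ⟨i, hi, j, hj, hij, h⟩ := exists_ne_map_eq_of_card_lt_of_maps_to
      (by rw [card_range]; omega) hmaps
    simp only [Prod.mk.injEq] at h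
    rw [mem_range] at hi hj
    rcases lt_or_gt_of_ne hij with hlt | hlt
    · exact ⟨i, j, hlt, by omega, h.1.1, h.1.2, h.2⟩
    · exact ⟨j, i, hlt, by omega, h.1.1.symm, h.1.2.symm, h.2.symm⟩
  obtain ⟨i, j, hij, hjW, hνa, hνb, hspan⟩ := hcoll
  obtain ⟨v, hv⟩ := Ideal.span_singleton_eq_span_singleton.1 hspan.symm
  -- lower bounds for `|σ₁|` follow from the norm being at least `1`
  have hlow : ∀ k, 1 ≤ |P.σ1 (ω k)| * (16 * m ^ 12 * Z0 ^ k) := by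
    intro k
    calc (1 : ℝ) ≤ |P.σ1 (ω k)| * |P.σ2 (ω k)| * ‖P.σ3 (ω k)‖ ^ 2 := P.one_le _ (hne k)
      _ ≤ |P.σ1 (ω k)| * (8 * m ^ 6 * (Z0 ^ k : ℕ)) * (2 * m ^ 6) := by
        gcongr
        · exact h2 k
        · exact h3 k
      _ = _ := by push_cast; ring
  have hpos1 : ∀ k, 0 < |P.σ1 (ω k)| := by
    intro k
    have := hlow k
    by_contra h
    have h0 : |P.σ1 (ω k)| = 0 := le_antisymm (not_lt.1 h) (abs_nonneg _)
    rw [h0, zero_mul] at this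
    linarith
  have hprodpos : ∀ k, P.σ1 (ω k) * P.σ2 (ω k) ≠ 0 ∧ ‖P.σ3 (ω k)‖ ≠ 0 := by
    intro k
    have := P.one_le _ (hne k)
    constructor
    · intro h
      rw [← abs_mul, h] at this
      norm_num at this
    · intro h
      rw [h] at this
      norm_num at this
  have hu1 : P.σ1 (ω j) * P.σ1 v = P.σ1 (ω i) := by rw [← map_mul, hv]
  have hu2 : P.σ2 (ω j) * P.σ2 v = P.σ2 (ω i) := by rw [← map_mul, hv]
  have hu3 : P.σ3 (ω j) * P.σ3 v = P.σ3 (ω i) := by rw [← map_mul, hv]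
  have hup : ∀ k, (16 : ℝ) / Z0 ^ k ≥ |P.σ1 (ω k)| := fun k => by
    have := h1 k
    push_cast at this
    exact this
  have hvpos : 0 < |P.σ1 v| := by
    have := hpos1 i
    rw [← hu1, abs_mul] at this
    exact pos_of_mul_pos_right this (abs_nonneg _)
  refine ⟨v, ?_, ?_, ?_, ?_⟩
  · have h := h12 i
    rw [hνa, hνb, ← h12 j, ← hu1, ← hu2] at h
    have h' : (P.σ1 (ω j) * P.σ2 (ω j)) * (P.σ1 v * P.σ2 v) =
      (P.σ1 (ω j) * P.σ2 (ω j)) * 1 := by linear_combination h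
    exact mul_left_cancel₀ (hprodpos j).1 h'
  · have h := h33 i
    rw [hνa, hνb, ← h33 j, ← hu3, norm_mul, mul_pow] at h
    have h' : ‖P.σ3 (v : A)‖ ^ 2 = 1 := by
      apply mul_left_cancel₀ (pow_ne_zero 2 (hprodpos j).2)
      rw [h, mul_one]
    nlinarith [norm_nonneg (P.σ3 (v : A))]
  · rw [Real.le_log_iff_exp_le hvpos]
    have hi := hlow i
    have hj := hup j
    rw [← hu1, abs_mul] at hi
    have hZj : (0 : ℝ) < (Z0 : ℝ) ^ j := by positivity
    have hZi : (0 : ℝ) < (Z0 : ℝ) ^ i := by positivity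
    have hZij : (Z0 : ℝ) ^ j ≥ Z0 ^ i * Z0 := by
      rw [← pow_succ]; exact pow_le_pow_right₀ hZ01 hij
    have h5 : (1 : ℝ) ≤ 16 / Z0 ^ j * |P.σ1 v| * (16 * m ^ 12 * Z0 ^ i) := by
      refine hi.trans ?_
      gcongr
    have h6 : (Z0 : ℝ) ^ j ≤ |P.σ1 v| * (256 * m ^ 12) * Z0 ^ i := by
      have e : 16 / (Z0 : ℝ) ^ j * |P.σ1 v| * (16 * m ^ 12 * Z0 ^ i) =
        (|P.σ1 v| * (256 * m ^ 12) * Z0 ^ i) / Z0 ^ j := by ring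
      rw [e, le_div_iff₀ hZj] at h5
      linarith
    have h7 : (Z0 : ℝ) ≤ |P.σ1 v| * (256 * m ^ 12) := by
      have : (Z0 : ℝ) * Z0 ^ i ≤ |P.σ1 v| * (256 * m ^ 12) * Z0 ^ i := by linarith
      exact le_of_mul_le_mul_right this hZi
    have h8 : Real.exp 2000 * (256 * (m : ℝ) ^ 12) ≤ |P.σ1 v| * (256 * m ^ 12) := by linarith
    exact le_of_mul_le_mul_right h8 (by positivity)
  · have hlogZ : 0 ≤ Real.log Z0 := Real.log_nonneg hZ01
    have hZj : (0 : ℝ) < (Z0 : ℝ) ^ j := by positivity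
    have hZi1 : (1 : ℝ) ≤ (Z0 : ℝ) ^ i := one_le_pow₀ hZ01
    have hjl := hlow j
    have h5 : |P.σ1 v| ≤ (Z0 : ℝ) ^ (j + 1) := by
      calc |P.σ1 v| ≤ |P.σ1 v| * (|P.σ1 (ω j)| * (16 * m ^ 12 * Z0 ^ j)) :=
            le_mul_of_one_le_right (abs_nonneg _) hjl
        _ = |P.σ1 (ω i)| * (16 * m ^ 12 * Z0 ^ j) := by rw [← hu1, abs_mul]; ring
        _ ≤ 16 * (16 * m ^ 12 * Z0 ^ j) := by
          gcongr
          exact (hup i).le.trans (div_le_self (by norm_num) hZi1)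
        _ = 256 * m ^ 12 * Z0 ^ j := by ring
        _ ≤ Z0 * Z0 ^ j := by gcongr
        _ = _ := by ring
    have h6 := Real.log_le_log hvpos h5
    rw [Real.log_pow] at h6
    refine h6.trans ?_
    gcongr
    have : (j : ℝ) ≤ W := by exact_mod_cast hjW
    rw [hW] at this
    push_cast at this ⊢
    linarith

/-! ### The Thue equation -/

lemma log_ceil_le (m : ℕ) (hm : 2 ≤ m) (r : ℝ) (hr : 1 ≤ r) (hmr : (m : ℝ) ≤ 2 * r) :
    Real.log (⌈256 * (m : ℝ) ^ 12 * Real.exp 2000⌉₊ : ℕ) ≤ 10000 * (1 + Real.log (r ^ 8)) := by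
  have hm0 : (2 : ℝ) ≤ m := by exact_mod_cast hm
  have hexp : (1 : ℝ) ≤ Real.exp 2000 := Real.one_le_exp (by norm_num)
  have hm12 : (1 : ℝ) ≤ (m : ℝ) ^ 12 := one_le_pow₀ (by linarith)
  have h0 : (1 : ℝ) ≤ (m : ℝ) ^ 12 * Real.exp 2000 := by nlinarith
  have h1 : ((⌈256 * (m : ℝ) ^ 12 * Real.exp 2000⌉₊ : ℕ) : ℝ) ≤
      512 * (m : ℝ) ^ 12 * Real.exp 2000 := by
    have := (Nat.ceil_lt_add_one (a := 256 * (m : ℝ) ^ 12 * Real.exp 2000) (by positivity)).le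
    linarith
  have h2 : (0 : ℝ) < (⌈256 * (m : ℝ) ^ 12 * Real.exp 2000⌉₊ : ℕ) := by
    have := Nat.le_ceil (256 * (m : ℝ) ^ 12 * Real.exp 2000)
    linarith
  refine (Real.log_le_log h2 h1).trans ?_
  rw [Real.log_mul (by positivity) (by positivity), Real.log_mul (by norm_num) (by positivity),
    Real.log_exp, Real.log_pow, Real.log_pow]
  have h3 : Real.log m ≤ Real.log 2 + Real.log r := by
    rw [← Real.log_mul (by norm_num) (by positivity)]
    exact Real.log_le_log (by linarith) hmr
  have h4 : Real.log 512 ≤ 512 := (Real.log_le_sub_one_of_pos (by norm_num)).trans (by norm_num)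
  have h5 : Real.log 2 ≤ 1 := (Real.log_le_sub_one_of_pos (by norm_num)).trans (by norm_num)
  have h6 : 0 ≤ Real.log r := Real.log_nonneg hr
  push_cast
  linarith

/-- Effective bound for `x ^ 4 - t * y ^ 4 = N` with `t` not a square: the unit from
`exists_unit_of_count` has logarithm `≪ t ^ (3/2) * log t`, a bounded even power of it satisfies the
hypotheses of `thue_bound`, and the bound there is quadratic in this logarithm. -/
theorem thue_quartic : ∃ C : ℝ, 0 < C ∧ ∀ t : ℕ, 2 ≤ t → ¬ IsSquare t → ∀ x y : ℕ, 0 < y →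
    1 ≤ |(x : ℝ) ^ 4 - t * y ^ 4| →
    Real.log y ≤ C * t ^ 3 * (1 + Real.log t) ^ 2 *
      (1 + Real.log t + Real.log |(x : ℝ) ^ 4 - t * y ^ 4|) := by
  obtain ⟨K, hK1, hK⟩ := exists_divisor_bound
  obtain ⟨N, hN1, hN⟩ := exists_pow_near_one
  obtain ⟨K2, hK2⟩ : ∃ K2 : ℝ, K2 = 131 * 2081 * 256 * K * 4096 + 1 := ⟨_, rfl⟩
  have hK2pos : 0 < K2 := by rw [hK2]; positivity
  have hN0 : (1 : ℝ) ≤ N := by exact_mod_cast hN1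
  set C1 := 2 * N * K2 * 10000 with hC1
  have hC1pos : 0 < C1 := by positivity
  refine ⟨200 * C1 ^ 2, by positivity, fun t ht hns x y hy hNxy => ?_⟩
  have ht0 : (2 : ℝ) ≤ t := by exact_mod_cast ht
  set r : ℝ := (t : ℝ) ^ ((1 : ℝ) / 8) with hr
  have hr1 : 1 < r := Real.one_lt_rpow (by linarith) (by norm_num)
  have hr8 : r ^ 8 = t := by
    rw [hr, ← Real.rpow_natCast, ← Real.rpow_mul (by linarith)]
    norm_num
  set s := r ^ 2 with hs
  have hs1 : 1 ≤ s := one_le_pow₀ hr1.le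
  have hst : s ^ 4 = t := by rw [hs, ← hr8]; ring
  set m := ⌈r⌉₊ with hm
  have hrm : r ≤ m := Nat.le_ceil r
  have hm2 : 2 ≤ m := by
    have : (1 : ℝ) < m := hr1.trans_le hrm
    have : 1 < m := by exact_mod_cast this
    omega
  have hmr : (m : ℝ) ≤ 2 * r := by
    have := (Nat.ceil_lt_add_one (a := r) (by linarith)).le
    linarith
  obtain ⟨A, _, _, P, θ, hθ, h1θ, h2θ, h3θ, hdiv⟩ := exists_quartic_ring t hns s (by linarith) hst
  have hlogt : 0 ≤ Real.log t := Real.log_nonneg (by linarith)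
  obtain ⟨u, hu12, hu3, hlow, hup⟩ := exists_unit_of_count P θ s t m K hs1 hst hθ h1θ h2θ h3θ hm2
    (by rw [hs]; gcongr)
    (by
      calc (m : ℝ) ^ 4 ≤ (2 * r) ^ 4 := by gcongr
        _ = 16 * s ^ 2 := by rw [hs]; ring) hK1
    (fun n hn => ⟨_, hK n hn, hdiv n hn⟩) _ (Nat.le_ceil _)
  have hZ := log_ceil_le m hm2 r hr1.le hmr
  rw [hr8] at hZ
  set ℓ0 := Real.log |P.σ1 u| with hℓ0
  have hℓ0up : ℓ0 ≤ K2 * r ^ 12 * (10000 * (1 + Real.log t)) := by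
    refine hup.trans ?_
    have hr12 : 1 ≤ r ^ 12 := one_le_pow₀ hr1.le
    have e : (131 * 2081 * 256 * K * (m : ℝ) ^ 12 + 1) ≤ K2 * r ^ 12 := by
      calc (131 * 2081 * 256 * K * (m : ℝ) ^ 12 + 1)
          ≤ 131 * 2081 * 256 * K * (2 * r) ^ 12 + r ^ 12 := by gcongr
        _ = K2 * r ^ 12 := by rw [hK2]; ring
    gcongr
  obtain ⟨q, hq1, hqN, hq⟩ := hN _ hu3
  have hq0 : (1 : ℝ) ≤ q := by exact_mod_cast hq1
  have hqN0 : (q : ℝ) ≤ N := by exact_mod_cast hqN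
  set ℓ := ((2 * q : ℕ) : ℝ) * ℓ0 with hℓ
  have hℓ2000 : 2000 ≤ ℓ := by
    rw [hℓ]; push_cast; nlinarith
  have hu1ne : P.σ1 u ≠ 0 := by
    intro h
    rw [h] at hu12
    norm_num at hu12
  have hσ1 : P.σ1 (u ^ (2 * q)) = Real.exp ℓ := by
    rw [map_pow, hℓ, Real.exp_nat_mul, hℓ0, Real.exp_log (abs_pos.2 hu1ne), pow_mul, pow_mul,
      sq_abs]
  have hσ2 : P.σ2 (u ^ (2 * q)) = (Real.exp ℓ)⁻¹ := by
    rw [← hσ1, map_pow, map_pow, ← inv_pow]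
    congr 1
    exact (eq_inv_of_mul_eq_one_right hu12)
  have hσ3 : ‖P.σ3 (u ^ (2 * q))‖ = 1 := by rw [map_pow, norm_pow, hu3, one_pow]
  have hδ : ‖P.σ3 (u ^ (2 * q)) - 1‖ ≤ (1 / 2) ^ 1000 := by rw [map_pow]; exact hq
  have hmain := thue_bound P θ (u ^ (2 * q)) s t ℓ (by linarith) ht0 hst h1θ h2θ h3θ hℓ2000 hσ1
    hσ2 hσ3 hδ x y hy hNxy
  have hlogN : 0 ≤ Real.log |(x : ℝ) ^ 4 - t * y ^ 4| := Real.log_nonneg hNxy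
  set LN := Real.log |(x : ℝ) ^ 4 - t * y ^ 4|
  have hℓup : ℓ ≤ C1 * r ^ 12 * (1 + Real.log t) := by
    calc ℓ = 2 * q * ℓ0 := by rw [hℓ]; push_cast; ring
      _ ≤ 2 * N * (K2 * r ^ 12 * (10000 * (1 + Real.log t))) := by gcongr
      _ = _ := by rw [hC1]; ring
  set X := 1 + Real.log t + LN with hX
  have hX1 : 1 ≤ X := by linarith
  calc Real.log y ≤ 100 * ℓ * (ℓ + X) := by rw [hX]; linarith
    _ ≤ 100 * ℓ * (2 * ℓ * X) := by
      gcongr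
      nlinarith
    _ = 200 * X * ℓ ^ 2 := by ring
    _ ≤ 200 * X * (C1 * r ^ 12 * (1 + Real.log t)) ^ 2 := by gcongr
    _ = 200 * C1 ^ 2 * (r ^ 8) ^ 3 * (1 + Real.log t) ^ 2 * X := by ring
    _ = _ := by rw [hr8]

/-- For square `t` the form factors as a difference of squares. -/
lemma thue_square (t x y : ℕ) (ht : 2 ≤ t) (hsq : IsSquare t) (hy : 0 < y)
    (hN : 1 ≤ |(x : ℝ) ^ 4 - t * y ^ 4|) :
    Real.log y ≤ Real.log |(x : ℝ) ^ 4 - t * y ^ 4| := by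
  obtain ⟨k, rfl⟩ := hsq
  have hk : (1 : ℝ) ≤ k := by
    have : 1 ≤ k := by
      rcases Nat.eq_zero_or_pos k with h | h
      · subst h; omega
      · exact h
    exact_mod_cast this
  have hy1 : (1 : ℝ) ≤ y := by exact_mod_cast hy
  refine Real.log_le_log (by linarith) ?_
  have e : (x : ℝ) ^ 4 - ((k * k : ℕ) : ℝ) * y ^ 4 =
      (((x : ℤ) ^ 2 - k * y ^ 2 : ℤ) : ℝ) * (x ^ 2 + k * y ^ 2) := by push_cast; ring
  rw [e, abs_mul] at hN ⊢
  have hne : ((x : ℤ) ^ 2 - k * y ^ 2 : ℤ) ≠ 0 := by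
    intro h
    rw [h] at hN
    norm_num at hN
  have h1 : (1 : ℝ) ≤ |(((x : ℤ) ^ 2 - k * y ^ 2 : ℤ) : ℝ)| := by
    exact_mod_cast Int.one_le_abs hne
  have h2 : (y : ℝ) ≤ |(x : ℝ) ^ 2 + k * y ^ 2| := by
    rw [abs_of_nonneg (by positivity)]
    have : 0 ≤ (x : ℝ) ^ 2 := by positivity
    nlinarith
  calc (y : ℝ) ≤ |(x : ℝ) ^ 2 + k * y ^ 2| := h2
    _ ≤ _ := le_mul_of_one_le_left (abs_nonneg _) h1

theorem thue_all : ∃ C : ℝ, 0 < C ∧ ∀ t : ℕ, 2 ≤ t → ∀ x y : ℕ, 0 < y →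
    1 ≤ |(x : ℝ) ^ 4 - t * y ^ 4| →
    Real.log y ≤ C * t ^ 3 * (1 + Real.log t) ^ 2 *
      (1 + Real.log t + Real.log |(x : ℝ) ^ 4 - t * y ^ 4|) := by
  obtain ⟨C, hC, h⟩ := thue_quartic
  refine ⟨C + 1, by linarith, fun t ht x y hy hN => ?_⟩
  have ht0 : (2 : ℝ) ≤ t := by exact_mod_cast ht
  have hlogt : 0 ≤ Real.log t := Real.log_nonneg (by linarith)
  have hlogN := Real.log_nonneg hN
  by_cases hsq : IsSquare t
  · refine (thue_square t x y ht hsq hy hN).trans ?_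
    have h3 : (1 : ℝ) ≤ (t : ℝ) ^ 3 := one_le_pow₀ (by linarith)
    have h4 : (1 : ℝ) ≤ (1 + Real.log t) ^ 2 := one_le_pow₀ (by linarith)
    have h5 : 1 ≤ (C + 1) * (t : ℝ) ^ 3 * (1 + Real.log t) ^ 2 :=
      one_le_mul_of_one_le_of_one_le
        (one_le_mul_of_one_le_of_one_le (by linarith) h3) h4
    calc Real.log |(x : ℝ) ^ 4 - t * y ^ 4|
        ≤ 1 + Real.log t + Real.log |(x : ℝ) ^ 4 - t * y ^ 4| := by linarith
      _ ≤ _ := le_mul_of_one_le_left (by linarith) h5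
  · refine (h t ht hsq x y hy hN).trans ?_
    gcongr
    linarith

/-! ### From the divisibility to the Thue equation -/

set_option maxHeartbeats 1000000 in
/-- The divisibility relation yields a solution of a quartic Thue equation with small right-hand
side. Here `t` is the quotient, `y / x` is `a / b` in lowest terms and `z = gcd(a, b)`. The relation
gives `z² N = l (t y² - x²)` and `w N = t l (x² - y²)` for `N = x⁴ - t y⁴` and an integer `w`; since
`N` is coprime to `y`, it divides `t l (t - 1)`. -/
theorem reduction (l a b : ℤ) (hl : l ≠ 0) (ha : 3 ≤ a) (hab : a < b) (hla : 2 * |l| ≤ a ^ 2)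
    (hdvd : a ^ 2 * (a ^ 2 + l) ∣ b ^ 2 * (b ^ 2 + l)) :
    ∃ t x y : ℕ, 2 ≤ t ∧ 0 < y ∧ (x : ℤ) ^ 4 - t * y ^ 4 ≠ 0 ∧
      |(x : ℤ) ^ 4 - t * y ^ 4| ≤ |l| * t ^ 2 ∧ a ^ 2 ≤ |l| * (1 + |l|) * t * y ^ 4 ∧
      t * a ^ 4 ≤ 4 * b ^ 4 := by
  obtain ⟨t, ht⟩ := hdvd
  have hl1 : 1 ≤ |l| := Int.one_le_abs hl
  have hlle := abs_le.1 (le_refl |l|)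
  have hb2 : a ^ 2 < b ^ 2 := by nlinarith
  have hapos : 0 < a ^ 2 + l := by linarith
  have hP : 0 < a ^ 2 * (a ^ 2 + l) := by positivity
  have hlt : a ^ 2 * (a ^ 2 + l) < b ^ 2 * (b ^ 2 + l) := by nlinarith
  have ht2 : 2 ≤ t := by
    by_contra h
    have : t ≤ 1 := by omega
    nlinarith
  -- pass to the coprime parts `y = a / z`, `x = b / z`
  set z : ℤ := (Int.gcd a b : ℤ) with hz
  have hz0 : 0 < z := by
    have : 0 < Int.gcd a b := Int.gcd_pos_of_ne_zero_left b (by omega)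
    rw [hz]
    exact_mod_cast this
  obtain ⟨y, hy⟩ : z ∣ a := Int.gcd_dvd_left ..
  obtain ⟨x, hx⟩ : z ∣ b := Int.gcd_dvd_right ..
  have hcop : IsCoprime x y := by
    rw [Int.isCoprime_iff_gcd_eq_one]
    have h1 : Int.gcd a b = z.natAbs * Int.gcd y x := by
      conv_lhs => rw [hy, hx]
      exact Int.gcd_mul_left ..
    have h2 : z.natAbs = Int.gcd a b := by rw [hz]; simp
    rw [h2] at h1
    have h3 : 0 < Int.gcd a b := Int.gcd_pos_of_ne_zero_left b (by omega)
    rw [Int.gcd_comm]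
    exact (Nat.eq_of_mul_eq_mul_left h3 (by rw [mul_one]; exact h1)).symm
  have hy0 : 0 < y := pos_of_mul_pos_right (by rw [← hy]; omega) hz0.le
  have hx0 : 0 < x := pos_of_mul_pos_right (by rw [← hx]; omega) hz0.le
  have hyx : y < x := by
    rw [hy, hx] at hab
    exact lt_of_mul_lt_mul_left hab hz0.le
  have heq : t * y ^ 2 * (y ^ 2 * z ^ 2 + l) = x ^ 2 * (x ^ 2 * z ^ 2 + l) := by
    rw [hy, hx] at ht
    have hz2 : z ^ 2 ≠ 0 := by positivity
    apply mul_left_cancel₀ hz2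
    linear_combination -ht
  obtain ⟨w, hw⟩ : y ^ 2 ∣ x ^ 2 * z ^ 2 + l := by
    have hc : IsCoprime (y ^ 2) (x ^ 2) := (hcop.symm.pow_left).pow_right
    exact hc.dvd_of_dvd_mul_left ⟨t * (y ^ 2 * z ^ 2 + l), by rw [← heq]; ring⟩
  have hw2 : x ^ 2 * w = t * (y ^ 2 * z ^ 2 + l) := by
    have hy2 : y ^ 2 ≠ 0 := by positivity
    apply mul_left_cancel₀ hy2
    linear_combination -heq - x ^ 2 * hw
  set N := x ^ 4 - t * y ^ 4 with hN
  have hzN : z ^ 2 * N = l * (t * y ^ 2 - x ^ 2) := by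
    rw [hN]; linear_combination -heq
  have hwN : w * N = t * l * (x ^ 2 - y ^ 2) := by
    rw [hN]; linear_combination x ^ 2 * hw2 - t * y ^ 2 * (-hw)
  have hN0 : N ≠ 0 := by
    intro h
    rw [h, mul_zero] at hwN
    have h1 : x ^ 2 - y ^ 2 ≠ 0 := by nlinarith
    have h2 : t * l ≠ 0 := mul_ne_zero (by omega) hl
    exact mul_ne_zero h2 h1 hwN.symm
  have hNdvd : N ∣ t * l * (t - 1) := by
    have hc : IsCoprime N (y ^ 2) := by
      have h1 : IsCoprime (x ^ 4) y := hcop.pow_left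
      have h2 : IsCoprime (x ^ 4 + y * (-(t * y ^ 3))) y := h1.add_mul_left_left _
      have h3 : x ^ 4 + y * (-(t * y ^ 3)) = N := by rw [hN]; ring
      rw [h3] at h2
      exact h2.pow_right
    refine hc.dvd_of_dvd_mul_right ⟨t * z ^ 2 + w, ?_⟩
    linear_combination -t * hzN - hwN
  have hNle : |N| ≤ |l| * t ^ 2 := by
    have hne : t * l * (t - 1) ≠ 0 := mul_ne_zero (mul_ne_zero (by omega) hl) (by omega)
    have h1 : |N| ≤ |t * l * (t - 1)| :=
      Int.le_of_dvd (abs_pos.2 hne) ((abs_dvd_abs _ _).2 hNdvd)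
    rw [abs_mul, abs_mul, abs_of_pos (by omega : 0 < t), abs_of_pos (by omega : 0 < t - 1)] at h1
    nlinarith
  have hzbound : a ^ 2 ≤ |l| * (1 + |l|) * t * y ^ 4 := by
    have hN1 : 1 ≤ |N| := Int.one_le_abs hN0
    have hy4 : 1 ≤ y ^ 4 := one_le_pow₀ hy0
    have hx4 : (x ^ 2) ^ 2 ≤ (t * y ^ 2 * (1 + |l|)) ^ 2 := by
      have h1 : x ^ 4 ≤ t * y ^ 4 + |l| * t ^ 2 := by
        have := (abs_le.1 hNle).2
        rw [hN] at this
        linarith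
      have h2 : t * y ^ 4 ≤ t ^ 2 * y ^ 4 := by
        have : t ≤ t ^ 2 := by nlinarith
        gcongr
      have h3 : |l| * t ^ 2 ≤ |l| * t ^ 2 * y ^ 4 := le_mul_of_one_le_right (by positivity) hy4
      have h4 : (1 + |l|) ≤ (1 + |l|) ^ 2 := by nlinarith
      calc (x ^ 2) ^ 2 = x ^ 4 := by ring
        _ ≤ t ^ 2 * y ^ 4 * (1 + |l|) := by linarith
        _ ≤ t ^ 2 * y ^ 4 * (1 + |l|) ^ 2 := by gcongr
        _ = _ := by ring
    have hty : 0 < t * y ^ 2 := by positivity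
    have hx2 : x ^ 2 ≤ t * y ^ 2 * (1 + |l|) := (sq_le_sq₀ (by positivity) (by positivity)).1 hx4
    have habs : |t * y ^ 2 - x ^ 2| ≤ t * y ^ 2 * (1 + |l|) := by
      have h1 : 0 ≤ x ^ 2 := by positivity
      have h2 : t * y ^ 2 ≤ t * y ^ 2 * (1 + |l|) := le_mul_of_one_le_right hty.le (by linarith)
      rw [abs_le]
      constructor <;> linarith
    have hz2 : z ^ 2 ≤ |l| * (t * y ^ 2 * (1 + |l|)) := by
      calc z ^ 2 ≤ z ^ 2 * |N| := le_mul_of_one_le_right (by positivity) hN1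
        _ = |z ^ 2 * N| := by rw [abs_mul, abs_of_nonneg (by positivity : (0 : ℤ) ≤ z ^ 2)]
        _ = |l| * |t * y ^ 2 - x ^ 2| := by rw [hzN, abs_mul]
        _ ≤ _ := by gcongr
    calc a ^ 2 = z ^ 2 * y ^ 2 := by rw [hy]; ring
      _ ≤ |l| * (t * y ^ 2 * (1 + |l|)) * y ^ 2 := by gcongr
      _ = _ := by ring
  have htb : t * a ^ 4 ≤ 4 * b ^ 4 := by
    have h1 : b ^ 2 + l ≤ 2 * b ^ 2 := by linarith
    have h2 : a ^ 2 ≤ 2 * (a ^ 2 + l) := by linarith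
    calc t * a ^ 4 = t * a ^ 2 * a ^ 2 := by ring
      _ ≤ t * a ^ 2 * (2 * (a ^ 2 + l)) := by gcongr
      _ = 2 * (b ^ 2 * (b ^ 2 + l)) := by rw [ht]; ring
      _ ≤ 2 * (b ^ 2 * (2 * b ^ 2)) := by gcongr
      _ = _ := by ring
  lift t to ℕ using by omega
  lift x to ℕ using hx0.le
  lift y to ℕ using hy0.le
  exact ⟨t, x, y, by exact_mod_cast ht2, by exact_mod_cast hy0, hN0, hNle, hzbound, htb⟩

/-! ### Conclusion -/

/-- The Thue bound in terms of `a` and `b`; the witness `t` is the quotient of the divisibility. -/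
theorem log_bound (l : ℤ) (hl : l ≠ 0) : ∃ C : ℝ, 0 < C ∧ ∀ a b : ℤ, 3 ≤ a → a < b →
    2 * |l| ≤ a ^ 2 → a ^ 2 * (a ^ 2 + l) ∣ b ^ 2 * (b ^ 2 + l) →
    ∃ t : ℝ, 2 ≤ t ∧ t ≤ 4 * ((b : ℝ) / a) ^ 4 ∧ Real.log a ≤ C * t ^ 3 * Real.log t ^ 3 := by
  obtain ⟨C, hC, hthue⟩ := thue_all
  have hl1 : (1 : ℝ) ≤ |(l : ℝ)| := by exact_mod_cast Int.one_le_abs hl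
  set M := Real.log (|(l : ℝ)| * (1 + |(l : ℝ)|)) with hM
  have hM0 : 0 ≤ M := Real.log_nonneg (by nlinarith)
  have hll : 0 ≤ Real.log |(l : ℝ)| := Real.log_nonneg hl1
  set D := 5 + 2 * Real.log |(l : ℝ)| with hD
  refine ⟨M + 1 + 2 * (C * 9 * D), by positivity, fun a b ha hab hla hdvd => ?_⟩
  obtain ⟨t, x, y, ht, hy, hN0, hNle, hay, htb⟩ := reduction l a b hl ha hab hla hdvd
  have ha0 : (3 : ℝ) ≤ a := by exact_mod_cast ha
  have ht0 : (2 : ℝ) ≤ t := by exact_mod_cast ht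
  have hy1 : (1 : ℝ) ≤ y := by exact_mod_cast hy
  have hN1 : 1 ≤ |(x : ℝ) ^ 4 - t * y ^ 4| := by exact_mod_cast Int.one_le_abs hN0
  have hNle' : |(x : ℝ) ^ 4 - t * y ^ 4| ≤ |(l : ℝ)| * t ^ 2 := by exact_mod_cast hNle
  have hay' : (a : ℝ) ^ 2 ≤ |(l : ℝ)| * (1 + |(l : ℝ)|) * t * y ^ 4 := by exact_mod_cast hay
  have htb' : (t : ℝ) * a ^ 4 ≤ 4 * b ^ 4 := by exact_mod_cast htb
  refine ⟨t, ht0, ?_, ?_⟩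
  · rw [div_pow, mul_div_assoc', le_div_iff₀ (by positivity)]
    exact htb'
  have hT : (1 / 2 : ℝ) ≤ Real.log t := by
    have h1 := Real.log_le_log (by norm_num) ht0
    have h2 := Real.log_two_gt_d9
    linarith
  set T := Real.log t with hTdef
  have hlogN : Real.log |(x : ℝ) ^ 4 - t * y ^ 4| ≤ Real.log |(l : ℝ)| + 2 * T := by
    have h := Real.log_le_log (by linarith) hNle'
    rw [Real.log_mul (by positivity) (by positivity), Real.log_pow] at h
    exact_mod_cast h
  have hlogy : Real.log y ≤ C * 9 * D * (t ^ 3 * T ^ 3) := by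
    have h := hthue t ht x y hy hN1
    have e1 : 1 + T ≤ 3 * T := by linarith
    have e2 : 1 + T + Real.log |(x : ℝ) ^ 4 - t * y ^ 4| ≤ D * T := by
      rw [hD]; nlinarith
    have h0 : 0 ≤ 1 + T + Real.log |(x : ℝ) ^ 4 - t * y ^ 4| := by
      have := Real.log_nonneg hN1
      linarith
    calc Real.log y ≤ C * t ^ 3 * (1 + T) ^ 2 * (1 + T + Real.log |(x : ℝ) ^ 4 - t * y ^ 4|) := h
      _ ≤ C * t ^ 3 * (3 * T) ^ 2 * (D * T) := by gcongr
      _ = _ := by ring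
  have hloga : 2 * Real.log a ≤ M + T + 4 * Real.log y := by
    have h := Real.log_le_log (by positivity) hay'
    rw [Real.log_pow, Real.log_mul (by positivity) (by positivity),
      Real.log_mul (by positivity) (by positivity), Real.log_pow, ← hM, ← hTdef] at h
    push_cast at h
    exact h
  have hV : (8 : ℝ) * (1 / 4 * T) ≤ t ^ 3 * T ^ 3 := by
    have h1 : (8 : ℝ) ≤ (t : ℝ) ^ 3 := by
      calc (8 : ℝ) = 2 ^ 3 := by norm_num
        _ ≤ _ := by gcongr
    have h2 : 1 / 4 * T ≤ T ^ 3 := by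
      have : (1 / 2 : ℝ) ^ 2 ≤ T ^ 2 := by gcongr
      nlinarith
    gcongr
  set V := (t : ℝ) ^ 3 * T ^ 3 with hVdef
  have hMV : M ≤ M * V := le_mul_of_one_le_right hM0 (by linarith)
  calc Real.log a ≤ (M + 1 + 2 * (C * 9 * D)) * V := by nlinarith
    _ = _ := by rw [hVdef]; ring

/-- The passage from `L ≤ C t ^ 3 (log t) ^ 3`, with `L = log a`, `B = b / a` and `t ≤ 4 B ^ 4`, to the
lower bound for `B`. If `B < L ^ (1/12)` then `log t ≪ log L`. -/
lemma large_case (C L B t : ℝ) (hL : Real.exp 1 ≤ L) (hB : 1 ≤ B) (ht : 2 ≤ t)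
    (htB : t ≤ 4 * B ^ 4) (hC : 1 ≤ C) (hLt : L ≤ C * t ^ 3 * Real.log t ^ 3) :
    (1728 * C)⁻¹ * (L ^ ((1 : ℝ) / 12) / Real.log L ^ ((1 : ℝ) / 2)) ≤ B := by
  have hL0 : 0 < L := (Real.exp_pos 1).trans_le hL
  have hLL : 1 ≤ Real.log L := (Real.le_log_iff_exp_le hL0).2 hL
  have hS1 : 1 ≤ Real.log L ^ ((1 : ℝ) / 2) := Real.one_le_rpow hLL (by norm_num)
  have hR12 : (L ^ ((1 : ℝ) / 12)) ^ 12 = L := by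
    rw [← Real.rpow_natCast, ← Real.rpow_mul hL0.le]; norm_num
  have hS12 : (Real.log L ^ ((1 : ℝ) / 2)) ^ 12 = Real.log L ^ 6 := by
    rw [← Real.rpow_natCast, ← Real.rpow_mul (by linarith), ← Real.rpow_natCast]; norm_num
  have hR0 : 0 ≤ L ^ ((1 : ℝ) / 12) := Real.rpow_nonneg hL0.le _
  set R := L ^ ((1 : ℝ) / 12)
  set S := Real.log L ^ ((1 : ℝ) / 2)
  have hc1 : (1728 * C)⁻¹ ≤ 1 := inv_le_one_of_one_le₀ (by linarith)
  have hc0 : 0 ≤ (1728 * C)⁻¹ := by positivity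
  rcases le_or_gt R B with h | h
  · calc (1728 * C)⁻¹ * (R / S) ≤ 1 * (R / 1) := by gcongr
      _ ≤ B := by simpa using h
  · refine le_of_pow_le_pow_left₀ (n := 12) (by norm_num) (by linarith) ?_
    have hlogB : 12 * Real.log B ≤ Real.log L := by
      have h1 : B ^ 12 ≤ L := by rw [← hR12]; gcongr
      have h2 := Real.log_le_log (by positivity) h1
      rw [Real.log_pow] at h2
      exact_mod_cast h2
    have hlogt : Real.log t ≤ 3 * Real.log L := by
      have h1 := Real.log_le_log (by linarith) htB
      rw [Real.log_mul (by norm_num) (by positivity), Real.log_pow,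
        show (4 : ℝ) = 2 ^ 2 by norm_num, Real.log_pow] at h1
      have h2 := Real.log_two_lt_d9
      push_cast at h1
      linarith
    have hlogt0 : 0 ≤ Real.log t := Real.log_nonneg (by linarith)
    have hmain : L ≤ 1728 * C * (B ^ 12 * Real.log L ^ 6) := by
      calc L ≤ C * t ^ 3 * Real.log t ^ 3 := hLt
        _ ≤ C * (4 * B ^ 4) ^ 3 * (3 * Real.log L) ^ 3 := by gcongr
        _ = 1728 * C * (B ^ 12 * Real.log L ^ 3) := by ring
        _ ≤ _ := by
          have : Real.log L ^ 3 ≤ Real.log L ^ 6 := pow_le_pow_right₀ hLL (by norm_num)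
          gcongr
    rw [mul_pow, div_pow, hR12, hS12, mul_div_assoc', div_le_iff₀ (by positivity)]
    calc (1728 * C)⁻¹ ^ 12 * L ≤ (1728 * C)⁻¹ * L := by
          gcongr
          exact pow_le_of_le_one hc0 hc1 (by norm_num)
      _ ≤ (1728 * C)⁻¹ * (1728 * C * (B ^ 12 * Real.log L ^ 6)) := by gcongr
      _ = B ^ 12 * Real.log L ^ 6 := by field_simp

/-- Theorem 3: for a non-zero integer `l`, if `a²(a²+l) ∣ b²(b²+l)` with `3 ≤ a < b`,
then `b ≥ c · a · (log a)^{1/12} / (log log a)^{1/2}` for some `c = c(l) > 0`. -/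
theorem stmt_3 (l : ℤ) (hl : l ≠ 0) :
    ∃ c : ℝ, 0 < c ∧ ∀ a b : ℤ, 3 ≤ a → a < b →
      a ^ 2 * (a ^ 2 + l) ∣ b ^ 2 * (b ^ 2 + l) →
        (b : ℝ) ≥ c * a * (Real.log a) ^ ((1 : ℝ) / 12) /
          (Real.log (Real.log a)) ^ ((1 : ℝ) / 2) := by
  obtain ⟨C, hC, hlog⟩ := log_bound l hl
  set a0 : ℤ := ⌈Real.exp (Real.exp 1)⌉ + 2 * |l| with ha0
  let F : ℤ → ℝ := fun a =>
    (Real.log a) ^ ((1 : ℝ) / 12) / (Real.log (Real.log a)) ^ ((1 : ℝ) / 2)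
  have hF0 : ∀ a : ℤ, 3 ≤ a → 0 ≤ F a := by
    intro a ha
    have ha' : (3 : ℝ) ≤ a := by exact_mod_cast ha
    have h1 : 1 ≤ Real.log a := by
      rw [Real.le_log_iff_exp_le (by linarith)]
      exact (Real.exp_one_lt_d9.le.trans (by norm_num)).trans ha'
    have h2 : 0 ≤ Real.log (Real.log a) := Real.log_nonneg h1
    positivity
  set S := ∑ a ∈ Icc 3 a0, F a with hS
  have hS0 : 0 ≤ S := sum_nonneg fun a ha => hF0 a (mem_Icc.1 ha).1
  set c1 := (1728 * (C + 1))⁻¹ with hc1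
  have hc1pos : 0 < c1 := by positivity
  refine ⟨min c1 (S + 1)⁻¹, lt_min hc1pos (by positivity), fun a b ha hab hdvd => ?_⟩
  have ha' : (3 : ℝ) ≤ a := by exact_mod_cast ha
  have hab' : (a : ℝ) < b := by exact_mod_cast hab
  have hB : 1 ≤ (b : ℝ) / a := by
    rw [le_div_iff₀ (by linarith)]; linarith
  suffices h : min c1 (S + 1)⁻¹ * F a ≤ (b : ℝ) / a by
    rw [le_div_iff₀ (by linarith)] at h
    calc _ = min c1 (S + 1)⁻¹ * F a * a := by simp only [F]; ring
      _ ≤ b := h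
  -- the finitely many `a ≤ a0` are absorbed by the constant; this includes the values of `a` with
  -- `a² < 2 |l|` or `log (log a) < 1`
  rcases le_or_gt a a0 with hle | hgt
  · have h1 : F a ≤ S :=
      single_le_sum (f := F) (fun i hi => hF0 i (mem_Icc.1 hi).1) (mem_Icc.2 ⟨ha, hle⟩)
    calc min c1 (S + 1)⁻¹ * F a ≤ (S + 1)⁻¹ * (S + 1) := by
          have := hF0 a ha
          have h2 : F a ≤ S + 1 := by linarith
          gcongr
          exact min_le_right _ _
      _ = 1 := inv_mul_cancel₀ (by positivity)
      _ ≤ _ := hB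
  · have hl0 : 0 ≤ |l| := abs_nonneg l
    have hexp0 : 0 ≤ ⌈Real.exp (Real.exp 1)⌉ := Int.ceil_nonneg (Real.exp_pos _).le
    have hla : 2 * |l| ≤ a ^ 2 := by nlinarith
    obtain ⟨t, ht2, htB, hLt⟩ := hlog a b ha hab hla hdvd
    have hae : Real.exp (Real.exp 1) ≤ a := by
      have h1 := Int.le_ceil (Real.exp (Real.exp 1))
      have h2 : (⌈Real.exp (Real.exp 1)⌉ : ℝ) ≤ a := by exact_mod_cast (by omega)
      linarith
    have hL : Real.exp 1 ≤ Real.log a := (Real.le_log_iff_exp_le (by linarith)).2 hae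
    have hlogt0 : 0 ≤ Real.log t := Real.log_nonneg (by linarith)
    have h := large_case (C + 1) (Real.log a) ((b : ℝ) / a) t hL hB ht2 htB (by linarith)
      (hLt.trans (by gcongr; linarith))
    calc min c1 (S + 1)⁻¹ * F a ≤ c1 * F a :=
          mul_le_mul_of_nonneg_right (min_le_left _ _) (hF0 a ha)
      _ ≤ _ := h
end
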